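/- Let α,β>−1, let M,N≥0 be integers, let L,γ₁,γ₂∈{0,1} with γ₁+γ₂≥1, let W≥1 be real and 1≤p≤∞, and assume W/p+γ₁+γ₂−L−N−M ≥ 2 (with the convention W/p=0 when p=∞). Then there exists a constant C such that for all θ,φ∈(0,π) with θ≠φ: (sin θ)^{γ₁}(sin φ)^{γ₂}·‖∂_φ^L ∂_θ^N ∂_t^M H_t^{α+1,β+1}(θ,φ)‖_{L^p((0,∞),t^{W−1}dt)} ≤ C/μ⁺_{α,β}(B(θ,|θ−φ|)). -/

import Mathlib

open MeasureTheory Real Set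
open scoped ENNReal

noncomputable section

/-- The classical Jacobi polynomial `P_n^{α,β}`. -/
def jacobiP (α β : ℝ) (n : ℕ) (x : ℝ) : ℝ :=
  ∑ m ∈ Finset.range (n + 1),
    (Real.Gamma (α + n + 1) * Real.Gamma (α + β + n + m + 1)) /
      ((m.factorial : ℝ) * ((n - m).factorial : ℝ) * Real.Gamma (α + β + n + 1) *
        Real.Gamma (α + m + 1)) * ((x - 1) / 2) ^ m

/-- `Ψ^{α,β}(θ) = |sin(θ/2)|^{α+1/2} (cos(θ/2))^{β+1/2}`. -/
def jPsi (α β θ : ℝ) : ℝ := |Real.sin (θ / 2)| ^ (α + 1 / 2) * Real.cos (θ / 2) ^ (β + 1 / 2)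

/-- The measure `μ_{α,β}` on `(−π, π)`, with density `(Ψ^{α,β})²` w.r.t. Lebesgue measure. -/
def jacobiMeasure (α β : ℝ) : Measure ℝ :=
  (volume.restrict (Ioo (-π) π)).withDensity fun θ => ENNReal.ofReal (jPsi α β θ ^ 2)

/-- The restriction `μ⁺_{α,β}` of `μ_{α,β}` to `(0, π)`. -/
def jacobiMeasurePlus (α β : ℝ) : Measure ℝ := (jacobiMeasure α β).restrict (Ioo 0 π)

/-- The normalizing constant `c_n^{α,β}` making `𝒫_n^{α,β}` have unit `L²(μ⁺)` norm. -/
def cJ (α β : ℝ) (n : ℕ) : ℝ :=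
  (∫ θ, jacobiP α β n (Real.cos θ) ^ 2 ∂(jacobiMeasurePlus α β)) ^ (-(1 / 2) : ℝ)

/-- The normalized trigonometric Jacobi polynomial `𝒫_n^{α,β}(θ)`. -/
def trigP (α β : ℝ) (n : ℕ) (θ : ℝ) : ℝ := cJ α β n * jacobiP α β n (Real.cos θ)

/-- The eigenvalue `λ_n^{α,β} = (n + (α+β+1)/2)²`. -/
def jLam (α β : ℝ) (n : ℕ) : ℝ := ((n : ℝ) + (α + β + 1) / 2) ^ 2

/-- The symmetrized system `Φ_n^{α,β}`. -/
def symPhi (α β : ℝ) (n : ℕ) (θ : ℝ) : ℝ :=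
  if Even n then (Real.sqrt 2)⁻¹ * trigP α β (n / 2) θ
  else (Real.sqrt 2)⁻¹ * (Real.sin θ / 2) * trigP (α + 1) (β + 1) ((n - 1) / 2) θ

/-- The Jacobi functions `φ_n^{α,β} = Ψ^{α,β} 𝒫_n^{α,β}`. -/
def phiFun (α β : ℝ) (n : ℕ) (θ : ℝ) : ℝ := jPsi α β θ * trigP α β n θ

/-- The symmetrized Jacobi function system `Θ_n^{α,β}`. -/
def jTheta (α β : ℝ) (n : ℕ) (θ : ℝ) : ℝ :=
  if Even n then (Real.sqrt 2)⁻¹ * phiFun α β (n / 2) θ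
  else (Real.sqrt 2)⁻¹ * Real.sign θ * phiFun (α + 1) (β + 1) ((n - 1) / 2) θ

/-- The symmetrized Jacobi–Poisson semigroup `ℍ_t^{α,β}f(θ)` (polynomial setting). -/
def symH (α β : ℝ) (f : ℝ → ℝ) (t θ : ℝ) : ℝ :=
  ∑' n : ℕ, Real.exp (-t * Real.sqrt (jLam α β ((n + 1) / 2))) *
    (∫ φ, f φ * symPhi α β n φ ∂(jacobiMeasure α β)) * symPhi α β n θ

/-- The symmetrized Jacobi–Poisson semigroup `H̄_t^{α,β}f(θ)` (function setting). -/
def symHbar (α β : ℝ) (f : ℝ → ℝ) (t θ : ℝ) : ℝ :=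
  ∑' n : ℕ, Real.exp (-t * Real.sqrt (jLam α β ((n + 1) / 2))) *
    (∫ φ in Ioo (-π) π, f φ * jTheta α β n φ) * jTheta α β n θ

/-- The non-symmetrized Jacobi–Poisson semigroup `ℋ_t^{α,β}f(θ)` (polynomial setting). -/
def jacH (α β : ℝ) (f : ℝ → ℝ) (t θ : ℝ) : ℝ :=
  ∑' n : ℕ, Real.exp (-t * Real.sqrt (jLam α β n)) *
    (∫ φ, f φ * trigP α β n φ ∂(jacobiMeasurePlus α β)) * trigP α β n θ

/-- The non-symmetrized Jacobi–Poisson semigroup `𝓗̄_t^{α,β}f(θ)` (function setting). -/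
def jacHbar (α β : ℝ) (f : ℝ → ℝ) (t θ : ℝ) : ℝ :=
  ∑' n : ℕ, Real.exp (-t * Real.sqrt (jLam α β n)) *
    (∫ φ in Ioo 0 π, f φ * phiFun α β n φ) * phiFun α β n θ

/-- The symmetrized derivative `𝔻_{α,β}`. -/
def symD (α β : ℝ) (f : ℝ → ℝ) : ℝ → ℝ := fun θ =>
  deriv f θ + (α - β + (α + β + 1) * Real.cos θ) / Real.sin θ * ((f θ - f (-θ)) / 2)

/-- The symmetrized derivative `D̄_{α,β}` (function setting). -/
def symDbar (α β : ℝ) (f : ℝ → ℝ) : ℝ → ℝ := fun θ =>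
  deriv f θ -
    ((2 * α + 1) / 4 * (Real.cos (θ / 2) / Real.sin (θ / 2)) -
      (2 * β + 1) / 4 * Real.tan (θ / 2)) * f (-θ)

/-- The derivative `D_{α,β}` (non-symmetrized function setting). -/
def jacD (α β : ℝ) (f : ℝ → ℝ) : ℝ → ℝ := fun θ =>
  deriv f θ - (2 * α + 1) / 4 * (Real.cos (θ / 2) / Real.sin (θ / 2)) * f θ +
    (2 * β + 1) / 4 * Real.tan (θ / 2) * f θ

/-- `δ*_{α,β} = −d/dθ − (α+1/2)cot(θ/2) + (β+1/2)tan(θ/2)`. -/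
def delStar (α β : ℝ) (f : ℝ → ℝ) : ℝ → ℝ := fun θ =>
  -deriv f θ - (α + 1 / 2) * (Real.cos (θ / 2) / Real.sin (θ / 2)) * f θ +
    (β + 1 / 2) * Real.tan (θ / 2) * f θ

/-- `δ_N^even`: `N` alternating factors, rightmost (first applied) one being `δ = d/dθ`. -/
def deltaEven (α β : ℝ) : ℕ → (ℝ → ℝ) → ℝ → ℝ
  | 0 => fun f => f
  | N + 1 => fun f => (if N % 2 = 0 then deriv else delStar α β) (deltaEven α β N f)

/-- `δ_N^odd`: `N` alternating factors, rightmost (first applied) one being `δ*_{α,β}`. -/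
def deltaOdd (α β : ℝ) : ℕ → (ℝ → ℝ) → ℝ → ℝ
  | 0 => fun f => f
  | N + 1 => fun f => (if N % 2 = 0 then delStar α β else deriv) (deltaOdd α β N f)

/-- The Jacobi–Poisson kernel `H_t^{α,β}(θ,φ)` (even part of the symmetrized kernel). -/
def jHker (α β t θ φ : ℝ) : ℝ :=
  (1 / 2) * ∑' n : ℕ, Real.exp (-t * Real.sqrt (jLam α β n)) * trigP α β n θ * trigP α β n φ

/-- The kernel `H̃_t^{α,β}(θ,φ)` (odd part of the symmetrized kernel). -/
def jHtil (α β t θ φ : ℝ) : ℝ :=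
  (1 / 8) * Real.sin θ * Real.sin φ *
    ∑' n : ℕ, Real.exp (-t * Real.sqrt (jLam α β (n + 1))) *
      trigP (α + 1) (β + 1) n θ * trigP (α + 1) (β + 1) n φ

/-- `μ⁺_{α,β}(B(θ,r))` where `B(θ,r) = (θ−r, θ+r) ∩ (0,π)`. -/
def ballMeasure (α β θ r : ℝ) : ℝ≥0∞ := jacobiMeasurePlus α β (Ioo (θ - r) (θ + r))

/-- The Muckenhoupt class `A_p^{α,β}` (`1 < p < ∞`) on `(−π,π)` w.r.t. `μ_{α,β}`. -/
def IsApWeight (α β p : ℝ) (w : ℝ → ℝ) : Prop :=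
  (∀ θ, 0 ≤ w θ) ∧
    ∃ C : ℝ, ∀ a b : ℝ, -π ≤ a → a ≤ b → b ≤ π →
      (∫⁻ θ in Ioo a b, ENNReal.ofReal (w θ) ∂(jacobiMeasure α β)) *
          (∫⁻ θ in Ioo a b, ENNReal.ofReal (w θ ^ (-1 / (p - 1))) ∂(jacobiMeasure α β)) ^
            (p - 1) ≤
        ENNReal.ofReal C * jacobiMeasure α β (Ioo a b) ^ p

/-- The Muckenhoupt class `A_1^{α,β}` on `(−π,π)` w.r.t. `μ_{α,β}`. -/
def IsA1Weight (α β : ℝ) (w : ℝ → ℝ) : Prop :=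
  (∀ θ, 0 ≤ w θ) ∧
    ∃ C : ℝ, ∀ a b : ℝ, -π ≤ a → a ≤ b → b ≤ π →
      ∫⁻ θ in Ioo a b, ENNReal.ofReal (w θ) ∂(jacobiMeasure α β) ≤
        ENNReal.ofReal C *
          essInf (fun θ => ENNReal.ofReal (w θ)) ((jacobiMeasure α β).restrict (Ioo a b)) *
          jacobiMeasure α β (Ioo a b)

/-- The Muckenhoupt class `(A_p^{α,β})⁺` (`1 < p < ∞`) on `(0,π)` w.r.t. `μ⁺_{α,β}`. -/
def IsApWeightPlus (α β p : ℝ) (w : ℝ → ℝ) : Prop :=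
  (∀ θ, 0 ≤ w θ) ∧
    ∃ C : ℝ, ∀ a b : ℝ, 0 ≤ a → a ≤ b → b ≤ π →
      (∫⁻ θ in Ioo a b, ENNReal.ofReal (w θ) ∂(jacobiMeasurePlus α β)) *
          (∫⁻ θ in Ioo a b, ENNReal.ofReal (w θ ^ (-1 / (p - 1))) ∂(jacobiMeasurePlus α β)) ^
            (p - 1) ≤
        ENNReal.ofReal C * jacobiMeasurePlus α β (Ioo a b) ^ p

/-- The Muckenhoupt class `(A_1^{α,β})⁺` on `(0,π)` w.r.t. `μ⁺_{α,β}`. -/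
def IsA1WeightPlus (α β : ℝ) (w : ℝ → ℝ) : Prop :=
  (∀ θ, 0 ≤ w θ) ∧
    ∃ C : ℝ, ∀ a b : ℝ, 0 ≤ a → a ≤ b → b ≤ π →
      ∫⁻ θ in Ioo a b, ENNReal.ofReal (w θ) ∂(jacobiMeasurePlus α β) ≤
        ENNReal.ofReal C *
          essInf (fun θ => ENNReal.ofReal (w θ)) ((jacobiMeasurePlus α β).restrict (Ioo a b)) *
          jacobiMeasurePlus α β (Ioo a b)

/-- The double power weight `w_{r,s}(θ) = |sin(θ/2)|^r (cos(θ/2))^s`. -/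
def wrs (r s θ : ℝ) : ℝ := |Real.sin (θ / 2)| ^ r * Real.cos (θ / 2) ^ s


/-- coefficients of the (renormalised) Jacobi polynomial in powers of `x = sin²(θ/2)` -/
def pcA (a b : ℝ) (N j : ℕ) : ℝ :=
  (-1) ^ j * Real.Gamma (a + b + 1 + N + j) /
    ((j.factorial : ℝ) * ((N - j).factorial : ℝ) * Real.Gamma (a + 1 + j))

def pNA (a b : ℝ) (N : ℕ) (x : ℝ) : ℝ := ∑ j ∈ Finset.range (N + 1), pcA a b N j * x ^ j

def tcA (a b : ℝ) (i j : ℕ) : ℝ :=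
  ((i.factorial : ℝ) * (j.factorial : ℝ) * Real.Gamma (a + 1 + i) * Real.Gamma (b + 1 + j))⁻¹

def tauA (a b S C : ℝ) (k : ℕ) : ℝ :=
  ∑ ij ∈ Finset.HasAntidiagonal.antidiagonal k, tcA a b ij.1 ij.2 * (S ^ ij.1 * C ^ ij.2)

def wcA (a b : ℝ) (N k : ℕ) : ℝ :=
  (-1) ^ (N - k) * Real.Gamma (a + b + 1 + N + k) / ((N - k).factorial : ℝ)

def qNA (a b : ℝ) (N : ℕ) (S C : ℝ) : ℝ :=
  ∑ k ∈ Finset.range (N + 1), wcA a b N k * tauA a b S C k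

lemma gamma_succ_A {s t : ℝ} (hs : 0 < s) (h : t = s + 1) : Real.Gamma t = s * Real.Gamma s := by
  rw [h, Real.Gamma_add_one hs.ne']

lemma tcA_left (a b : ℝ) (ha : 0 < a) (i j : ℕ) :
    ((i : ℝ) + 1) * (i + 1 + a) * tcA a b (i + 1) j = tcA a b i j := by
  unfold tcA
  have h : Real.Gamma (a + 1 + (i + 1 : ℕ)) = (a + 1 + i) * Real.Gamma (a + 1 + i) :=
    gamma_succ_A (by positivity) (by push_cast; ring)
  have h1 : (a + 1 + i) ≠ 0 := by positivity
  rw [h, Nat.factorial_succ]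
  push_cast
  rw [mul_inv, mul_inv, mul_inv, mul_inv, mul_inv, mul_inv, mul_inv, mul_inv]
  have h2 : (i : ℝ) + 1 ≠ 0 := by positivity
  field_simp
  ring

lemma tcA_right (a b : ℝ) (hb : 0 < b) (i j : ℕ) :
    ((j : ℝ) + 1) * (j + 1 + b) * tcA a b i (j + 1) = tcA a b i j := by
  have := tcA_left b a hb j i
  unfold tcA at *
  rw [show ((i.factorial : ℝ) * ((j+1).factorial : ℝ) * Real.Gamma (a + 1 + i) * Real.Gamma (b + 1 + (j+1:ℕ))) = ((j+1).factorial : ℝ) * (i.factorial : ℝ) * Real.Gamma (b + 1 + (j+1:ℕ)) * Real.Gamma (a + 1 + i) by ring, this]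
  congr 1; ring

lemma wcA_succ (a b : ℝ) (ha : 0 < a) (hb : 0 < b) (N k : ℕ) (hk : k < N) :
    wcA a b N (k + 1) = -((a + b + 1 + N + k) * ((N : ℝ) - k)) * wcA a b N k := by
  obtain ⟨l, rfl⟩ : ∃ l, N = k + 1 + l := ⟨N - (k+1), by omega⟩
  unfold wcA
  have e1 : k + 1 + l - (k + 1) = l := by omega
  have e2 : k + 1 + l - k = l + 1 := by omega
  rw [e1, e2, Nat.factorial_succ]
  have h : Real.Gamma (a + b + 1 + (k + 1 + l : ℕ) + (k + 1 : ℕ)) = (a + b + 1 + (k + 1 + l : ℕ) + k) * Real.Gamma (a + b + 1 + (k + 1 + l : ℕ) + k) :=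
    gamma_succ_A (by positivity) (by push_cast; ring)
  rw [h]
  push_cast
  have h2 : (l : ℝ) + 1 ≠ 0 := by positivity
  have h3 : (l.factorial : ℝ) ≠ 0 := by positivity
  field_simp
  ring

section polyA
open Polynomial

def tauP (a b : ℝ) (S T : ℝ[X]) (k : ℕ) : ℝ[X] :=
  ∑ ij ∈ Finset.HasAntidiagonal.antidiagonal k, C (tcA a b ij.1 ij.2) * (S ^ ij.1 * T ^ ij.2)

lemma tauP_d1 (a b : ℝ) (ha : 0 < a) (S T : ℝ[X]) (k : ℕ) :
    ∑ ij ∈ Finset.HasAntidiagonal.antidiagonal (k + 1),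
      C ((ij.1 : ℝ) * (ij.1 + a) * tcA a b ij.1 ij.2) * (S ^ ij.1 * T ^ ij.2) =
      S * tauP a b S T k := by
  rw [Finset.Nat.sum_antidiagonal_succ]
  unfold tauP
  rw [Finset.mul_sum]
  simp only [Nat.cast_zero, zero_mul, map_zero, zero_add]
  refine Finset.sum_congr rfl fun ij _ => ?_
  push_cast
  rw [tcA_left a b ha]
  ring

lemma tauP_d2 (a b : ℝ) (hb : 0 < b) (S T : ℝ[X]) (k : ℕ) :
    ∑ ij ∈ Finset.HasAntidiagonal.antidiagonal (k + 1),
      C ((ij.2 : ℝ) * (ij.2 + b) * tcA a b ij.1 ij.2) * (S ^ ij.1 * T ^ ij.2) =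
      T * tauP a b S T k := by
  rw [Finset.Nat.sum_antidiagonal_succ']
  unfold tauP
  rw [Finset.mul_sum]
  simp only [Nat.cast_zero, zero_mul, map_zero, zero_add]
  refine Finset.sum_congr rfl fun ij _ => ?_
  push_cast
  rw [tcA_right a b hb]
  ring

/-- general weighted double sum -/
def dsP (a b : ℝ) (N : ℕ) (S T : ℝ[X]) (f : ℕ → ℕ → ℝ) : ℝ[X] :=
  ∑ k ∈ Finset.range (N + 1), ∑ ij ∈ Finset.HasAntidiagonal.antidiagonal k,
    C (f ij.1 ij.2 * (wcA a b N k * tcA a b ij.1 ij.2)) * (S ^ ij.1 * T ^ ij.2)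

lemma dsP_add (a b : ℝ) (N : ℕ) (S T : ℝ[X]) (f g : ℕ → ℕ → ℝ) :
    dsP a b N S T f + dsP a b N S T g = dsP a b N S T (fun i j => f i j + g i j) := by
  unfold dsP
  rw [← Finset.sum_add_distrib]
  refine Finset.sum_congr rfl fun k _ => ?_
  rw [← Finset.sum_add_distrib]
  refine Finset.sum_congr rfl fun k _ => ?_
  simp only [add_mul, C_add]

lemma dsP_smul (a b : ℝ) (N : ℕ) (S T : ℝ[X]) (c : ℝ) (f : ℕ → ℕ → ℝ) :
    C c * dsP a b N S T f = dsP a b N S T (fun i j => c * f i j) := by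
  unfold dsP
  rw [Finset.mul_sum]
  refine Finset.sum_congr rfl fun k _ => ?_
  rw [Finset.mul_sum]
  refine Finset.sum_congr rfl fun k _ => ?_
  simp only [C_mul]; ring

lemma dsP_d1 (a b : ℝ) (ha : 0 < a) (hb : 0 < b) (N : ℕ) (S T : ℝ[X]) :
    dsP a b N S T (fun i _ => (i : ℝ) * (i + a)) =
      - S * dsP a b N S T (fun i j => (a + b + 1 + N + (i + j)) * ((N : ℝ) - (i + j))) := by
  have e1 : dsP a b N S T (fun i _ => (i : ℝ) * (i + a)) =
      ∑ k ∈ Finset.range (N + 1), C (wcA a b N k) * ∑ ij ∈ Finset.HasAntidiagonal.antidiagonal k,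
      C ((ij.1 : ℝ) * (ij.1 + a) * tcA a b ij.1 ij.2) * (S ^ ij.1 * T ^ ij.2) := by
    unfold dsP
    refine Finset.sum_congr rfl fun k _ => ?_
    rw [Finset.mul_sum]
    refine Finset.sum_congr rfl fun k _ => ?_
    simp only [C_mul]; ring
  have e2 : dsP a b N S T (fun i j => (a + b + 1 + N + (i + j)) * ((N : ℝ) - (i + j))) =
      ∑ k ∈ Finset.range (N + 1), C ((a + b + 1 + N + k) * ((N : ℝ) - k) * wcA a b N k) * tauP a b S T k := by
    unfold dsP tauP
    refine Finset.sum_congr rfl fun k _ => ?_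
    rw [Finset.mul_sum]
    refine Finset.sum_congr rfl fun ij hij => ?_
    rw [Finset.HasAntidiagonal.mem_antidiagonal] at hij
    rw [← hij]
    push_cast
    simp only [C_mul]; ring
  rw [e1, e2, Finset.sum_range_succ']
  simp only [tauP_d1 a b ha]
  rw [Finset.sum_range_succ]
  simp only [Finset.Nat.antidiagonal_zero, Finset.sum_singleton, Nat.cast_zero, zero_mul, map_zero,
    mul_zero, add_zero, sub_self]
  rw [Finset.mul_sum]
  refine Finset.sum_congr rfl fun k hk => ?_
  rw [wcA_succ a b ha hb N k (Finset.mem_range.1 hk), neg_mul, C_neg]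
  ring

lemma dsP_d2 (a b : ℝ) (ha : 0 < a) (hb : 0 < b) (N : ℕ) (S T : ℝ[X]) :
    dsP a b N S T (fun _ j => (j : ℝ) * (j + b)) =
      - T * dsP a b N S T (fun i j => (a + b + 1 + N + (i + j)) * ((N : ℝ) - (i + j))) := by
  have e1 : dsP a b N S T (fun _ j => (j : ℝ) * (j + b)) =
      ∑ k ∈ Finset.range (N + 1), C (wcA a b N k) * ∑ ij ∈ Finset.HasAntidiagonal.antidiagonal k,
      C ((ij.2 : ℝ) * (ij.2 + b) * tcA a b ij.1 ij.2) * (S ^ ij.1 * T ^ ij.2) := by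
    unfold dsP
    refine Finset.sum_congr rfl fun k _ => ?_
    rw [Finset.mul_sum]
    refine Finset.sum_congr rfl fun k _ => ?_
    simp only [C_mul]; ring
  have e2 : dsP a b N S T (fun i j => (a + b + 1 + N + (i + j)) * ((N : ℝ) - (i + j))) =
      ∑ k ∈ Finset.range (N + 1), C ((a + b + 1 + N + k) * ((N : ℝ) - k) * wcA a b N k) * tauP a b S T k := by
    unfold dsP tauP
    refine Finset.sum_congr rfl fun k _ => ?_
    rw [Finset.mul_sum]
    refine Finset.sum_congr rfl fun ij hij => ?_
    rw [Finset.HasAntidiagonal.mem_antidiagonal] at hij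
    rw [← hij]
    push_cast
    simp only [C_mul]; ring
  rw [e1, e2, Finset.sum_range_succ']
  simp only [tauP_d2 a b hb]
  rw [Finset.sum_range_succ]
  simp only [Finset.Nat.antidiagonal_zero, Finset.sum_singleton, Nat.cast_zero, zero_mul, map_zero,
    mul_zero, add_zero, sub_self]
  rw [Finset.mul_sum]
  refine Finset.sum_congr rfl fun k hk => ?_
  rw [wcA_succ a b ha hb N k (Finset.mem_range.1 hk), neg_mul, C_neg]
  ring

def delP (f : ℝ[X]) : ℝ[X] := X * (1 - X) * derivative f

lemma delP_add (f g : ℝ[X]) : delP (f + g) = delP f + delP g := by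
  simp [delP, mul_add]

lemma delP_sum {ι : Type*} (s : Finset ι) (f : ι → ℝ[X]) :
    delP (∑ i ∈ s, f i) = ∑ i ∈ s, delP (f i) := by
  simp [delP, Finset.mul_sum]

lemma delP_mul (f g : ℝ[X]) : delP (f * g) = delP f * g + f * delP g := by
  simp [delP]; ring

lemma delP_C (c : ℝ) : delP (C c) = 0 := by simp [delP]

lemma delP_S (y : ℝ) (i : ℕ) : delP ((X * C y) ^ i) = (i : ℝ[X]) * (1 - X) * (X * C y) ^ i := by
  induction i with
  | zero => simp [delP]
  | succ i ih =>
    rw [pow_succ, delP_mul, ih]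
    simp [delP]; ring

lemma delP_T (y : ℝ) (i : ℕ) :
    delP (((1 - X) * C y) ^ i) = -(i : ℝ[X]) * X * ((1 - X) * C y) ^ i := by
  induction i with
  | zero => simp [delP]
  | succ i ih =>
    rw [pow_succ, delP_mul, ih]
    simp [delP]; ring

lemma delP_e (y z : ℝ) (i j : ℕ) :
    delP ((X * C y) ^ i * ((1 - X) * C z) ^ j) =
      ((i : ℝ[X]) * (1 - X) - (j : ℝ[X]) * X) * ((X * C y) ^ i * ((1 - X) * C z) ^ j) := by
  rw [delP_mul, delP_S, delP_T]; ring

lemma delP_lin (i j : ℕ) : delP ((i : ℝ[X]) * (1 - X) - (j : ℝ[X]) * X) = -((i : ℝ[X]) + (j : ℝ[X])) * (X * (1 - X)) := by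
  simp [delP]; ring

lemma LLe (a b y z : ℝ) (i j : ℕ) (c : ℝ) :
    delP (delP (C c * ((X * C y) ^ i * ((1 - X) * C z) ^ j))) +
      (C a * (1 - X) - C b * X) * delP (C c * ((X * C y) ^ i * ((1 - X) * C z) ^ j)) =
    (1 - X) ^ 2 * (C ((i : ℝ) * (i + a) * c) * ((X * C y) ^ i * ((1 - X) * C z) ^ j)) +
    X ^ 2 * (C ((j : ℝ) * (j + b) * c) * ((X * C y) ^ i * ((1 - X) * C z) ^ j)) -
    X * (1 - X) * (C ((2 * i * j + (a + 1) * j + (b + 1) * i) * c) *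
      ((X * C y) ^ i * ((1 - X) * C z) ^ j)) := by
  simp only [delP_mul, delP_C, delP_e, delP_S, delP_T, delP_lin, C_mul, C_add, map_natCast, map_ofNat, map_one]
  have h1 : delP (1 - X : ℝ[X]) = - (X * (1 - X)) := by simp [delP]
  have h2 : delP (X : ℝ[X]) = (X * (1 - X)) := by simp [delP]
  have h3 : ∀ n : ℕ, delP (n : ℝ[X]) = 0 := by intro n; simp [delP]
  have h4 : ∀ f : ℝ[X], delP (-f) = - delP f := by intro n; simp [delP]
  have h5 : delP (0 : ℝ[X]) = 0 := by simp [delP]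
  simp only [zero_mul, zero_add, delP_mul, delP_add, h1, h2, h3, h4, h5, delP_C, delP_S, delP_T]
  ring

def qP (a b : ℝ) (N : ℕ) (y : ℝ) : ℝ[X] := dsP a b N (X * C y) ((1 - X) * C (1 - y)) (fun _ _ => 1)

lemma qP_ode1 (a b : ℝ) (ha : 0 < a) (hb : 0 < b) (N : ℕ) (y : ℝ) :
    delP (delP (qP a b N y)) + (C a * (1 - X) - C b * X) * delP (qP a b N y) =
      - (X * (1 - X)) * (C ((N : ℝ) * (N + (a + b + 1))) * qP a b N y) := by
  have key : delP (delP (qP a b N y)) + (C a * (1 - X) - C b * X) * delP (qP a b N y) =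
      (1 - X) ^ 2 * dsP a b N (X * C y) ((1 - X) * C (1 - y)) (fun i _ => (i : ℝ) * (i + a)) +
      X ^ 2 * dsP a b N (X * C y) ((1 - X) * C (1 - y)) (fun _ j => (j : ℝ) * (j + b)) -
      X * (1 - X) * dsP a b N (X * C y) ((1 - X) * C (1 - y))
        (fun i j => (2 * i * j + (a + 1) * j + (b + 1) * i)) := by
    unfold qP dsP
    simp only [delP_sum, Finset.mul_sum]
    rw [← Finset.sum_add_distrib, ← Finset.sum_add_distrib, ← Finset.sum_sub_distrib]
    refine Finset.sum_congr rfl fun k _ => ?_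
    rw [← Finset.sum_add_distrib, ← Finset.sum_add_distrib, ← Finset.sum_sub_distrib]
    refine Finset.sum_congr rfl fun ij _ => ?_
    rw [one_mul, LLe]
  have g1 := dsP_d1 a b ha hb N (X * C y) ((1 - X) * C (1 - y))
  have g2 := dsP_d2 a b ha hb N (X * C y) ((1 - X) * C (1 - y))
  have g3 : C ((N : ℝ) * (N + (a + b + 1))) * qP a b N y =
     dsP a b N (X * C y) ((1 - X) * C (1 - y)) (fun i j => (a + b + 1 + N + (i + j)) * ((N : ℝ) - (i + j))) +
     dsP a b N (X * C y) ((1 - X) * C (1 - y)) (fun i _ => (i : ℝ) * (i + a)) +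
     dsP a b N (X * C y) ((1 - X) * C (1 - y)) (fun _ j => (j : ℝ) * (j + b)) +
     dsP a b N (X * C y) ((1 - X) * C (1 - y))
        (fun i j => (2 * i * j + (a + 1) * j + (b + 1) * i)) := by
    unfold qP
    rw [dsP_smul, dsP_add, dsP_add, dsP_add]
    congr 1
    ext i j
    ring
  rw [key, g3, g1, g2]
  simp only [C_sub, C_1]
  ring

lemma qP_ode (a b : ℝ) (ha : 0 < a) (hb : 0 < b) (N : ℕ) (y : ℝ) :
    X * (1 - X) * derivative (derivative (qP a b N y)) +
      (C (a + 1) - C (a + b + 2) * X) * derivative (qP a b N y) =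
      - (C ((N : ℝ) * (N + (a + b + 1))) * qP a b N y) := by
  have h := qP_ode1 a b ha hb N y
  have h0 : (X * (1 - X) : ℝ[X]) ≠ 0 := by
    refine mul_ne_zero X_ne_zero ?_
    intro h
    have := congrArg (Polynomial.eval 0) h
    simp at this
  apply mul_left_cancel₀ h0
  rw [mul_neg, ← neg_mul, ← h]
  simp only [delP, derivative_mul, derivative_X, derivative_sub, derivative_one, C_add, C_1, map_ofNat]
  ring

lemma qP_coeff (a b : ℝ) (ha : 0 < a) (hb : 0 < b) (N : ℕ) (y : ℝ) (j : ℕ) :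
    ((j : ℝ) + 1) * (j + 1 + a) * (qP a b N y).coeff (j + 1) =
      -(((N : ℝ) - j) * (N + j + (a + b + 1))) * (qP a b N y).coeff j := by
  have h := congrArg (fun f => Polynomial.coeff f j) (qP_ode a b ha hb N y)
  have e : X * (1 - X) * derivative (derivative (qP a b N y)) +
      (C (a + 1) - C (a + b + 2) * X) * derivative (qP a b N y) =
      X * derivative (derivative (qP a b N y)) - X * (X * derivative (derivative (qP a b N y))) +
      C (a + 1) * derivative (qP a b N y) - C (a + b + 2) * (X * derivative (qP a b N y)) := by ring
  rw [e] at h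
  rcases j with _ | _ | j
  · simp [coeff_derivative, coeff_C_mul, -map_add, -C_add, -C_mul, -map_mul] at h
    simp
    linarith
  · simp [coeff_derivative, coeff_C_mul, -map_add, -C_add, -C_mul, -map_mul] at h
    simp
    linarith
  · simp [coeff_derivative, coeff_C_mul, -map_add, -C_add, -C_mul, -map_mul] at h
    push_cast
    push_cast at h
    linarith

lemma pcA_succ (a b : ℝ) (ha : 0 < a) (hb : 0 < b) (N j : ℕ) (hj : j < N) :
    ((j : ℝ) + 1) * (j + 1 + a) * pcA a b N (j + 1) =
      -(((N : ℝ) - j) * (N + j + (a + b + 1))) * pcA a b N j := by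
  obtain ⟨l, rfl⟩ : ∃ l, N = j + 1 + l := ⟨N - (j+1), by omega⟩
  unfold pcA
  have e1 : j + 1 + l - (j + 1) = l := by omega
  have e2 : j + 1 + l - j = l + 1 := by omega
  rw [e1, e2, Nat.factorial_succ, Nat.factorial_succ]
  have h : Real.Gamma (a + b + 1 + (j + 1 + l : ℕ) + (j + 1 : ℕ)) = (a + b + 1 + (j + 1 + l : ℕ) + j) * Real.Gamma (a + b + 1 + (j + 1 + l : ℕ) + j) :=
    gamma_succ_A (by positivity) (by push_cast; ring)
  have h' : Real.Gamma (a + 1 + (j + 1 : ℕ)) = (a + 1 + j) * Real.Gamma (a + 1 + j) :=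
    gamma_succ_A (by positivity) (by push_cast; ring)
  have hg : Real.Gamma (a + 1 + j) ≠ 0 := (Real.Gamma_pos_of_pos (by positivity)).ne'
  rw [h, h']
  push_cast
  have h1 : (a + 1 + j) ≠ 0 := by positivity
  have h2 : (l : ℝ) + 1 ≠ 0 := by positivity
  have h3 : (l.factorial : ℝ) ≠ 0 := by positivity
  have h4 : (j.factorial : ℝ) ≠ 0 := by positivity
  have h5 : (j : ℝ) + 1 ≠ 0 := by positivity
  field_simp
  ring

lemma pcA_zero_pos (a b : ℝ) (ha : 0 < a) (hb : 0 < b) (N : ℕ) : 0 < pcA a b N 0 := by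
  unfold pcA
  have : 0 < Real.Gamma (a + b + 1 + N + (0:ℕ)) := Real.Gamma_pos_of_pos (by positivity)
  have : 0 < Real.Gamma (a + 1 + (0:ℕ)) := Real.Gamma_pos_of_pos (by positivity)
  positivity

lemma qP_coeff_eq (a b : ℝ) (ha : 0 < a) (hb : 0 < b) (N : ℕ) (y : ℝ) (j : ℕ) (hj : j ≤ N) :
    (qP a b N y).coeff j * pcA a b N 0 = (qP a b N y).coeff 0 * pcA a b N j := by
  induction j with
  | zero => rfl
  | succ j ih =>
    have ih := ih (by omega)
    have h1 := qP_coeff a b ha hb N y j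
    have h2 := pcA_succ a b ha hb N j (by omega)
    have h3 : ((j : ℝ) + 1) * (j + 1 + a) ≠ 0 := by positivity
    apply mul_left_cancel₀ h3
    linear_combination (pcA a b N 0) * h1 - (qP a b N y).coeff 0 * h2 -((N : ℝ) - j) * (N + j + (a + b + 1)) * ih

lemma qP_coeff_zero (a b : ℝ) (ha : 0 < a) (hb : 0 < b) (N : ℕ) (y : ℝ) (j : ℕ) (hj : N < j) :
    (qP a b N y).coeff j = 0 := by
  induction j, hj using Nat.le_induction with
  | base =>
    have h1 := qP_coeff a b ha hb N y N
    have h3 : ((N : ℝ) + 1) * (N + 1 + a) ≠ 0 := by positivity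
    simpa [h3] using h1
  | succ j _ ih =>
    have h1 := qP_coeff a b ha hb N y j
    have h3 : ((j : ℝ) + 1) * (j + 1 + a) ≠ 0 := by positivity
    rw [ih, mul_zero] at h1
    exact (mul_eq_zero.1 h1).resolve_left h3

lemma qP_eval (a b : ℝ) (N : ℕ) (x y : ℝ) :
    (qP a b N y).eval x = qNA a b N (x * y) ((1 - x) * (1 - y)) := by
  unfold qP dsP qNA tauA
  simp only [eval_finsetSum, Finset.mul_sum]
  refine Finset.sum_congr rfl fun k _ => ?_
  refine Finset.sum_congr rfl fun ij _ => ?_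
  simp
  ring

lemma qNA_left (a b : ℝ) (ha : 0 < a) (hb : 0 < b) (N : ℕ) (x y : ℝ) :
    qNA a b N (x * y) ((1 - x) * (1 - y)) * pcA a b N 0 =
      qNA a b N 0 (1 - y) * pNA a b N x := by
  have h0 : (qP a b N y).coeff 0 = qNA a b N 0 (1 - y) := by
    rw [coeff_zero_eq_eval_zero, qP_eval]; simp
  have hd : (qP a b N y).natDegree < N + 1 := by
    rw [Nat.lt_succ_iff, natDegree_le_iff_coeff_eq_zero]
    exact fun j hj => qP_coeff_zero a b ha hb N y j hj
  rw [← qP_eval, eval_eq_sum_range' hd, pNA, Finset.sum_mul, Finset.mul_sum]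
  refine Finset.sum_congr rfl fun j hj => ?_
  have := qP_coeff_eq a b ha hb N y j (by simpa [Nat.lt_succ_iff] using hj)
  rw [h0] at this
  linear_combination x ^ j * this

lemma qNA_prod (a b : ℝ) (ha : 0 < a) (hb : 0 < b) (N : ℕ) (x y : ℝ) :
    qNA a b N (x * y) ((1 - x) * (1 - y)) * pcA a b N 0 ^ 2 =
      qNA a b N 0 1 * pNA a b N x * pNA a b N y := by
  have h1 := qNA_left a b ha hb N x y
  have h2 := qNA_left a b ha hb N y 0
  simp only [mul_zero, sub_zero, mul_one] at h2
  linear_combination pcA a b N 0 * h1 + pNA a b N x * h2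

end polyA

/-- Chu–Vandermonde in Gamma form -/
lemma chuA (N : ℕ) : ∀ (B C : ℝ), 0 < B → 0 < C →
    ∑ m ∈ Finset.range (N + 1), (-1 : ℝ) ^ m * (N.choose m : ℝ) * (Real.Gamma (B + m) / Real.Gamma (C + m)) =
      Real.Gamma B * (∏ i ∈ Finset.range N, (C - B + i)) / Real.Gamma (C + N) := by
  induction N with
  | zero => intro B C hB hC; simp
  | succ N ih =>
    intro B C hB hC
    have h1 := ih B C hB hC
    have h2 := ih (B + 1) (C + 1) (by linarith) (by linarith)
    have key : ∑ m ∈ Finset.range (N + 1 + 1), (-1 : ℝ) ^ m * ((N+1).choose m : ℝ) * (Real.Gamma (B + m) / Real.Gamma (C + m)) =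
      ∑ m ∈ Finset.range (N + 1), (-1 : ℝ) ^ m * (N.choose m : ℝ) * (Real.Gamma (B + m) / Real.Gamma (C + m)) -
      ∑ m ∈ Finset.range (N + 1), (-1 : ℝ) ^ m * (N.choose m : ℝ) * (Real.Gamma (B + 1 + m) / Real.Gamma (C + 1 + m)) := by
      have e : ∑ m ∈ Finset.range (N + 1), (-1 : ℝ) ^ m * (N.choose m : ℝ) * (Real.Gamma (B + m) / Real.Gamma (C + m)) =
         ∑ m ∈ Finset.range (N + 1 + 1), (-1 : ℝ) ^ m * (N.choose m : ℝ) * (Real.Gamma (B + m) / Real.Gamma (C + m)) := by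
        rw [Finset.sum_range_succ _ (N+1)]
        simp
      rw [e, Finset.sum_range_succ', Finset.sum_range_succ' _ (N+1)]
      rw [add_sub_right_comm, ← Finset.sum_sub_distrib]
      simp only [Nat.choose_zero_right, add_left_inj]
      refine Finset.sum_congr rfl fun m _ => ?_
      rw [Nat.choose_succ_succ]
      push_cast
      rw [show B + 1 + (m:ℝ) = B + (m + 1) by ring, show C + 1 + (m:ℝ) = C + (m + 1) by ring]
      ring
    rw [key, h1, h2, Finset.prod_range_succ, Real.Gamma_add_one hB.ne']
    have e2 : Real.Gamma (C + (N + 1 : ℕ)) = (C + N) * Real.Gamma (C + N) := gamma_succ_A (by positivity) (by push_cast; ring)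
    have e3 : C + 1 + (N : ℝ) = C + (N + 1 : ℕ) := by push_cast; ring
    rw [e3, e2]
    have h3 : Real.Gamma (C + N) ≠ 0 := (Real.Gamma_pos_of_pos (by positivity)).ne'
    have h4 : (C + N) ≠ 0 := by positivity
    rw [show C + 1 - (B + 1) = C - B by ring]
    field_simp
    ring

def jintB (p q : ℝ) : ℝ := ∫ θ in (0:ℝ)..π, Real.sin (θ/2) ^ p * Real.cos (θ/2) ^ q

lemma sin_half_nonneg_B {θ : ℝ} (h : θ ∈ Icc 0 π) : 0 ≤ Real.sin (θ/2) :=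
  Real.sin_nonneg_of_nonneg_of_le_pi (by linarith [h.1]) (by linarith [h.2, Real.pi_pos])

lemma cos_half_nonneg_B {θ : ℝ} (h : θ ∈ Icc 0 π) : 0 ≤ Real.cos (θ/2) :=
  Real.cos_nonneg_of_neg_pi_div_two_le_of_le (by linarith [h.1, Real.pi_pos]) (by linarith [h.2])

lemma jintB_cont (p q : ℝ) (hp : 0 ≤ p) (hq : 0 ≤ q) :
    Continuous fun θ : ℝ => Real.sin (θ/2) ^ p * Real.cos (θ/2) ^ q :=
  ((Real.continuous_sin.comp (continuous_id.div_const 2)).rpow_const (fun _ => Or.inr hp)).mul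
   ((Real.continuous_cos.comp (continuous_id.div_const 2)).rpow_const (fun _ => Or.inr hq))

lemma jintB_split (p q : ℝ) (hp : 0 < p) (hq : 0 < q) :
    jintB p q = jintB (p+2) q + jintB p (q+2) := by
  unfold jintB
  rw [← intervalIntegral.integral_add ((jintB_cont _ _ (by linarith) hq.le).intervalIntegrable _ _)
    ((jintB_cont _ _ hp.le (by linarith)).intervalIntegrable _ _)]
  apply intervalIntegral.integral_congr
  intro θ hθ
  rw [uIcc_of_le Real.pi_pos.le] at hθ
  have h1 := sin_half_nonneg_B hθ
  have h2 := cos_half_nonneg_B hθ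
  simp only
  rw [Real.rpow_add' h1 (by linarith), Real.rpow_add' h2 (by linarith)]
  rw [show (2:ℝ) = (2:ℕ) by norm_num, Real.rpow_natCast, Real.rpow_natCast]
  have := Real.sin_sq_add_cos_sq (θ/2)
  push_cast
  linear_combination (-(Real.sin (θ/2) ^ p * Real.cos (θ/2) ^ q)) * this

lemma jintB_ibp (p q : ℝ) (hp : 1 < p) (hq : 1 < q) :
    p * jintB (p-1) (q+1) = q * jintB (p+1) (q-1) := by
  have key : ∫ θ in (0:ℝ)..π, (p/2 * (Real.sin (θ/2) ^ (p-1) * Real.cos (θ/2) ^ (q+1)) -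
      q/2 * (Real.sin (θ/2) ^ (p+1) * Real.cos (θ/2) ^ (q-1))) =
      Real.sin (π/2) ^ p * Real.cos (π/2) ^ q - Real.sin (0/2) ^ p * Real.cos (0/2) ^ q := by
    apply intervalIntegral.integral_eq_sub_of_hasDerivAt (f := fun θ => Real.sin (θ/2) ^ p * Real.cos (θ/2) ^ q)
    · intro θ hθ
      rw [uIcc_of_le Real.pi_pos.le] at hθ
      have h1 := sin_half_nonneg_B hθ
      have h2 := cos_half_nonneg_B hθ
      have d0 : HasDerivAt (fun θ : ℝ => θ/2) (1/2) θ := (hasDerivAt_id θ).div_const 2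
      have d1 := (d0.sin).rpow_const (p := p) (Or.inr hp.le)
      have d2 := (d0.cos).rpow_const (p := q) (Or.inr hq.le)
      refine (d1.mul d2).congr_deriv ?_
      have e1 : Real.cos (θ/2) ^ (q+1) = Real.cos (θ/2)^q * Real.cos (θ/2) := by
        rw [Real.rpow_add' h2 (by linarith), Real.rpow_one]
      have e2 : Real.sin (θ/2) ^ (p+1) = Real.sin (θ/2)^p * Real.sin (θ/2) := by
        rw [Real.rpow_add' h1 (by linarith), Real.rpow_one]
      rw [e1, e2]; ring
    · exact (((jintB_cont _ _ (by linarith) (by linarith)).const_mul _ |>.sub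
        ((jintB_cont _ _ (by linarith) (by linarith)).const_mul _))).intervalIntegrable _ _
  rw [intervalIntegral.integral_sub (((jintB_cont _ _ (by linarith) (by linarith)).const_mul _).intervalIntegrable _ _)
    (((jintB_cont _ _ (by linarith) (by linarith)).const_mul _).intervalIntegrable _ _),
    intervalIntegral.integral_const_mul, intervalIntegral.integral_const_mul] at key
  simp only [Real.cos_pi_div_two, zero_div, Real.sin_zero] at key
  rw [Real.zero_rpow (by linarith), Real.zero_rpow (by linarith)] at key
  unfold jintB
  linarith

def momB (a b : ℝ) (m n : ℕ) : ℝ := jintB (2*a+1+2*m) (2*b+1+2*n)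

lemma momB_left (a b : ℝ) (ha : 0 < a) (hb : 0 < b) (m n : ℕ) :
    (a+b+2+m+n) * momB a b (m+1) n = (a+1+m) * momB a b m n := by
  have h1 := jintB_split (2*a+1+2*m) (2*b+1+2*n) (by positivity) (by positivity)
  have hm : (0:ℝ) ≤ m := by positivity
  have hn : (0:ℝ) ≤ n := by positivity
  have h2 := jintB_ibp (2*a+2+2*m) (2*b+2+2*n) (by linarith) (by linarith)
  unfold momB
  push_cast
  rw [show (2*a+1+2*((m:ℝ)+1)) = 2*a+1+2*m+2 by ring]
  rw [show 2*a+2+2*(m:ℝ)-1 = 2*a+1+2*m by ring, show 2*a+2+2*(m:ℝ)+1 = 2*a+1+2*m+2 by ring,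
   show 2*b+2+2*(n:ℝ)-1 = 2*b+1+2*n by ring, show 2*b+2+2*(n:ℝ)+1 = 2*b+1+2*n+2 by ring] at h2
  rw [h1]; linarith

lemma momB_right (a b : ℝ) (ha : 0 < a) (hb : 0 < b) (m n : ℕ) :
    (a+b+2+m+n) * momB a b m (n+1) = (b+1+n) * momB a b m n := by
  have h1 := jintB_split (2*a+1+2*m) (2*b+1+2*n) (by positivity) (by positivity)
  have hm : (0:ℝ) ≤ m := by positivity
  have hn : (0:ℝ) ≤ n := by positivity
  have h2 := jintB_ibp (2*a+2+2*m) (2*b+2+2*n) (by linarith) (by linarith)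
  unfold momB
  push_cast
  rw [show (2*b+1+2*((n:ℝ)+1)) = 2*b+1+2*n+2 by ring]
  rw [show 2*a+2+2*(m:ℝ)-1 = 2*a+1+2*m by ring, show 2*a+2+2*(m:ℝ)+1 = 2*a+1+2*m+2 by ring,
   show 2*b+2+2*(n:ℝ)-1 = 2*b+1+2*n by ring, show 2*b+2+2*(n:ℝ)+1 = 2*b+1+2*n+2 by ring] at h2
  rw [h1]; linarith

def mom0B (a b : ℝ) : ℝ := momB a b 0 0 * Real.Gamma (a+b+2) / (Real.Gamma (a+1) * Real.Gamma (b+1))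

lemma mom0B_pos (a b : ℝ) (ha : 0 < a) (hb : 0 < b) : 0 < mom0B a b := by
  have : 0 < momB a b 0 0 := by
    unfold momB jintB
    apply intervalIntegral.intervalIntegral_pos_of_pos_on
    · exact (jintB_cont _ _ (by positivity) (by positivity)).intervalIntegrable _ _
    · intro θ hθ
      have := Real.sin_pos_of_pos_of_lt_pi (x := θ/2) (by linarith [hθ.1]) (by linarith [hθ.2, Real.pi_pos])
      have := Real.cos_pos_of_mem_Ioo (x := θ/2) ⟨by linarith [hθ.1, Real.pi_pos], by linarith [hθ.2]⟩
      positivity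
    · exact Real.pi_pos
  unfold mom0B
  have h1 := Real.Gamma_pos_of_pos (show 0 < a+b+2 by positivity)
  have h2 := Real.Gamma_pos_of_pos (show 0 < a+1 by positivity)
  have h3 := Real.Gamma_pos_of_pos (show 0 < b+1 by positivity)
  positivity

lemma momB_eq (a b : ℝ) (ha : 0 < a) (hb : 0 < b) (m n : ℕ) :
    momB a b m n = mom0B a b * Real.Gamma (a+1+m) * Real.Gamma (b+1+n) / Real.Gamma (a+b+2+n+m) := by
  have h1 := Real.Gamma_pos_of_pos (show 0 < a+b+2 by positivity)
  have h2 := Real.Gamma_pos_of_pos (show 0 < a+1 by positivity)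
  have h3 := Real.Gamma_pos_of_pos (show 0 < b+1 by positivity)
  induction m with
  | zero =>
    induction n with
    | zero => 
      unfold mom0B; simp; field_simp
    | succ n ih =>
      have := momB_right a b ha hb 0 n
      have e1 : Real.Gamma (b+1+(n+1:ℕ)) = (b+1+n) * Real.Gamma (b+1+n) := gamma_succ_A (by positivity) (by push_cast; ring)
      have e2 : Real.Gamma (a+b+2+(n+1:ℕ)+(0:ℕ)) = (a+b+2+n) * Real.Gamma (a+b+2+n+(0:ℕ)) := by
        rw [gamma_succ_A (s := a+b+2+n) (by positivity) (by push_cast; ring)]; simp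
      rw [e1, e2]
      have h4 := Real.Gamma_pos_of_pos (show 0 < a+b+2+n+(0:ℕ) by positivity)
      have h5 : (a+b+2+(n:ℝ)) ≠ 0 := by positivity
      rw [ih] at this
      rw [eq_div_iff (by positivity)]
      have h6 := h4.ne'
      field_simp at this
      push_cast at this ⊢
      simp only [add_zero] at *
      linear_combination this
  | succ m ih =>
      have := momB_left a b ha hb m n
      have e1 : Real.Gamma (a+1+(m+1:ℕ)) = (a+1+m) * Real.Gamma (a+1+m) := gamma_succ_A (by positivity) (by push_cast; ring)
      have e2 : Real.Gamma (a+b+2+n+(m+1:ℕ)) = (a+b+2+n+m) * Real.Gamma (a+b+2+n+m) := by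
        rw [gamma_succ_A (s := a+b+2+n+m) (by positivity) (by push_cast; ring)]
      rw [e1, e2]
      have h4 := Real.Gamma_pos_of_pos (show 0 < a+b+2+(n:ℝ)+m by positivity)
      rw [ih] at this
      rw [eq_div_iff (by positivity)]
      have h6 := h4.ne'
      field_simp at this
      linear_combination this

lemma jacobiPlus_eq (a b : ℝ) : jacobiMeasurePlus a b =
    (volume.restrict (Ioo 0 π)).withDensity fun θ => ENNReal.ofReal (jPsi a b θ ^ 2) := by
  unfold jacobiMeasurePlus jacobiMeasure
  rw [restrict_withDensity measurableSet_Ioo, Measure.restrict_restrict measurableSet_Ioo]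
  congr 2
  rw [inter_eq_left]
  exact Ioo_subset_Ioo_left (by linarith [Real.pi_pos])

lemma jPsi_meas (a b : ℝ) : Measurable fun θ => ENNReal.ofReal (jPsi a b θ ^ 2) := by
  unfold jPsi
  fun_prop

lemma jPsi_sq (a b θ : ℝ) (h : θ ∈ Ioo 0 π) :
    jPsi a b θ ^ 2 = Real.sin (θ/2) ^ (2*a+1) * Real.cos (θ/2) ^ (2*b+1) := by
  have h1 := Real.sin_pos_of_pos_of_lt_pi (x := θ/2) (by linarith [h.1]) (by linarith [h.2, Real.pi_pos])
  have h2 := Real.cos_pos_of_mem_Ioo (x := θ/2) ⟨by linarith [h.1, Real.pi_pos], by linarith [h.2]⟩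
  unfold jPsi
  rw [abs_of_pos h1, mul_pow, ← Real.rpow_mul_natCast h1.le, ← Real.rpow_mul_natCast h2.le]
  congr 2 <;> push_cast <;> ring

lemma jacobiPlus_integral (a b : ℝ) (g : ℝ → ℝ) : ∫ θ, g θ ∂(jacobiMeasurePlus a b) =
    ∫ θ in (0:ℝ)..π, Real.sin (θ/2) ^ (2*a+1) * Real.cos (θ/2) ^ (2*b+1) * g θ := by
  rw [jacobiPlus_eq, integral_withDensity_eq_integral_toReal_smul (jPsi_meas a b) (by simp),
    intervalIntegral.integral_of_le Real.pi_pos.le, integral_Ioc_eq_integral_Ioo]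
  apply setIntegral_congr_fun measurableSet_Ioo
  intro θ hθ
  simp only [smul_eq_mul]
  rw [ENNReal.toReal_ofReal (by positivity), jPsi_sq a b θ hθ]

/-- the functional `∫ f(sin²(θ/2)) dμ` -/
def EB (a b : ℝ) (f : ℝ → ℝ) : ℝ :=
  ∫ θ in (0:ℝ)..π, Real.sin (θ/2) ^ (2*a+1) * Real.cos (θ/2) ^ (2*b+1) * f (Real.sin (θ/2) ^ 2)

lemma EB_sum (a b : ℝ) (ha : 0 < a) (hb : 0 < b) {ι : Type*} (s : Finset ι) (f : ι → ℝ → ℝ)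
    (hf : ∀ i ∈ s, Continuous (f i)) : EB a b (fun x => ∑ i ∈ s, f i x) = ∑ i ∈ s, EB a b (f i) := by
  unfold EB
  rw [← intervalIntegral.integral_finsetSum]
  · simp only [Finset.mul_sum]
  · intro i hi
    apply Continuous.intervalIntegrable
    apply (jintB_cont _ _ (by positivity) (by positivity)).mul
    apply (hf i hi).comp; fun_prop

lemma EB_const_mul (a b c : ℝ) (f : ℝ → ℝ) : EB a b (fun x => c * f x) = c * EB a b f := by
  unfold EB
  rw [← intervalIntegral.integral_const_mul]
  congr 1; ext θ; ring

lemma EB_mom (a b : ℝ) (ha : 0 < a) (hb : 0 < b) (m n : ℕ) :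
    EB a b (fun x => x ^ m * (1-x)^n) = momB a b m n := by
  unfold EB momB jintB
  apply intervalIntegral.integral_congr
  intro θ hθ
  rw [uIcc_of_le Real.pi_pos.le] at hθ
  have h1 := sin_half_nonneg_B hθ
  have h2 := cos_half_nonneg_B hθ
  simp only
  have e : ∀ (z c : ℝ) (k : ℕ), 0 ≤ z → 0 < c → z ^ (2*c+1+2*k) = z ^ (2*c+1) * (z^2)^k := by
    intro z c k hz hc
    rw [Real.rpow_add' hz (by positivity), ← pow_mul, ← Real.rpow_natCast]
    push_cast; rfl
  rw [e _ _ _ h1 ha, e _ _ _ h2 hb, ← Real.cos_sq' (θ/2)]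
  ring

lemma pNA_cont (a b : ℝ) (N : ℕ) : Continuous (pNA a b N) := by
  unfold pNA; fun_prop

lemma vB_eq (a b : ℝ) (ha : 0 < a) (hb : 0 < b) (N n : ℕ) :
    EB a b (fun x => (1-x)^n * pNA a b N x) = mom0B a b * Real.Gamma (b+1+n) / N.factorial *
     (Real.Gamma (a+b+1+N) * (∏ i ∈ Finset.range N, ((1:ℝ)+n-N+i)) / Real.Gamma (a+b+2+n+N)) := by
  have h := chuA N (a+b+1+N) (a+b+2+n) (by positivity) (by positivity)
  have e : ∀ i : ℕ, (a+b+2+n) - (a+b+1+N) + i = (1:ℝ)+n-N+i := by intro i; ring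
  simp only [e] at h
  rw [← h]
  have : (fun x => (1-x)^n * pNA a b N x) = fun x => ∑ j ∈ Finset.range (N+1), pcA a b N j * (x^j * (1-x)^n) := by
    ext x; unfold pNA; rw [Finset.mul_sum]; apply Finset.sum_congr rfl; intros; ring
  rw [this, EB_sum a b ha hb _ _ (by intros; fun_prop), Finset.mul_sum]
  apply Finset.sum_congr rfl
  intro j hj
  have hj' : j ≤ N := by simpa [Nat.lt_succ_iff] using hj
  rw [EB_const_mul, EB_mom a b ha hb, momB_eq a b ha hb, pcA, Nat.cast_choose ℝ hj']
  have h2 := Real.Gamma_pos_of_pos (show 0 < a+1+j by positivity)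
  have h3 := Real.Gamma_pos_of_pos (show 0 < a+b+2+n+j by positivity)
  have := h2.ne'
  have := h3.ne'
  field_simp

lemma qNA_zero (a b : ℝ) (N : ℕ) (y : ℝ) :
    qNA a b N 0 y = ∑ k ∈ Finset.range (N+1), wcA a b N k * tcA a b 0 k * y^k := by
  unfold qNA tauA
  apply Finset.sum_congr rfl
  intro k hk
  rw [mul_assoc]; congr 1
  rw [Finset.sum_eq_single_of_mem (0,k) (by rw [Finset.HasAntidiagonal.mem_antidiagonal]; simp)]
  · simp
  · rintro ⟨i,j⟩ hij hne
    have : i ≠ 0 := by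
      rw [Finset.HasAntidiagonal.mem_antidiagonal] at hij
      rintro rfl; simp at hij; simp [hij] at hne
    simp [this]

lemma normB (a b : ℝ) (ha : 0 < a) (hb : 0 < b) (N : ℕ) :
    qNA a b N 0 1 * EB a b (fun x => pNA a b N x ^ 2) * (a+b+1+2*N) = pcA a b N 0 ^ 2 * mom0B a b := by
  have hp := pcA_zero_pos a b ha hb N
  have h1 : ∀ y, pcA a b N 0 * qNA a b N 0 (1-y) = qNA a b N 0 1 * pNA a b N y := by
    intro y
    have := qNA_prod a b ha hb N 0 y
    have e : pNA a b N 0 = pcA a b N 0 := by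
      unfold pNA; rw [Finset.sum_range_succ']; simp
    rw [e] at this
    simp only [zero_mul, sub_zero, one_mul] at this
    apply mul_left_cancel₀ hp.ne'
    linear_combination this
  have h2 : (fun x => qNA a b N 0 1 * pNA a b N x ^ 2) = fun y => ∑ k ∈ Finset.range (N+1), pcA a b N 0 * wcA a b N k * tcA a b 0 k * ((1-y)^k * pNA a b N y) := by
    ext y
    have : qNA a b N 0 1 * pNA a b N y ^ 2 = (pcA a b N 0 * qNA a b N 0 (1-y)) * pNA a b N y := by
      rw [h1]; ring
    rw [this, qNA_zero, Finset.mul_sum, Finset.sum_mul]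
    apply Finset.sum_congr rfl; intros; ring
  rw [← EB_const_mul, h2, EB_sum a b ha hb _ _ (by intros; have := pNA_cont a b N; fun_prop), Finset.sum_range_succ,
    Finset.sum_eq_zero]
  · rw [EB_const_mul, vB_eq a b ha hb]
    have e1 : ∏ i ∈ Finset.range N, ((1:ℝ)+N-N+i) = N.factorial := by
      rw [← Finset.prod_range_add_one_eq_factorial]; push_cast
      apply Finset.prod_congr rfl; intros; ring
    have e2 : Real.Gamma (a+b+2+N+N) = (a+b+1+2*N) * Real.Gamma (a+b+1+N+N) := by
      rw [gamma_succ_A (s := a+b+1+N+N) (by positivity) (by ring)]; ring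
    rw [e1, e2]
    unfold pcA wcA tcA
    have h2 := Real.Gamma_pos_of_pos (show 0 < a+1 by positivity)
    have h3 := Real.Gamma_pos_of_pos (show 0 < a+b+1+N+N by positivity)
    have h4 := Real.Gamma_pos_of_pos (show 0 < b+1+N by positivity)
    have := h2.ne'
    have := h3.ne'
    have := h4.ne'
    have : (a+b+1+2*N) ≠ 0 := by positivity
    simp
    field_simp
  · intro k hk
    rw [Finset.mem_range] at hk
    rw [EB_const_mul, vB_eq a b ha hb, Finset.prod_eq_zero (i := N-1-k) (by simp; omega)]
    · simp
    · have : ((N-1-k:ℕ):ℝ) = N - 1 - k := by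
        rw [Nat.sub_sub, Nat.cast_sub (by omega)]; push_cast; ring
      rw [this]; ring

lemma jacobiP_eq (a b : ℝ) (ha : 0 < a) (hb : 0 < b) (N : ℕ) (θ : ℝ) :
    jacobiP a b N (Real.cos θ) = Real.Gamma (a+N+1) / Real.Gamma (a+b+N+1) * pNA a b N (Real.sin (θ/2) ^ 2) := by
  unfold jacobiP pNA
  rw [Finset.mul_sum]
  apply Finset.sum_congr rfl
  intro j _
  have : (Real.cos θ - 1)/2 = - Real.sin (θ/2) ^ 2 := by
    have := Real.cos_sq' (θ/2)
    have h := Real.cos_two_mul (θ/2)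
    rw [mul_div_cancel₀ _ two_ne_zero] at h
    rw [h, this]; ring
  rw [this, neg_pow]
  unfold pcA
  rw [show a + b + 1 + (N:ℝ) + j = a + b + N + j + 1 by ring, show a + 1 + (j:ℝ) = a + j + 1 by ring]
  ring

lemma trigP_mul (a b : ℝ) (ha : 0 < a) (hb : 0 < b) (N : ℕ) (θ φ : ℝ) :
    trigP a b N θ * trigP a b N φ = (a+b+1+2*N) / mom0B a b *
      qNA a b N ((Real.sin (θ/2) * Real.sin (φ/2))^2) ((Real.cos (θ/2) * Real.cos (φ/2))^2) := by
  set K := Real.Gamma (a+N+1) / Real.Gamma (a+b+N+1) with hK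
  have hKp : 0 < K := div_pos (Real.Gamma_pos_of_pos (by positivity)) (Real.Gamma_pos_of_pos (by positivity))
  set H := EB a b (fun x => pNA a b N x ^ 2) with hH
  have hI : ∫ θ, jacobiP a b N (Real.cos θ) ^ 2 ∂(jacobiMeasurePlus a b) = K^2 * H := by
    rw [jacobiPlus_integral, hH, ← EB_const_mul]
    unfold EB
    congr 1; ext θ
    rw [jacobiP_eq a b ha hb]; ring
  have hn := normB a b ha hb N
  rw [← hH] at hn
  have hp := pcA_zero_pos a b ha hb N
  have hm := mom0B_pos a b ha hb
  have hH0 : 0 ≤ H := by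
    rw [hH]; unfold EB
    apply intervalIntegral.integral_nonneg Real.pi_pos.le
    intro θ hθ
    have h1 := sin_half_nonneg_B hθ
    have h2 := cos_half_nonneg_B hθ
    positivity
  have hHne : H ≠ 0 := by
    intro h; rw [h] at hn; simp at hn; rcases hn with h | h <;> linarith
  have hHp : 0 < H := lt_of_le_of_ne hH0 (Ne.symm hHne)
  have hc : cJ a b N ^ 2 = (K^2*H)⁻¹ := by
    unfold cJ
    rw [hI, ← Real.rpow_mul_natCast (by positivity), ← Real.rpow_neg_one]
    congr 1; norm_num
  have hq := qNA_prod a b ha hb N (Real.sin (θ/2)^2) (Real.sin (φ/2)^2)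
  rw [← Real.cos_sq', ← Real.cos_sq', ← mul_pow, ← mul_pow] at hq
  unfold trigP
  rw [jacobiP_eq a b ha hb, jacobiP_eq a b ha hb, ← hK]
  have e : cJ a b N * (K * pNA a b N (Real.sin (θ/2)^2)) * (cJ a b N * (K * pNA a b N (Real.sin (φ/2)^2)))
    = (K^2*H)⁻¹ * K^2 * (pNA a b N (Real.sin (θ/2)^2) * pNA a b N (Real.sin (φ/2)^2)) := by
    rw [← hc]; ring
  have e' : (K^2*H)⁻¹ * K^2 = H⁻¹ := by field_simp
  rw [e, e', div_mul_eq_mul_div, eq_div_iff hm.ne', inv_mul_eq_div, div_mul_eq_mul_div, div_eq_iff hHne]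
  apply mul_left_cancel₀ (pow_pos hp 2).ne'
  linear_combination (-(pNA a b N (Real.sin (θ/2)^2) * pNA a b N (Real.sin (φ/2)^2))) * hn - (H * (a+b+1+2*N)) * hq

def muC (a : ℝ) : Measure ℝ :=
  (volume.restrict (Ioo (-1) 1)).withDensity fun u => ENNReal.ofReal ((1-u^2) ^ (a-1/2))

lemma wC_meas (a : ℝ) : Measurable fun u : ℝ => (1-u^2) ^ (a-1/2) := by fun_prop

lemma muC_ae (a : ℝ) : ∀ᵐ u ∂(muC a), u ∈ Ioo (-1:ℝ) 1 :=
  (withDensity_absolutelyContinuous _ _).ae_le (ae_restrict_mem measurableSet_Ioo)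

lemma one_sub_sq_pos_C {u : ℝ} (h : u ∈ Ioo (-1:ℝ) 1) : 0 < 1 - u^2 := by nlinarith [h.1, h.2]

lemma wC_bound (e u : ℝ) (h : u ∈ Ioo (-1:ℝ) 1) :
    (1-u^2)^e ≤ (1+2^e) * ((1-u)^e + (1+u)^e) := by
  have h1 : 0 < 1 - u := by linarith [h.2]
  have h2 : 0 < 1 + u := by linarith [h.1]
  have key : ∀ x : ℝ, 1 ≤ x → x ≤ 2 → x ^ e ≤ 1 + 2^e := by
    intro x hx hx2
    have := Real.rpow_pos_of_pos (show (0:ℝ) < 2 by norm_num) e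
    rcases le_total 0 e with he | he
    · have := Real.rpow_le_rpow (by linarith) hx2 he; linarith
    · have := Real.rpow_le_one_of_one_le_of_nonpos hx he; linarith
  have e1 : (1-u^2) = (1-u)*(1+u) := by ring
  have p1 := Real.rpow_pos_of_pos h1 e
  have p2 := Real.rpow_pos_of_pos h2 e
  have p3 := Real.rpow_pos_of_pos (show (0:ℝ) < 2 by norm_num) e
  rw [e1, Real.mul_rpow h1.le h2.le]
  rcases le_total 0 u with hu | hu
  · have := key (1+u) (by linarith) (by linarith [h.2])
    nlinarith [mul_le_mul_of_nonneg_left this p1.le, mul_pos p3 p2]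
  · have := key (1-u) (by linarith) (by linarith [h.1])
    nlinarith [mul_le_mul_of_nonneg_left this p2.le, mul_pos p3 p1]

lemma wC_int (a : ℝ) (ha : 0 < a) : IntegrableOn (fun u : ℝ => (1-u^2) ^ (a-1/2)) (Ioo (-1) 1) := by
  have i1 : IntervalIntegrable (fun u : ℝ => (1-u)^(a-1/2)) volume (-1) 1 := by
    have := (intervalIntegral.intervalIntegrable_rpow' (a := 2) (b := 0) (r := a-1/2) (by linarith)).comp_sub_left 1
    norm_num at this
    exact this
  have i2 : IntervalIntegrable (fun u : ℝ => (1+u)^(a-1/2)) volume (-1) 1 := by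
    have := (intervalIntegral.intervalIntegrable_rpow' (a := 0) (b := 2) (r := a-1/2) (by linarith)).comp_add_left 1
    norm_num at this
    exact this
  have i3 := ((i1.add i2).const_mul (1+2^(a-1/2)))
  rw [intervalIntegrable_iff_integrableOn_Ioo_of_le (by norm_num)] at i3
  refine Integrable.mono' i3 (wC_meas a).aestronglyMeasurable ?_
  filter_upwards [ae_restrict_mem measurableSet_Ioo] with u hu
  rw [Real.norm_of_nonneg (Real.rpow_nonneg (one_sub_sq_pos_C hu).le _)]
  exact wC_bound _ u hu

lemma muC_finite (a : ℝ) (ha : 0 < a) : IsFiniteMeasure (muC a) := by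
  unfold muC
  exact isFiniteMeasure_withDensity_ofReal (wC_int a ha).2

lemma muC_integral (a : ℝ) (g : ℝ → ℝ) : ∫ u, g u ∂(muC a) =
    ∫ u in (-1:ℝ)..1, (1-u^2)^(a-1/2) * g u := by
  unfold muC
  rw [integral_withDensity_eq_integral_toReal_smul (by fun_prop) (by simp),
    intervalIntegral.integral_of_le (by norm_num), integral_Ioc_eq_integral_Ioo]
  apply setIntegral_congr_fun measurableSet_Ioo
  intro u hu
  simp only [smul_eq_mul]
  rw [ENNReal.toReal_ofReal (Real.rpow_nonneg (one_sub_sq_pos_C hu).le _)]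

def mC (a : ℝ) (k : ℕ) : ℝ := ∫ u, u^k ∂(muC a)

lemma pow_integrable_C (a : ℝ) (ha : 0 < a) (k : ℕ) : Integrable (fun u => u^k) (muC a) := by
  haveI := muC_finite a ha
  refine Integrable.of_bound (by fun_prop) 1 ?_
  filter_upwards [muC_ae a] with u hu
  rw [norm_pow]
  apply pow_le_one₀ (norm_nonneg _)
  rw [Real.norm_eq_abs, abs_le]; exact ⟨hu.1.le, hu.2.le⟩

lemma mC_odd (a : ℝ) (k : ℕ) (hk : Odd k) : mC a k = 0 := by
  unfold mC
  rw [muC_integral]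
  have := intervalIntegral.integral_comp_neg (a := -1) (b := 1) (fun u : ℝ => (1-u^2)^(a-1/2) * u^k)
  simp only [neg_sq, hk.neg_pow, neg_neg, mul_neg, intervalIntegral.integral_neg] at this
  linarith

lemma mC_rec (a : ℝ) (ha : 0 < a) (m : ℕ) :
    (2*m+1) * mC a (2*m) = 2 * (a+1+m) * mC a (2*m+2) := by
  have hw : IntervalIntegrable (fun u : ℝ => (1-u^2)^(a-1/2)) volume (-1) 1 := by
    rw [intervalIntegrable_iff_integrableOn_Ioo_of_le (by norm_num)]; exact wC_int a ha
  have hi : ∀ k : ℕ, IntervalIntegrable (fun u : ℝ => (1-u^2)^(a-1/2) * u^k) volume (-1) 1 := by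
    intro k
    exact hw.mul_continuousOn (by fun_prop)
  have key : ∫ u in (-1:ℝ)..1, ((2*m+1) * ((1-u^2)^(a-1/2) * u^(2*m)) - 2*(a+1+m) * ((1-u^2)^(a-1/2) * u^(2*m+2)))
     = 1^(2*m+1) * (1-1^2:ℝ)^(a+1/2) - (-1)^(2*m+1) * (1-(-1)^2:ℝ)^(a+1/2) := by
    apply intervalIntegral.integral_eq_sub_of_hasDerivAt_of_le (f := fun u : ℝ => u^(2*m+1) * (1-u^2)^(a+1/2)) (by norm_num)
    · apply Continuous.continuousOn
      apply Continuous.mul (by fun_prop)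
      apply Continuous.rpow_const (by fun_prop)
      intro u; right; positivity
    · intro u hu
      have hp := one_sub_sq_pos_C hu
      have d1 : HasDerivAt (fun u : ℝ => 1-u^2) (-(2*u)) u := by
        simpa using (hasDerivAt_pow 2 u).const_sub 1
      have d2 := d1.rpow_const (p := a+1/2) (Or.inl hp.ne')
      have d3 := (hasDerivAt_pow (2*m+1) u).mul d2
      refine d3.congr_deriv ?_
      rw [show a+1/2 = (a-1/2) + 1 by ring, Real.rpow_add_one hp.ne']
      simp only [add_sub_cancel_right, Nat.add_sub_cancel]
      push_cast
      ring
    · exact ((hi _).const_mul _).sub ((hi _).const_mul _)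
  rw [intervalIntegral.integral_sub ((hi _).const_mul _) ((hi _).const_mul _),
    intervalIntegral.integral_const_mul, intervalIntegral.integral_const_mul] at key
  norm_num at key
  rw [Real.zero_rpow (by positivity)] at key
  unfold mC
  rw [muC_integral, muC_integral]
  linarith

def kapC (a : ℝ) : ℝ := mC a 0 * Real.Gamma (a+1)

lemma kapC_pos (a : ℝ) (ha : 0 < a) : 0 < kapC a := by
  have : 0 < mC a 0 := by
    unfold mC; rw [muC_integral]
    apply intervalIntegral.intervalIntegral_pos_of_pos_on
    · rw [intervalIntegrable_iff_integrableOn_Ioo_of_le (by norm_num)]; simpa using wC_int a ha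
    · intro u hu
      have := one_sub_sq_pos_C hu
      positivity
    · norm_num
  exact mul_pos this (Real.Gamma_pos_of_pos (by positivity))

lemma mC_even (a : ℝ) (ha : 0 < a) (m : ℕ) :
    mC a (2*m) = kapC a * (2*m).factorial / (4^m * m.factorial * Real.Gamma (a+1+m)) := by
  induction m with
  | zero =>
    have := Real.Gamma_pos_of_pos (show 0 < a+1 by positivity)
    simp [kapC]
    field_simp
  | succ m ih =>
    have h := mC_rec a ha m
    have h0 := Real.Gamma_pos_of_pos (show 0 < a+1+m by positivity)
    have e : Real.Gamma (a+1+(m+1:ℕ)) = (a+1+m) * Real.Gamma (a+1+m) := gamma_succ_A (by positivity) (by push_cast; ring)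
    rw [e, show 2*(m+1) = 2*m+1+1 by ring, Nat.factorial_succ, Nat.factorial_succ, Nat.factorial_succ]
    rw [show 2*m+1+1 = 2*m+2 by ring]
    have h1 : (a+1+(m:ℝ)) ≠ 0 := by positivity
    have h2 : ((m:ℝ)+1) ≠ 0 := by positivity
    rw [ih] at h
    rw [eq_div_iff (by positivity)]
    field_simp at h
    push_cast
    rw [pow_succ]
    linear_combination (-(2*(m:ℝ)+2)) * h

lemma sum_even_C (k : ℕ) (f : ℕ → ℕ → ℝ) (hf : ∀ i j, Odd i → f i j = 0) :
    ∑ ij ∈ Finset.HasAntidiagonal.antidiagonal (2*k), f ij.1 ij.2 =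
    ∑ ij ∈ Finset.HasAntidiagonal.antidiagonal k, f (2*ij.1) (2*ij.2) := by
  symm
  apply Finset.sum_of_injOn (fun ij : ℕ × ℕ => (2*ij.1, 2*ij.2))
  · rintro ⟨i,j⟩ _ ⟨i',j'⟩ _ h
    simp at h ⊢; exact h
  · rintro ⟨i,j⟩ h
    have h := Finset.HasAntidiagonal.mem_antidiagonal.1 (Finset.mem_coe.1 h)
    refine Finset.mem_coe.2 (Finset.HasAntidiagonal.mem_antidiagonal.2 ?_)
    simp at h ⊢; omega
  · rintro ⟨i,j⟩ h h'
    apply hf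
    rw [Finset.HasAntidiagonal.mem_antidiagonal] at h
    by_contra hne
    rw [Nat.not_odd_iff_even] at hne
    obtain ⟨i', hi'⟩ := hne
    apply h'
    refine ⟨(i', k-i'), ?_, ?_⟩
    · refine Finset.mem_coe.2 (Finset.HasAntidiagonal.mem_antidiagonal.2 ?_)
      simp at h ⊢; omega
    · simp at h ⊢; omega
  · intro i _; rfl

def piC (a b : ℝ) : Measure (ℝ × ℝ) := (muC a).prod (muC b)

lemma piC_ae (a b : ℝ) (ha : 0 < a) (hb : 0 < b) : ∀ᵐ q ∂(piC a b), q.1 ∈ Ioo (-1:ℝ) 1 ∧ q.2 ∈ Ioo (-1:ℝ) 1 := by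
  haveI := muC_finite a ha
  haveI := muC_finite b hb
  unfold piC
  exact (Measure.quasiMeasurePreserving_fst.ae (muC_ae a)).and (Measure.quasiMeasurePreserving_snd.ae (muC_ae b))

lemma piC_finite (a b : ℝ) (ha : 0 < a) (hb : 0 < b) : IsFiniteMeasure (piC a b) := by
  haveI := muC_finite a ha
  haveI := muC_finite b hb
  unfold piC; infer_instance

lemma wpow_C (a b : ℝ) (ha : 0 < a) (hb : 0 < b) (s c : ℝ) (n : ℕ) :
    ∫ q, (q.1*s+q.2*c)^n ∂(piC a b) = ∑ ij ∈ Finset.HasAntidiagonal.antidiagonal n,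
      (n.choose ij.1) * (s^ij.1 * c^ij.2) * (mC a ij.1 * mC b ij.2) := by
  haveI := muC_finite a ha
  haveI := muC_finite b hb
  have e : ∀ q : ℝ × ℝ, (q.1*s+q.2*c)^n = ∑ ij ∈ Finset.HasAntidiagonal.antidiagonal n,
      (n.choose ij.1) * (s^ij.1 * c^ij.2) * (q.1^ij.1 * q.2^ij.2) := by
    intro q
    rw [(Commute.all (q.1*s) (q.2*c)).add_pow']
    apply Finset.sum_congr rfl
    rintro ⟨i,j⟩ _
    simp only [nsmul_eq_mul, mul_pow]; ring
  simp only [e]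
  rw [integral_finsetSum]
  · apply Finset.sum_congr rfl
    rintro ⟨i,j⟩ _
    rw [integral_const_mul]
    congr 1
    unfold piC
    exact integral_prod_mul (fun u => u^i) (fun v => v^j)
  · rintro ⟨i,j⟩ _
    apply Integrable.const_mul
    exact (pow_integrable_C a ha i).mul_prod (pow_integrable_C b hb j)

lemma wpow_odd_C (a b : ℝ) (ha : 0 < a) (hb : 0 < b) (s c : ℝ) (n : ℕ) (hn : Odd n) :
    ∫ q, (q.1*s+q.2*c)^n ∂(piC a b) = 0 := by
  rw [wpow_C a b ha hb]
  apply Finset.sum_eq_zero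
  rintro ⟨i,j⟩ h
  rw [Finset.HasAntidiagonal.mem_antidiagonal] at h
  simp only at h ⊢
  rw [← h, Nat.odd_add] at hn
  rcases Nat.even_or_odd j with hj | hj
  · rw [mC_odd a i (hn.2 hj)]; simp
  · rw [mC_odd b j hj]; simp

lemma wpow_even_C (a b : ℝ) (ha : 0 < a) (hb : 0 < b) (s c : ℝ) (k : ℕ) :
    4^k * ∫ q, (q.1*s+q.2*c)^(2*k) ∂(piC a b) = kapC a * kapC b * (2*k).factorial * tauA a b (s^2) (c^2) k := by
  rw [wpow_C a b ha hb, sum_even_C k (fun i j => ((2*k).choose i) * (s^i * c^j) * (mC a i * mC b j))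
    (by intro i j h; rw [mC_odd a i h]; simp), tauA, Finset.mul_sum, Finset.mul_sum]
  apply Finset.sum_congr rfl
  rintro ⟨i,j⟩ h
  rw [Finset.HasAntidiagonal.mem_antidiagonal] at h
  simp only at h ⊢
  subst h
  rw [mC_even a ha, mC_even b hb, Nat.cast_choose ℝ (by omega), tcA]
  rw [show 2*(i+j)-2*i = 2*j by omega]
  have h2 := (Real.Gamma_pos_of_pos (show 0 < a+1+i by positivity)).ne'
  have h3 := (Real.Gamma_pos_of_pos (show 0 < b+1+j by positivity)).ne'
  have h4 : ((2*i).factorial:ℝ) ≠ 0 := by positivity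
  have h5 : ((2*j).factorial:ℝ) ≠ 0 := by positivity
  field_simp
  ring

lemma hasSum_congr_D {E : Type*} [NormedAddCommGroup E] {f g : ℕ → E} {x : E} (h : ∀ n, f n = g n) :
    HasSum f x ↔ HasSum g x := by
  rw [show f = g from funext h]

def bD (D : ℝ) (n : ℕ) : ℝ := Real.Gamma (D+n) / (Real.Gamma D * n.factorial)

lemma bD_pos (D : ℝ) (hD : 0 < D) (n : ℕ) : 0 < bD D n := by
  have h1 := Real.Gamma_pos_of_pos hD
  have h2 := Real.Gamma_pos_of_pos (show 0 < D+n by positivity)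
  unfold bD; positivity

lemma bD_asc (D : ℝ) (hD : 0 < D) (n : ℕ) : (ascPochhammer ℝ n).eval D * Real.Gamma D = Real.Gamma (D+n) := by
  induction n with
  | zero => simp
  | succ n ih =>
    have : Real.Gamma (D+(n+1:ℕ)) = (D+n) * Real.Gamma (D+n) := gamma_succ_A (by positivity) (by push_cast; ring)
    rw [this, ← ih, ascPochhammer_succ_eval]; ring

lemma bD_choose (D : ℝ) (hD : 0 < D) (n : ℕ) : Ring.choose (D+n-1) n = bD D n := by
  rw [← Ring.multichoose_eq]
  have h := Ring.factorial_nsmul_multichoose_eq_ascPochhammer D n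
  rw [Polynomial.ascPochhammer_smeval_cast, Polynomial.ascPochhammer_smeval_eq_eval, nsmul_eq_mul] at h
  have h1 := (Real.Gamma_pos_of_pos hD).ne'
  unfold bD
  rw [← bD_asc D hD, ← h]
  field_simp

lemma bD_hasSum_C (D : ℝ) (hD : 0 < D) (z : ℂ) (hz : ‖z‖ < 1) :
    HasSum (fun n => (bD D n : ℂ) * z^n) (1/(1-z)^(D:ℂ)) := by
  have h := (Complex.one_div_one_sub_cpow_hasFPowerSeriesOnBall_zero (D:ℂ)).hasSum (y := z) (by
    rw [Metric.mem_eball, edist_zero_right, enorm_eq_nnnorm]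
    exact_mod_cast hz)
  rw [zero_add] at h
  refine (hasSum_congr_D fun n => ?_).2 h
  have : Ring.choose ((D:ℂ)+n-1) n = bD D n := by
    rw [← bD_choose D hD, Complex.ofReal_choose]; push_cast; rfl
  simp [this]
  ring

lemma bD_hasSum (D : ℝ) (hD : 0 < D) (x : ℝ) (hx : |x| < 1) :
    HasSum (fun n => bD D n * x^n) ((1-x)^(-D)) := by
  have h := bD_hasSum_C D hD (x:ℂ) (by simpa using hx)
  have h1 : 0 ≤ 1 - x := by linarith [(abs_lt.1 hx).2]
  have e : 1/(1-(x:ℂ))^(D:ℂ) = (((1-x)^(-D):ℝ):ℂ) := by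
    rw [Complex.ofReal_cpow h1]; push_cast; rw [Complex.cpow_neg, one_div]
  rw [e] at h
  have := Complex.hasSum_re h
  simp only [Complex.ofReal_re] at this
  refine (hasSum_congr_D fun n => ?_).2 this
  rw [← Complex.ofReal_pow, ← Complex.ofReal_mul, Complex.ofReal_re]

/-- Gegenbauer polynomial coefficient -/
def xD (w : ℝ) : ℂ := ⟨w, √(1-w^2)⟩

def gegD (D : ℝ) (j : ℕ) (w : ℝ) : ℝ :=
  (∑ mn ∈ Finset.HasAntidiagonal.antidiagonal j, (bD D mn.1 : ℂ) * xD w ^ mn.1 * ((bD D mn.2 : ℂ) * (starRingEnd ℂ (xD w)) ^ mn.2)).re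

def gegB (D : ℝ) (j : ℕ) : ℝ := ∑ mn ∈ Finset.HasAntidiagonal.antidiagonal j, bD D mn.1 * bD D mn.2

lemma xD_norm (w : ℝ) (hw : |w| ≤ 1) : ‖xD w‖ = 1 := by
  have : 0 ≤ 1 - w^2 := by have := abs_le.1 hw; nlinarith
  rw [Complex.norm_def, Complex.normSq_apply]
  simp only [xD]
  rw [Real.mul_self_sqrt this]; simp; ring_nf

lemma gegD_le (D : ℝ) (hD : 0 < D) (j : ℕ) (w : ℝ) (hw : |w| ≤ 1) : |gegD D j w| ≤ gegB D j := by
  unfold gegD gegB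
  refine (Complex.abs_re_le_norm _).trans ((norm_sum_le _ _).trans (Finset.sum_le_sum ?_))
  intro mn _
  simp [xD_norm w hw, abs_of_pos (bD_pos D hD _)]

lemma gegD_cont (D : ℝ) (j : ℕ) : Continuous (gegD D j) := by
  have : Continuous xD := by
    have : xD = fun w : ℝ => (w:ℂ) + (√(1-w^2) : ℝ) * Complex.I := by
      ext w; rw [xD, Complex.mk_eq_add_mul_I]
    rw [this]; fun_prop
  unfold gegD
  have h2 := Complex.continuous_conj.comp this
  apply Complex.continuous_re.comp
  apply continuous_finsetSum
  intro i _
  exact (continuous_const.mul (this.pow _)).mul (continuous_const.mul (h2.pow _))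

lemma gegB_nonneg (D : ℝ) (hD : 0 < D) (j : ℕ) : 0 ≤ gegB D j :=
  Finset.sum_nonneg fun _ _ => (mul_pos (bD_pos D hD _) (bD_pos D hD _)).le

lemma gegB_summable (D : ℝ) (hD : 0 < D) (x : ℝ) (h0 : 0 ≤ x) (hx : x < 1) :
    Summable (fun j => gegB D j * x^j) := by
  have h := (bD_hasSum D hD x (by rwa [abs_of_nonneg h0])).summable.norm
  have := (summable_norm_sum_mul_antidiagonal_of_summable_norm h h).of_norm
  refine (summable_congr fun j => ?_).2 this
  unfold gegB
  rw [Finset.sum_mul]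
  apply Finset.sum_congr rfl
  rintro ⟨m,n⟩ h
  rw [Finset.HasAntidiagonal.mem_antidiagonal] at h
  simp only at h ⊢
  rw [← h, pow_add]; ring

lemma gegD_hasSum (D : ℝ) (hD : 0 < D) (w : ℝ) (hw : |w| ≤ 1) (x : ℝ) (hx : |x| < 1) :
    HasSum (fun j => gegD D j w * x^j) ((1-2*x*w+x^2)^(-D)) := by
  have hn : ‖(x:ℂ) * xD w‖ < 1 := by simpa [xD_norm w hw] using hx
  have h1 := bD_hasSum_C D hD ((x:ℂ) * xD w) hn
  have h2 := h1.map (starRingEnd ℂ) Complex.continuous_conj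
  simp only [Function.comp_def] at h2
  simp only [map_mul, map_pow, Complex.conj_ofReal] at h2
  have s1 := h1.summable.norm
  have s2 := h2.summable.norm
  have hs := (summable_norm_sum_mul_antidiagonal_of_summable_norm s1 s2).of_norm.hasSum
  rw [← tsum_mul_tsum_eq_tsum_sum_antidiagonal_of_summable_norm s1 s2, h1.tsum_eq, h2.tsum_eq] at hs
  have hs' := Complex.hasSum_re hs
  convert hs' using 1
  · ext j
    unfold gegD
    rw [← Complex.re_mul_ofReal, Finset.sum_mul]
    congr 1
    apply Finset.sum_congr rfl
    rintro ⟨m,n⟩ h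
    rw [Finset.HasAntidiagonal.mem_antidiagonal] at h
    simp only at h ⊢
    rw [← h]; push_cast; rw [pow_add]; ring
  · rw [Complex.mul_conj, Complex.ofReal_re, Complex.normSq_eq_norm_sq, norm_div, Complex.norm_cpow_real, norm_one, one_div, ← Real.rpow_neg (norm_nonneg _), ← Real.rpow_mul_natCast (norm_nonneg _), mul_comm (-D), Real.rpow_mul (norm_nonneg _)]
    congr 1
    have : 0 ≤ 1 - w^2 := by have := abs_le.1 hw; nlinarith
    rw [Nat.cast_ofNat, show (2:ℝ) = ((2:ℕ):ℝ) by norm_num, Real.rpow_natCast, ← Complex.normSq_eq_norm_sq, Complex.normSq_apply]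
    simp [xD]
    have := Real.mul_self_sqrt this
    linear_combination (-x^2) * this

lemma hasSum_val_D {f : ℕ → ℝ} {x y : ℝ} (h : HasSum f x) (e : x = y) : HasSum f y := e ▸ h

lemma wD_le {s c : ℝ} (h : |s|+|c| ≤ 1) {q : ℝ × ℝ} (hq : q.1 ∈ Ioo (-1:ℝ) 1 ∧ q.2 ∈ Ioo (-1:ℝ) 1) :
    |q.1*s+q.2*c| ≤ 1 := by
  have h1 : |q.1| ≤ 1 := abs_le.2 ⟨hq.1.1.le, hq.1.2.le⟩
  have h2 : |q.2| ≤ 1 := abs_le.2 ⟨hq.2.1.le, hq.2.2.le⟩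
  calc _ ≤ |q.1*s| + |q.2*c| := abs_add_le _ _
    _ = |q.1| * |s| + |q.2| * |c| := by rw [abs_mul, abs_mul]
    _ ≤ 1 * |s| + 1 * |c| := by gcongr
    _ ≤ 1 := by linarith

/-- termwise integration of a dominated series -/
lemma hasSum_int_D (a b : ℝ) (ha : 0 < a) (hb : 0 < b) (f : ℕ → ℝ × ℝ → ℝ) (B : ℕ → ℝ) (g : ℝ × ℝ → ℝ)
    (hf : ∀ j, Measurable (f j)) (hB : Summable B)
    (hfB : ∀ j, ∀ q : ℝ × ℝ, q.1 ∈ Ioo (-1:ℝ) 1 ∧ q.2 ∈ Ioo (-1:ℝ) 1 → |f j q| ≤ B j)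
    (hs : ∀ q : ℝ × ℝ, q.1 ∈ Ioo (-1:ℝ) 1 ∧ q.2 ∈ Ioo (-1:ℝ) 1 → HasSum (fun j => f j q) (g q)) :
    HasSum (fun j => ∫ q, f j q ∂(piC a b)) (∫ q, g q ∂(piC a b)) := by
  haveI := piC_finite a b ha hb
  have hae := piC_ae a b ha hb
  apply hasSum_integral_of_dominated_convergence (fun j _ => B j)
  · exact fun j => (hf j).aestronglyMeasurable
  · intro j; filter_upwards [hae] with q hq using hfB j q hq
  · exact Filter.Eventually.of_forall fun _ => hB
  · exact integrable_const _
  · filter_upwards [hae] with q hq using hs q hq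

lemma geg_int_D (a b : ℝ) (ha : 0 < a) (hb : 0 < b) (D : ℝ) (hD : 0 < D) (s c : ℝ) (h : |s|+|c| ≤ 1)
    (x : ℝ) (hx : |x| < 1) :
    HasSum (fun j => (∫ q, gegD D j (q.1*s+q.2*c) ∂(piC a b)) * x^j)
      (∫ q, (1-2*x*(q.1*s+q.2*c)+x^2)^(-D) ∂(piC a b)) := by
  have := hasSum_int_D a b ha hb (fun j q => gegD D j (q.1*s+q.2*c) * x^j) (fun j => gegB D j * |x|^j)
    (fun q => (1-2*x*(q.1*s+q.2*c)+x^2)^(-D)) ?_ (gegB_summable D hD _ (abs_nonneg _) hx) ?_ ?_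
  · simpa only [integral_mul_const] using this
  · intro j
    have := (gegD_cont D j).measurable
    apply Measurable.mul_const
    exact this.comp (by fun_prop)
  · intro j q hq
    rw [abs_mul, abs_pow]
    gcongr
    exact gegD_le D hD j _ (wD_le h hq)
  · intro q hq
    exact gegD_hasSum D hD _ (wD_le h hq) x hx

lemma hasSum_antidiag_D {F : ℕ × ℕ → ℝ} {T : ℝ} (h : HasSum F T) :
    HasSum (fun N => ∑ kl ∈ Finset.HasAntidiagonal.antidiagonal N, F kl) T := by
  have h1 := (Finset.HasAntidiagonal.sigmaAntidiagonalEquivProd (A := ℕ)).hasSum_iff.2 h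
  have h2 := h1.sigma (g := fun N => ∑ kl ∈ Finset.HasAntidiagonal.antidiagonal N, F kl) ?_
  · exact h2
  · intro N
    exact Finset.hasSum (Finset.HasAntidiagonal.antidiagonal N) F

lemma small_pw_D (D : ℝ) (hD : 0 < D) (w x : ℝ) (hw : |w| ≤ 1) (hx : |x| < 1) :
    HasSum (fun j => bD D j * (2*x)^j * (1+x^2)^(-(D+j)) * w^j) ((1-2*x*w+x^2)^(-D)) := by
  have hp : 0 < 1 + x^2 := by positivity
  have h2 : 2*|x| < 1 + x^2 := by
    have : 0 < (1-|x|)^2 := by have : 0 < 1 - |x| := by linarith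
                               positivity
    nlinarith [sq_abs x]
  have hy : |2*x*w/(1+x^2)| < 1 := by
    rw [abs_div, abs_of_pos hp, div_lt_one hp, abs_mul, abs_mul, abs_two]
    calc 2*|x| * |w| ≤ 2*|x| * 1 := by gcongr
      _ < _ := by linarith
  have h := (bD_hasSum D hD _ hy).mul_left ((1+x^2)^(-D))
  have h1 : 0 ≤ 1 - 2*x*w/(1+x^2) := by linarith [(abs_lt.1 hy).2]
  rw [← Real.mul_rpow hp.le h1] at h
  have e : (1+x^2)*(1 - 2*x*w/(1+x^2)) = 1-2*x*w+x^2 := by field_simp; ring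
  rw [e] at h
  refine (hasSum_congr_D fun j => ?_).2 h
  rw [neg_add, Real.rpow_add hp, Real.rpow_neg hp.le (j:ℝ), Real.rpow_natCast, div_pow, mul_pow]
  field_simp
  ring

lemma abs_wint_D (a b : ℝ) (ha : 0 < a) (hb : 0 < b) (s c : ℝ) (h : |s|+|c| ≤ 1) (k : ℕ) :
    |∫ q, (q.1*s+q.2*c)^k ∂(piC a b)| ≤ (piC a b).real univ := by
  haveI := piC_finite a b ha hb
  have : ∀ᵐ q ∂(piC a b), ‖(q.1*s+q.2*c)^k‖ ≤ 1 := by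
    filter_upwards [piC_ae a b ha hb] with q hq
    rw [norm_pow]
    exact pow_le_one₀ (norm_nonneg _) (wD_le h hq)
  simpa using norm_integral_le_of_norm_le_const this

def dD (a b S C : ℝ) (N : ℕ) : ℝ :=
  ∑ kl ∈ Finset.HasAntidiagonal.antidiagonal N, (-1)^kl.2 * Real.Gamma (a+b+2+2*kl.1+kl.2) / kl.2.factorial * tauA a b S C kl.1

lemma small_D (a b : ℝ) (ha : 0 < a) (hb : 0 < b) (s c : ℝ) (h : |s|+|c| ≤ 1)
    (x : ℝ) (hx : |x| < 1/4) :
    HasSum (fun N => kapC a * kapC b / Real.Gamma (a+b+2) * dD a b (s^2) (c^2) N * x^(2*N))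
      (∫ q, (1-2*x*(q.1*s+q.2*c)+x^2)^(-(a+b+2)) ∂(piC a b)) := by
  set D := a+b+2 with hDd
  have hD : 0 < D := by positivity
  have hG := (Real.Gamma_pos_of_pos hD)
  have hx1 : |x| < 1 := by linarith
  have hx2 : x^2 < 1/16 := by rw [← sq_abs]; nlinarith [abs_nonneg x]
  have hp : 0 < 1 + x^2 := by positivity
  set T := ∫ q, (1-2*x*(q.1*s+q.2*c)+x^2)^(-D) ∂(piC a b)
  set m := (piC a b).real univ
  have hm : 0 ≤ m := measureReal_nonneg
  -- step 1
  have s1 := hasSum_int_D a b ha hb (fun j q => bD D j * (2*x)^j * (1+x^2)^(-(D+j)) * (q.1*s+q.2*c)^j)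
    (fun j => bD D j * (2*|x|)^j) (fun q => (1-2*x*(q.1*s+q.2*c)+x^2)^(-D)) (by intro j; fun_prop)
    (bD_hasSum D hD (2*|x|) (by rw [abs_of_nonneg (by positivity)]; linarith)).summable
    (by
      intro j q hq
      have hb' := bD_pos D hD j
      have hw := wD_le h hq
      rw [abs_mul, abs_mul, abs_mul, abs_pow, abs_pow, abs_mul, abs_two, abs_of_pos hb']
      have e1 : |(1+x^2)^(-(D+(j:ℝ)))| ≤ 1 := by
        rw [abs_of_nonneg (by positivity)]
        apply Real.rpow_le_one_of_one_le_of_nonpos (by nlinarith)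
        have : 0 ≤ D + j := by positivity
        linarith
      have e2 : |q.1*s+q.2*c|^j ≤ 1 := pow_le_one₀ (abs_nonneg _) hw
      calc _ ≤ bD D j * (2*|x|)^j * 1 * 1 := by gcongr
        _ = _ := by ring)
    (fun q hq => small_pw_D D hD _ x (wD_le h hq) hx1)
  simp only [integral_const_mul] at s1
  have s2 : HasSum (fun k : ℕ => bD D (2*k) * (2*x)^(2*k) * (1+x^2)^(-(D+(2*k:ℕ))) * ∫ q, (q.1*s+q.2*c)^(2*k) ∂(piC a b)) T := by
    have hinj : Function.Injective (fun k : ℕ => 2*k) := fun i j hij => by simpa using hij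
    refine (hinj.hasSum_iff ?_).2 s1
    intro j hj
    have : Odd j := by
      by_contra hne
      rw [Nat.not_odd_iff_even] at hne
      obtain ⟨k, hk⟩ := hne
      exact hj ⟨k, by simp only; omega⟩
    rw [wpow_odd_C a b ha hb s c j this, mul_zero]
  set K := kapC a * kapC b / Real.Gamma D with hK
  have ek : ∀ k : ℕ, bD D (2*k) * (4^k * ∫ q, (q.1*s+q.2*c)^(2*k) ∂(piC a b)) = K * Real.Gamma (D+2*k) * tauA a b (s^2) (c^2) k := by
    intro k
    rw [wpow_even_C a b ha hb, bD, hK]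
    have := hG.ne'
    have : ((2*k).factorial:ℝ) ≠ 0 := by positivity
    field_simp
    push_cast; ring
  set F : ℕ × ℕ → ℝ := fun kl => K * ((-1)^kl.2 * Real.Gamma (D+2*kl.1+kl.2) / kl.2.factorial * tauA a b (s^2) (c^2) kl.1) * x^(2*(kl.1+kl.2)) with hF
  -- row identity
  have hrow0 : ∀ (k l : ℕ), F (k,l) = (bD D (2*k) * (4^k * ∫ q, (q.1*s+q.2*c)^(2*k) ∂(piC a b)) * x^(2*k)) * (bD (D+2*k) l * (-x^2)^l) := by
    intro k l
    rw [ek, hF]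
    simp only
    have := (Real.Gamma_pos_of_pos (show 0 < D+2*k by positivity)).ne'
    rw [bD, neg_pow (x^2), mul_add 2 k l, pow_add, pow_mul x 2 l]
    field_simp
  have hrow : ∀ k : ℕ, HasSum (fun l => F (k,l)) (bD D (2*k) * (2*x)^(2*k) * (1+x^2)^(-(D+(2*k:ℕ))) * ∫ q, (q.1*s+q.2*c)^(2*k) ∂(piC a b)) := by
    intro k
    have h1 := (bD_hasSum (D+2*k) (by positivity) (-x^2) (by rw [abs_neg, abs_of_nonneg (by positivity)]; linarith)).mul_left
      (bD D (2*k) * (4^k * ∫ q, (q.1*s+q.2*c)^(2*k) ∂(piC a b)) * x^(2*k))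
    refine (hasSum_congr_D fun l => hrow0 k l).2 ?_
    refine hasSum_val_D h1 ?_
    rw [mul_pow, pow_mul 2 2 k, sub_neg_eq_add]; norm_num; ring
  have hrown : ∀ k : ℕ, HasSum (fun l => ‖F (k,l)‖) (|bD D (2*k) * (4^k * ∫ q, (q.1*s+q.2*c)^(2*k) ∂(piC a b)) * x^(2*k)| * (1-x^2)^(-(D+2*k))) := by
    intro k
    have h1 := (bD_hasSum (D+2*k) (by positivity) (x^2) (by rw [abs_of_nonneg (by positivity)]; linarith)).mul_left
      (|bD D (2*k) * (4^k * ∫ q, (q.1*s+q.2*c)^(2*k) ∂(piC a b)) * x^(2*k)|)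
    refine (hasSum_congr_D fun l => ?_).2 h1
    rw [hrow0, norm_mul, Real.norm_eq_abs, Real.norm_eq_abs, abs_mul (bD (D+2*k) l), abs_pow, abs_neg, abs_of_pos (bD_pos (D+2*k) (by positivity) l),
      abs_of_nonneg (sq_nonneg x)]
  have hFs : Summable F := by
    apply Summable.of_norm
    rw [summable_prod_of_nonneg (fun _ => norm_nonneg _)]
    refine ⟨fun k => (hrown k).summable, ?_⟩
    simp only [fun k => (hrown k).tsum_eq]
    have hy : |2*|x|/(1-x^2)| < 1 := by
      rw [abs_of_nonneg (div_nonneg (by positivity) (by linarith)), div_lt_one (by linarith)]; linarith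
    have hb1 := (bD_hasSum D hD _ hy).summable.mul_left (m * (1-x^2)^(-D))
    have hinj : Function.Injective (fun k : ℕ => 2*k) := fun i j hij => by simpa using hij
    refine Summable.of_nonneg_of_le (fun k => ?_) (fun k => ?_) (hb1.comp_injective hinj)
    · have : 0 ≤ 1 - x^2 := by linarith
      positivity
    · have h1 : 0 < 1 - x^2 := by linarith
      simp only [Function.comp]
      have e := abs_wint_D a b ha hb s c h (2*k)
      have hb' := bD_pos D hD (2*k)
      rw [abs_mul, abs_mul, abs_mul, abs_of_pos hb', abs_of_pos (show (0:ℝ) < 4^k by positivity), abs_pow]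
      rw [neg_add, Real.rpow_add h1, Real.rpow_neg h1.le (2*(k:ℝ)), show (2*(k:ℝ)) = ((2*k:ℕ):ℝ) by push_cast; ring, Real.rpow_natCast, div_pow, mul_pow, pow_mul 2 2 k]
      norm_num
      have hh : bD D (2*k) * (4^k * |∫ q, (q.1*s+q.2*c)^(2*k) ∂(piC a b)|) * |x|^(2*k) * ((1-x^2)^(-D) * ((1-x^2)^(2*k))⁻¹)
        ≤ bD D (2*k) * (4^k * m) * |x|^(2*k) * ((1-x^2)^(-D) * ((1-x^2)^(2*k))⁻¹) := by
        gcongr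
      refine hh.trans (le_of_eq ?_)
      field_simp
  have hT : HasSum F T := by
    have h1 := hFs.hasSum
    have h2 := h1.prod_fiberwise hrow
    rw [h2.unique s2] at h1
    exact h1
  have := hasSum_antidiag_D hT
  refine (hasSum_congr_D fun N => ?_).2 this
  rw [dD, mul_assoc, Finset.sum_mul, Finset.mul_sum]
  apply Finset.sum_congr rfl
  rintro ⟨k,l⟩ hkl
  rw [Finset.HasAntidiagonal.mem_antidiagonal] at hkl
  simp only at hkl
  rw [hF, ← hkl]
  simp only
  ring

lemma uniq_D (f : ℝ → ℝ) (p q : ℕ → ℝ) (ε : ℝ) (hε : 0 < ε)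
    (hp : ∀ x, |x| < ε → HasSum (fun n => p n * x^n) (f x))
    (hq : ∀ x, |x| < ε → HasSum (fun n => q n * x^n) (f x)) : p = q := by
  have key : ∀ p : ℕ → ℝ, (∀ x, |x| < ε → HasSum (fun n => p n * x^n) (f x)) →
      HasFPowerSeriesAt f (FormalMultilinearSeries.ofScalars ℝ p) 0 := by
    intro p hp
    rw [hasFPowerSeriesAt_iff]
    filter_upwards [Metric.ball_mem_nhds (0:ℝ) hε] with x hx
    rw [zero_add]
    refine (hasSum_congr_D fun n => ?_).2 (hp x (by simpa using hx))
    simp [mul_comm]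
  have := (key p hp).eq_formalMultilinearSeries (key q hq)
  ext n
  have h2 := congrArg (fun P => FormalMultilinearSeries.coeff P n) this
  simpa using h2

lemma full_D (a b : ℝ) (ha : 0 < a) (hb : 0 < b) (s c : ℝ) (h : |s|+|c| ≤ 1)
    (x : ℝ) (hx : |x| < 1) :
    HasSum (fun N => kapC a * kapC b / Real.Gamma (a+b+2) * dD a b (s^2) (c^2) N * (x^2)^N)
      (∫ q, (1-2*x*(q.1*s+q.2*c)+x^2)^(-(a+b+2)) ∂(piC a b)) := by
  have hinj : Function.Injective (fun k : ℕ => 2*k) := fun i j hij => by simpa using hij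
  set g : ℕ → ℝ := fun N => kapC a * kapC b / Real.Gamma (a+b+2) * dD a b (s^2) (c^2) N
  set G : ℕ → ℝ := fun j => if Even j then g (j/2) else 0
  have hG0 : ∀ x : ℝ, ∀ j ∉ Set.range (fun k : ℕ => 2*k), G j * x^j = 0 := by
    intro x j hj
    have : ¬ Even j := by rintro ⟨k, hk⟩; exact hj ⟨k, by simp only; omega⟩
    simp [G, this]
  have hG1 : ∀ k, G (2*k) = g k := by intro k; simp [G]
  have e := uniq_D (fun x => ∫ q, (1-2*x*(q.1*s+q.2*c)+x^2)^(-(a+b+2)) ∂(piC a b))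
    (fun j => ∫ q, gegD (a+b+2) j (q.1*s+q.2*c) ∂(piC a b)) G (1/4) (by norm_num)
    (fun x hx => geg_int_D a b ha hb (a+b+2) (by positivity) s c h x (by linarith))
    (fun x hx => by
      refine (hinj.hasSum_iff (hG0 x)).1 ?_
      refine (hasSum_congr_D fun N => ?_).2 (small_D a b ha hb s c h x hx)
      simp only [Function.comp, hG1]; rfl)
  have h1 := geg_int_D a b ha hb (a+b+2) (by positivity) s c h x hx
  simp only [fun j => congrFun e j] at h1
  have h2 := (hinj.hasSum_iff (hG0 x)).2 h1
  refine (hasSum_congr_D fun N => ?_).2 h2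
  simp only [Function.comp, hG1, pow_mul]; rfl

lemma dD_range (a b S C : ℝ) (N : ℕ) : dD a b S C N = ∑ k ∈ Finset.range (N+1),
    (-1)^(N-k) * Real.Gamma (a+b+2+N+k) / (N-k).factorial * tauA a b S C k := by
  unfold dD
  rw [Finset.Nat.sum_antidiagonal_eq_sum_range_succ (fun k l => (-1)^l * Real.Gamma (a+b+2+2*k+l) / l.factorial * tauA a b S C k)]
  apply Finset.sum_congr rfl
  intro k hk
  have hk' : k ≤ N := by simpa [Nat.lt_succ_iff] using hk
  rw [Nat.cast_sub hk']
  congr 4; ring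

lemma dD_zero (a b S C : ℝ) (ha : 0 < a) (hb : 0 < b) : dD a b S C 0 = (a+b+1) * qNA a b 0 S C := by
  rw [dD_range]
  unfold qNA wcA
  simp
  rw [gamma_succ_A (s := a+b+1) (by positivity) (by ring)]; ring

lemma dD_succ (a b S C : ℝ) (ha : 0 < a) (hb : 0 < b) (N : ℕ) :
    dD a b S C (N+1) - dD a b S C N = (a+b+1+2*(N+1:ℕ)) * qNA a b (N+1) S C := by
  rw [dD_range, dD_range, qNA, Finset.sum_range_succ, Finset.sum_range_succ _ (N+1), mul_add, Finset.mul_sum, add_sub_right_comm, ← Finset.sum_sub_distrib]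
  congr 1
  · apply Finset.sum_congr rfl
    intro k hk
    have hk' : k ≤ N := by simpa [Nat.lt_succ_iff] using hk
    obtain ⟨l, rfl⟩ := Nat.exists_eq_add_of_le hk'
    have e1 : k+l+1-k = l+1 := by omega
    have e2 : k+l-k = l := by omega
    unfold wcA
    rw [e1, e2, Nat.factorial_succ]
    have g1 : Real.Gamma (a+b+2+(k+l+1:ℕ)+k) = (a+b+2+(k+l:ℕ)+k) * Real.Gamma (a+b+2+(k+l:ℕ)+k) :=
      gamma_succ_A (by positivity) (by push_cast; ring)
    have g2 : a+b+1+(k+l+1:ℕ)+k = a+b+2+(k+l:ℕ)+k := by push_cast; ring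
    rw [g1, g2, pow_succ]
    have : (l:ℝ)+1 ≠ 0 := by positivity
    have : (l.factorial:ℝ) ≠ 0 := by positivity
    push_cast
    field_simp
    ring
  · unfold wcA
    have g1 : Real.Gamma (a+b+2+(N+1:ℕ)+(N+1:ℕ)) = (a+b+1+2*(N+1:ℕ)) * Real.Gamma (a+b+1+(N+1:ℕ)+(N+1:ℕ)) := by
      rw [gamma_succ_A (s := a+b+1+(N+1:ℕ)+(N+1:ℕ)) (by positivity) (by push_cast; ring)]; ring
    rw [g1]; simp; ring

lemma qsum_D (a b S C : ℝ) (ha : 0 < a) (hb : 0 < b) (r T : ℝ) (h : HasSum (fun N => dD a b S C N * r^N) T) :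
    HasSum (fun N : ℕ => (a+b+1+2*(N:ℝ)) * qNA a b N S C * r^N) ((1-r)*T) := by
  have h1 : HasSum (fun N => dD a b S C (N+1) * r^(N+1)) (T - dD a b S C 0) := by
    have := (hasSum_nat_add_iff' (f := fun N => dD a b S C N * r^N) 1).2 h
    simpa using this
  have h2 := h1.sub (h.mul_left r)
  have h3 : HasSum (fun N => (a+b+1+2*((N+1:ℕ):ℝ)) * qNA a b (N+1) S C * r^(N+1)) (T - dD a b S C 0 - r*T) := by
    refine (hasSum_congr_D fun N => ?_).2 h2
    rw [← dD_succ a b S C ha hb]; ring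
  have h4 := (hasSum_nat_add_iff (f := fun N : ℕ => (a+b+1+2*(N:ℝ)) * qNA a b N S C * r^N) 1).1 h3
  refine hasSum_val_D h4 ?_
  rw [dD_zero a b S C ha hb]
  simp
  ring

def Psi (t w : ℝ) : ℝ := Real.cosh (t/2) - w

def sW (θ φ : ℝ) : ℝ := Real.sin (θ/2) * Real.sin (φ/2)
def cW (θ φ : ℝ) : ℝ := Real.cos (θ/2) * Real.cos (φ/2)

lemma sc_le (θ φ : ℝ) : |sW θ φ| + |cW θ φ| ≤ 1 := by
  unfold sW cW
  rw [abs_mul, abs_mul]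
  have h1 := Real.sin_sq_add_cos_sq (θ/2)
  have h2 := Real.sin_sq_add_cos_sq (φ/2)
  rw [← sq_abs, ← sq_abs (Real.cos _)] at h1 h2
  nlinarith [sq_nonneg (|Real.sin (θ/2)| - |Real.sin (φ/2)|), sq_nonneg (|Real.cos (θ/2)| - |Real.cos (φ/2)|)]

def constD (a b : ℝ) : ℝ := Real.Gamma (a+b+2) * 2^(-(a+b+1)) / (2 * mom0B a b * (kapC a * kapC b))

lemma kernel_D (a b : ℝ) (ha : 0 < a) (hb : 0 < b) (t : ℝ) (ht : 0 < t) (θ φ : ℝ) :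
    jHker a b t θ φ = constD a b * ∫ q, Real.sinh (t/2) * (Psi t (q.1 * sW θ φ + q.2 * cW θ φ))^(-(a+b+2)) ∂(piC a b) := by
  set ρ := Real.exp (-(t/2)) with hρ
  have hρ0 : 0 < ρ := Real.exp_pos _
  have hρ1 : ρ < 1 := by rw [hρ, Real.exp_lt_one_iff]; linarith
  have h := full_D a b ha hb (sW θ φ) (cW θ φ) (sc_le θ φ) ρ (by rwa [abs_of_pos hρ0])
  set T := ∫ q, (1-2*ρ*(q.1*sW θ φ+q.2*cW θ φ)+ρ^2)^(-(a+b+2)) ∂(piC a b) with hT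
  have hk1 := kapC_pos a ha
  have hk2 := kapC_pos b hb
  have hG := Real.Gamma_pos_of_pos (show 0 < a+b+2 by positivity)
  have hM := mom0B_pos a b ha hb
  have h' : HasSum (fun N => dD a b (sW θ φ ^2) (cW θ φ ^2) N * (ρ^2)^N) (Real.Gamma (a+b+2) / (kapC a * kapC b) * T) := by
    refine (hasSum_congr_D fun N => ?_).2 (h.mul_left (Real.Gamma (a+b+2) / (kapC a * kapC b)))
    field_simp
  have h2 := (qsum_D a b _ _ ha hb _ _ h').mul_left (ρ^(a+b+1) / mom0B a b)
  have h3 : ∀ N : ℕ, Real.exp (-t * Real.sqrt (jLam a b N)) * trigP a b N θ * trigP a b N φ =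
     ρ^(a+b+1) / mom0B a b * ((a+b+1+2*(N:ℝ)) * qNA a b N (sW θ φ ^2) (cW θ φ ^2) * (ρ^2)^N) := by
    intro N
    rw [mul_assoc, trigP_mul a b ha hb, jLam, Real.sqrt_sq (by positivity)]
    have : Real.exp (-t * (N + (a+b+1)/2)) = ρ^(a+b+1) * (ρ^2)^N := by
      rw [hρ, ← Real.exp_mul, ← pow_mul, ← Real.exp_nat_mul, ← Real.exp_add]
      congr 1; push_cast; ring
    rw [this]
    unfold sW cW
    ring
  have h4 : jHker a b t θ φ = (1/2) * (ρ^(a+b+1) / mom0B a b * ((1-ρ^2) * (Real.Gamma (a+b+2) / (kapC a * kapC b) * T))) := by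
    unfold jHker
    rw [← h2.tsum_eq]
    congr 1
    exact tsum_congr h3
  have h5 : T = (2*ρ)^(-(a+b+2)) * ∫ q, (Psi t (q.1 * sW θ φ + q.2 * cW θ φ))^(-(a+b+2)) ∂(piC a b) := by
    rw [hT, ← integral_const_mul]
    apply integral_congr_ae
    filter_upwards [piC_ae a b ha hb] with q hq
    have hw := wD_le (sc_le θ φ) hq
    have hP : 0 ≤ Psi t (q.1 * sW θ φ + q.2 * cW θ φ) := by
      unfold Psi; have := Real.one_le_cosh (t/2); linarith [(abs_le.1 hw).2]
    rw [← Real.mul_rpow (by positivity) hP]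
    congr 1
    unfold Psi
    have : Real.exp (t/2) * ρ = 1 := by rw [hρ, ← Real.exp_add]; simp
    rw [Real.cosh_eq, ← hρ]
    linear_combination (-1) * this
  rw [integral_const_mul, h4, h5]
  have h6 : 1 - ρ^2 = 2*ρ*Real.sinh (t/2) := by
    have : Real.exp (t/2) * ρ = 1 := by rw [hρ, ← Real.exp_add]; simp
    rw [Real.sinh_eq, ← hρ]; linear_combination (-1)*this
  have h7 : (2*ρ)^(-(a+b+2)) = 2^(-(a+b+1)) * (ρ^(a+b+1))⁻¹ * (2*ρ)⁻¹ := by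
    rw [show -(a+b+2) = -(a+b+1) + -1 by ring, Real.rpow_add (by positivity), Real.rpow_neg_one, Real.mul_rpow (by norm_num) hρ0.le, Real.rpow_neg hρ0.le]
  rw [h6, h7, constD]
  have : ρ^(a+b+1) ≠ 0 := (Real.rpow_pos_of_pos hρ0 _).ne'
  generalize (∫ q, (Psi t (q.1 * sW θ φ + q.2 * cW θ φ))^(-(a+b+2)) ∂(piC a b)) = I
  field_simp

def wE (θ φ : ℝ) (q : ℝ × ℝ) : ℝ := q.1 * sW θ φ + q.2 * cW θ φ
def w1E (θ φ : ℝ) (q : ℝ × ℝ) : ℝ := (q.1 * (Real.cos (θ/2) * Real.sin (φ/2)) - q.2 * (Real.sin (θ/2) * Real.cos (φ/2)))/2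
def w2E (θ φ : ℝ) (q : ℝ × ℝ) : ℝ := (q.1 * (Real.sin (θ/2) * Real.cos (φ/2)) - q.2 * (Real.cos (θ/2) * Real.sin (φ/2)))/2
def zE (θ φ : ℝ) (q : ℝ × ℝ) : ℝ := (q.1 * (Real.cos (θ/2) * Real.cos (φ/2)) + q.2 * (Real.sin (θ/2) * Real.sin (φ/2)))/4

inductive Good : ℝ → ℝ → (ℝ → ℝ → ℝ → ℝ × ℝ → ℝ) → Prop
  | const (c : ℝ) : Good 0 0 (fun _ _ _ _ => c)
  | ch : Good 0 1 (fun t _ _ _ => Real.cosh (t/2))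
  | sh : Good (-1) 1 (fun t _ _ _ => Real.sinh (t/2))
  | w : Good 0 0 (fun _ θ φ q => wE θ φ q)
  | z : Good 0 0 (fun _ θ φ q => zE θ φ q)
  | w1 : Good (-1) 0 (fun _ θ φ q => w1E θ φ q)
  | w2 : Good (-1) 0 (fun _ θ φ q => w2E θ φ q)
  | psi (ν : ℝ) : Good (2*ν) (-ν) (fun t θ φ q => (Psi t (wE θ φ q))^(-ν))
  | add {κ d : ℝ} {F G : ℝ → ℝ → ℝ → ℝ × ℝ → ℝ} (hF : Good κ d F) (hG : Good κ d G) :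
      Good κ d (fun t θ φ q => F t θ φ q + G t θ φ q)
  | mul {κ d κ' d' : ℝ} {F G : ℝ → ℝ → ℝ → ℝ × ℝ → ℝ} (hF : Good κ d F) (hG : Good κ' d' G) :
      Good (κ+κ') (d+d') (fun t θ φ q => F t θ φ q * G t θ φ q)
  | weak {κ d κ' d' : ℝ} {F : ℝ → ℝ → ℝ → ℝ × ℝ → ℝ} (h1 : κ ≤ κ') (h2 : d ≤ d') (hF : Good κ d F) : Good κ' d' F

def boxE (q : ℝ × ℝ) : Prop := q.1 ∈ Ioo (-1:ℝ) 1 ∧ q.2 ∈ Ioo (-1:ℝ) 1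

lemma wE_le (θ φ : ℝ) (q : ℝ × ℝ) (hq : boxE q) : |wE θ φ q| ≤ 1 := wD_le (sc_le θ φ) hq

lemma psi_low (t θ φ : ℝ) (q : ℝ × ℝ) (hq : boxE q) : Real.cosh (t/2) - 1 ≤ Psi t (wE θ φ q) := by
  unfold Psi; linarith [(abs_le.1 (wE_le θ φ q hq)).2]
lemma psi_high (t θ φ : ℝ) (q : ℝ × ℝ) (hq : boxE q) : Psi t (wE θ φ q) ≤ Real.cosh (t/2) + 1 := by
  unfold Psi; linarith [(abs_le.1 (wE_le θ φ q hq)).1]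
lemma psi_pos (t θ φ : ℝ) (ht : 0 < t) (q : ℝ × ℝ) (hq : boxE q) : 0 < Psi t (wE θ φ q) := by
  have : 1 < Real.cosh (t/2) := Real.one_lt_cosh.2 (by positivity)
  linarith [psi_low t θ φ q hq]

lemma hasDeriv_psi (ν : ℝ) {f : ℝ → ℝ} {f' x : ℝ} (hf : HasDerivAt f f' x) (h : 0 < f x) :
    HasDerivAt (fun y => f y ^ (-ν)) ((-ν) * f' * f x ^ (-(ν+1))) x := by
  have := hf.rpow_const (p := -ν) (Or.inl h.ne')
  refine this.congr_deriv ?_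
  rw [show -ν - 1 = -(ν+1) by ring]; ring

lemma good_t {κ d : ℝ} {F : ℝ → ℝ → ℝ → ℝ × ℝ → ℝ} (h : Good κ d F) :
    ∃ F', Good (κ+1) d F' ∧ ∀ t θ φ q, 0 < t → boxE q → HasDerivAt (fun s => F s θ φ q) (F' t θ φ q) t := by
  have hh : ∀ t : ℝ, HasDerivAt (fun s : ℝ => s/2) (1/2) t := fun t => (hasDerivAt_id t).div_const 2
  induction h with
  | const c => exact ⟨_, (Good.const 0).weak (by norm_num) le_rfl, fun t θ φ q _ _ => hasDerivAt_const _ _⟩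
  | ch =>
    refine ⟨_, ((Good.const (1/2)).mul Good.sh).weak (by norm_num) (by norm_num), fun t θ φ q _ _ => ?_⟩
    refine (hh t).cosh.congr_deriv ?_; ring
  | sh =>
    refine ⟨_, ((Good.const (1/2)).mul Good.ch).weak (by norm_num) (by norm_num), fun t θ φ q _ _ => ?_⟩
    refine (hh t).sinh.congr_deriv ?_; ring
  | w => exact ⟨_, (Good.const 0).weak (by norm_num) le_rfl, fun t θ φ q _ _ => hasDerivAt_const _ _⟩
  | z => exact ⟨_, (Good.const 0).weak (by norm_num) le_rfl, fun t θ φ q _ _ => hasDerivAt_const _ _⟩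
  | w1 => exact ⟨_, (Good.const 0).weak (by norm_num) le_rfl, fun t θ φ q _ _ => hasDerivAt_const _ _⟩
  | w2 => exact ⟨_, (Good.const 0).weak (by norm_num) le_rfl, fun t θ φ q _ _ => hasDerivAt_const _ _⟩
  | psi ν =>
    refine ⟨_, (((Good.const (-ν/2)).mul Good.sh).mul (Good.psi (ν+1))).weak (by linarith) (by linarith), fun t θ φ q ht hq => ?_⟩
    have h1 : HasDerivAt (fun s => Psi s (wE θ φ q)) (Real.sinh (t/2) * (1/2)) t := (hh t).cosh.sub_const _
    refine (hasDeriv_psi ν h1 (psi_pos t θ φ ht q hq)).congr_deriv ?_; ring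
  | add hF hG ihF ihG =>
    obtain ⟨F', hF', dF⟩ := ihF
    obtain ⟨G', hG', dG⟩ := ihG
    exact ⟨_, hF'.add hG', fun t θ φ q ht hq => (dF t θ φ q ht hq).add (dG t θ φ q ht hq)⟩
  | mul hF hG ihF ihG =>
    obtain ⟨F', hF', dF⟩ := ihF
    obtain ⟨G', hG', dG⟩ := ihG
    exact ⟨_, ((hF'.mul hG).weak (by linarith) le_rfl).add ((hF.mul hG').weak (by linarith) le_rfl), fun t θ φ q ht hq => (dF t θ φ q ht hq).mul (dG t θ φ q ht hq)⟩
  | weak h1 h2 hF ih =>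
    obtain ⟨F', hF', dF⟩ := ih
    exact ⟨F', hF'.weak (by linarith) h2, dF⟩

lemma dsinE (x : ℝ) : HasDerivAt (fun s : ℝ => Real.sin (s/2)) (Real.cos (x/2) * (1/2)) x := ((hasDerivAt_id x).div_const 2).sin
lemma dcosE (x : ℝ) : HasDerivAt (fun s : ℝ => Real.cos (s/2)) (-Real.sin (x/2) * (1/2)) x := ((hasDerivAt_id x).div_const 2).cos

lemma dw_1 (θ φ : ℝ) (q : ℝ × ℝ) : HasDerivAt (fun s => wE s φ q) (w1E θ φ q) θ := by
  have := (((dsinE θ).mul_const (Real.sin (φ/2))).const_mul q.1).add (((dcosE θ).mul_const (Real.cos (φ/2))).const_mul q.2)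
  refine this.congr_deriv ?_; unfold w1E; ring
lemma dw_2 (θ φ : ℝ) (q : ℝ × ℝ) : HasDerivAt (fun s => wE θ s q) (w2E θ φ q) φ := by
  have := (((dsinE φ).const_mul (Real.sin (θ/2))).const_mul q.1).add (((dcosE φ).const_mul (Real.cos (θ/2))).const_mul q.2)
  refine this.congr_deriv ?_; unfold w2E; ring
lemma dw1_1 (θ φ : ℝ) (q : ℝ × ℝ) : HasDerivAt (fun s => w1E s φ q) (-1/4 * wE θ φ q) θ := by
  have := ((((dcosE θ).mul_const (Real.sin (φ/2))).const_mul q.1).sub (((dsinE θ).mul_const (Real.cos (φ/2))).const_mul q.2)).div_const 2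
  refine this.congr_deriv ?_; unfold wE sW cW; ring
lemma dw1_2 (θ φ : ℝ) (q : ℝ × ℝ) : HasDerivAt (fun s => w1E θ s q) (zE θ φ q) φ := by
  have := ((((dsinE φ).const_mul (Real.cos (θ/2))).const_mul q.1).sub (((dcosE φ).const_mul (Real.sin (θ/2))).const_mul q.2)).div_const 2
  refine this.congr_deriv ?_; unfold zE; ring
lemma dw2_2 (θ φ : ℝ) (q : ℝ × ℝ) : HasDerivAt (fun s => w2E θ s q) (-1/4 * wE θ φ q) φ := by
  have := ((((dcosE φ).const_mul (Real.sin (θ/2))).const_mul q.1).sub (((dsinE φ).const_mul (Real.cos (θ/2))).const_mul q.2)).div_const 2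
  refine this.congr_deriv ?_; unfold wE sW cW; ring
lemma dw2_1 (θ φ : ℝ) (q : ℝ × ℝ) : HasDerivAt (fun s => w2E s φ q) (zE θ φ q) θ := by
  have := ((((dsinE θ).mul_const (Real.cos (φ/2))).const_mul q.1).sub (((dcosE θ).mul_const (Real.sin (φ/2))).const_mul q.2)).div_const 2
  refine this.congr_deriv ?_; unfold zE; ring
lemma dz_1 (θ φ : ℝ) (q : ℝ × ℝ) : HasDerivAt (fun s => zE s φ q) (-1/4 * w2E θ φ q) θ := by
  have := ((((dcosE θ).mul_const (Real.cos (φ/2))).const_mul q.1).add (((dsinE θ).mul_const (Real.sin (φ/2))).const_mul q.2)).div_const 4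
  refine this.congr_deriv ?_; unfold w2E; ring
lemma dz_2 (θ φ : ℝ) (q : ℝ × ℝ) : HasDerivAt (fun s => zE θ s q) (-1/4 * w1E θ φ q) φ := by
  have := ((((dcosE φ).const_mul (Real.cos (θ/2))).const_mul q.1).add (((dsinE φ).const_mul (Real.sin (θ/2))).const_mul q.2)).div_const 4
  refine this.congr_deriv ?_; unfold w1E; ring

lemma good_θ {κ d : ℝ} {F : ℝ → ℝ → ℝ → ℝ × ℝ → ℝ} (h : Good κ d F) :
    ∃ F', Good (κ+1) d F' ∧ ∀ t θ φ q, 0 < t → boxE q → HasDerivAt (fun s => F t s φ q) (F' t θ φ q) θ := by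
  induction h with
  | const c => exact ⟨_, (Good.const 0).weak (by norm_num) le_rfl, fun t θ φ q _ _ => hasDerivAt_const _ _⟩
  | ch => exact ⟨_, (Good.const 0).weak (by norm_num) (by norm_num), fun t θ φ q _ _ => hasDerivAt_const _ _⟩
  | sh => exact ⟨_, (Good.const 0).weak (by norm_num) (by norm_num), fun t θ φ q _ _ => hasDerivAt_const _ _⟩
  | w => exact ⟨_, Good.w1.weak (by norm_num) le_rfl, fun t θ φ q _ _ => dw_1 θ φ q⟩
  | z => exact ⟨_, ((Good.const (-1/4)).mul Good.w2).weak (by norm_num) (by norm_num), fun t θ φ q _ _ => dz_1 θ φ q⟩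
  | w1 => exact ⟨_, ((Good.const (-1/4)).mul Good.w).weak (by norm_num) (by norm_num), fun t θ φ q _ _ => dw1_1 θ φ q⟩
  | w2 => exact ⟨_, Good.z.weak (by norm_num) (by norm_num), fun t θ φ q _ _ => dw2_1 θ φ q⟩
  | psi ν =>
    refine ⟨_, (((Good.const ν).mul Good.w1).mul (Good.psi (ν+1))).weak (by linarith) (by linarith), fun t θ φ q ht hq => ?_⟩
    have h1 : HasDerivAt (fun s => Psi t (wE s φ q)) (-(w1E θ φ q)) θ := (dw_1 θ φ q).const_sub _
    refine (hasDeriv_psi ν h1 (psi_pos t θ φ ht q hq)).congr_deriv ?_; ring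
  | add hF hG ihF ihG =>
    obtain ⟨F', hF', dF⟩ := ihF
    obtain ⟨G', hG', dG⟩ := ihG
    exact ⟨_, hF'.add hG', fun t θ φ q ht hq => (dF t θ φ q ht hq).add (dG t θ φ q ht hq)⟩
  | mul hF hG ihF ihG =>
    obtain ⟨F', hF', dF⟩ := ihF
    obtain ⟨G', hG', dG⟩ := ihG
    exact ⟨_, ((hF'.mul hG).weak (by linarith) le_rfl).add ((hF.mul hG').weak (by linarith) le_rfl), fun t θ φ q ht hq => (dF t θ φ q ht hq).mul (dG t θ φ q ht hq)⟩
  | weak h1 h2 hF ih =>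
    obtain ⟨F', hF', dF⟩ := ih
    exact ⟨F', hF'.weak (by linarith) h2, dF⟩

lemma good_φ {κ d : ℝ} {F : ℝ → ℝ → ℝ → ℝ × ℝ → ℝ} (h : Good κ d F) :
    ∃ F', Good (κ+1) d F' ∧ ∀ t θ φ q, 0 < t → boxE q → HasDerivAt (fun s => F t θ s q) (F' t θ φ q) φ := by
  induction h with
  | const c => exact ⟨_, (Good.const 0).weak (by norm_num) le_rfl, fun t θ φ q _ _ => hasDerivAt_const _ _⟩
  | ch => exact ⟨_, (Good.const 0).weak (by norm_num) (by norm_num), fun t θ φ q _ _ => hasDerivAt_const _ _⟩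
  | sh => exact ⟨_, (Good.const 0).weak (by norm_num) (by norm_num), fun t θ φ q _ _ => hasDerivAt_const _ _⟩
  | w => exact ⟨_, Good.w2.weak (by norm_num) le_rfl, fun t θ φ q _ _ => dw_2 θ φ q⟩
  | z => exact ⟨_, ((Good.const (-1/4)).mul Good.w1).weak (by norm_num) (by norm_num), fun t θ φ q _ _ => dz_2 θ φ q⟩
  | w2 => exact ⟨_, ((Good.const (-1/4)).mul Good.w).weak (by norm_num) (by norm_num), fun t θ φ q _ _ => dw2_2 θ φ q⟩
  | w1 => exact ⟨_, Good.z.weak (by norm_num) (by norm_num), fun t θ φ q _ _ => dw1_2 θ φ q⟩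
  | psi ν =>
    refine ⟨_, (((Good.const ν).mul Good.w2).mul (Good.psi (ν+1))).weak (by linarith) (by linarith), fun t θ φ q ht hq => ?_⟩
    have h1 : HasDerivAt (fun s => Psi t (wE θ s q)) (-(w2E θ φ q)) φ := (dw_2 θ φ q).const_sub _
    refine (hasDeriv_psi ν h1 (psi_pos t θ φ ht q hq)).congr_deriv ?_; ring
  | add hF hG ihF ihG =>
    obtain ⟨F', hF', dF⟩ := ihF
    obtain ⟨G', hG', dG⟩ := ihG
    exact ⟨_, hF'.add hG', fun t θ φ q ht hq => (dF t θ φ q ht hq).add (dG t θ φ q ht hq)⟩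
  | mul hF hG ihF ihG =>
    obtain ⟨F', hF', dF⟩ := ihF
    obtain ⟨G', hG', dG⟩ := ihG
    exact ⟨_, ((hF'.mul hG).weak (by linarith) le_rfl).add ((hF.mul hG').weak (by linarith) le_rfl), fun t θ φ q ht hq => (dF t θ φ q ht hq).mul (dG t θ φ q ht hq)⟩
  | weak h1 h2 hF ih =>
    obtain ⟨F', hF', dF⟩ := ih
    exact ⟨F', hF'.weak (by linarith) h2, dF⟩

lemma good_meas {κ d : ℝ} {F : ℝ → ℝ → ℝ → ℝ × ℝ → ℝ} (h : Good κ d F) (t θ φ : ℝ) : Measurable (fun q => F t θ φ q) := by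
  induction h with
  | const c => exact measurable_const
  | ch => exact measurable_const
  | sh => exact measurable_const
  | w => unfold wE; fun_prop
  | z => unfold zE; fun_prop
  | w1 => unfold w1E; fun_prop
  | w2 => unfold w2E; fun_prop
  | psi ν => unfold Psi wE; fun_prop
  | add hF hG ihF ihG => exact ihF.add ihG
  | mul hF hG ihF ihG => exact ihF.mul ihG
  | weak h1 h2 hF ih => exact ih


lemma abs_cosh_E (x : ℝ) : |Real.cosh x| = Real.cosh x := abs_of_pos (Real.cosh_pos x)

lemma rpow_two_E {l x h : ℝ} (p : ℝ) (hl : 0 < l) (h1 : l ≤ x) (h2 : x ≤ h) : x^p ≤ l^p + h^p := by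
  have hx : 0 < x := hl.trans_le h1
  have a1 : 0 < l^p := Real.rpow_pos_of_pos hl _
  have a2 : 0 < h^p := Real.rpow_pos_of_pos (hx.trans_le h2) _
  rcases le_total 0 p with hp | hp
  · linarith [Real.rpow_le_rpow hx.le h2 hp]
  · linarith [Real.rpow_le_rpow_of_nonpos hl h1 hp]

lemma w1_sq (θ φ : ℝ) (q : ℝ × ℝ) (hq : boxE q) : (w1E θ φ q)^2 ≤ 1 - wE θ φ q := by
  have hw := abs_le.1 (wE_le θ φ q hq)
  have e : (wE θ φ q)^2 + 4 * (w1E θ φ q)^2 = q.1^2 * Real.sin (φ/2)^2 + q.2^2 * Real.cos (φ/2)^2 := by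
    unfold wE w1E sW cW
    linear_combination (q.1^2 * Real.sin (φ/2)^2 + q.2^2 * Real.cos (φ/2)^2) * Real.sin_sq_add_cos_sq (θ/2)
  have h1 : q.1^2 ≤ 1 := by nlinarith [hq.1.1, hq.1.2]
  have h2 : q.2^2 ≤ 1 := by nlinarith [hq.2.1, hq.2.2]
  have := Real.sin_sq_add_cos_sq (φ/2)
  nlinarith [sq_nonneg (Real.sin (φ/2)), sq_nonneg (Real.cos (φ/2))]

lemma w2_sq (θ φ : ℝ) (q : ℝ × ℝ) (hq : boxE q) : (w2E θ φ q)^2 ≤ 1 - wE θ φ q := by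
  have := w1_sq φ θ q hq
  have e1 : w2E θ φ q = w1E φ θ q := by unfold w1E w2E; ring
  have e2 : wE θ φ q = wE φ θ q := by unfold wE sW cW; ring
  rwa [e1, e2]

lemma z_abs (θ φ : ℝ) (q : ℝ × ℝ) (hq : boxE q) : |zE θ φ q| ≤ 1 := by
  have h : ∀ u X Y : ℝ, u ∈ Ioo (-1:ℝ) 1 → |X| ≤ 1 → |Y| ≤ 1 → |u * (X * Y)| ≤ 1 := by
    intro u X Y hu hX hY
    rw [abs_mul, abs_mul]
    have h1 : |u| ≤ 1 := abs_le.2 ⟨hu.1.le, hu.2.le⟩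
    exact mul_le_one₀ h1 (by positivity) (mul_le_one₀ hX (by positivity) hY)
  have h1 := abs_le.1 (h q.1 _ _ hq.1 (Real.abs_cos_le_one (θ/2)) (Real.abs_cos_le_one (φ/2)))
  have h2 := abs_le.1 (h q.2 _ _ hq.2 (Real.abs_sin_le_one (θ/2)) (Real.abs_sin_le_one (φ/2)))
  unfold zE
  rw [abs_le]; constructor <;> linarith [h1.1, h1.2, h2.1, h2.2]

lemma cosh_le3 (t : ℝ) (h0 : 0 < t) (h1 : t ≤ 1) : Real.cosh (t/2) ≤ 3 := by
  have h2 : Real.exp (t/2) ≤ Real.exp 1 := Real.exp_le_exp.2 (by linarith)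
  have h3 : Real.exp (-(t/2)) ≤ Real.exp 1 := Real.exp_le_exp.2 (by linarith)
  rw [Real.cosh_eq]
  linarith [Real.exp_one_lt_d9]

lemma good_loc {κ d : ℝ} {F : ℝ → ℝ → ℝ → ℝ × ℝ → ℝ} (h : Good κ d F) (t1 t2 : ℝ) (h1 : 0 < t1) :
    ∃ C, ∀ t θ φ q, t1 ≤ t → t ≤ t2 → boxE q → |F t θ φ q| ≤ C := by
  have hc : ∀ t, t1 ≤ t → t ≤ t2 → Real.cosh (t/2) ≤ Real.cosh (t2/2) := fun t a b =>
    Real.cosh_le_cosh.2 (by rw [abs_of_pos (by linarith), abs_of_pos (by linarith)]; linarith)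
  have hc' : ∀ t, t1 ≤ t → Real.cosh (t1/2) ≤ Real.cosh (t/2) := fun t a =>
    Real.cosh_le_cosh.2 (by rw [abs_of_pos (by linarith), abs_of_pos (by linarith)]; linarith)
  have one : ∀ X : ℝ, ∀ θ φ q, boxE q → X^2 ≤ 1 - wE θ φ q → |X| ≤ 2 := by
    intro X θ φ q hq h
    have hw := abs_le.1 (wE_le θ φ q hq)
    exact abs_le_of_sq_le_sq (by nlinarith) (by norm_num)
  induction h with
  | const c => exact ⟨|c|, fun _ _ _ _ _ _ _ => le_rfl⟩
  | ch => exact ⟨Real.cosh (t2/2), fun t _ _ _ a b _ => by rw [abs_cosh_E]; exact hc t a b⟩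
  | sh =>
    refine ⟨Real.cosh (t2/2), fun t _ _ _ a b _ => ?_⟩
    refine le_trans ?_ (hc t a b)
    rw [Real.abs_sinh, abs_of_pos (by linarith)]
    exact (Real.sinh_lt_cosh _).le
  | w => exact ⟨1, fun t θ φ q a b hq => wE_le θ φ q hq⟩
  | z => exact ⟨1, fun t θ φ q a b hq => z_abs θ φ q hq⟩
  | w1 => exact ⟨2, fun t θ φ q a b hq => one _ θ φ q hq (w1_sq θ φ q hq)⟩
  | w2 => exact ⟨2, fun t θ φ q a b hq => one _ θ φ q hq (w2_sq θ φ q hq)⟩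
  | psi ν =>
    refine ⟨(Real.cosh (t1/2) - 1)^(-ν) + (Real.cosh (t2/2)+1)^(-ν), fun t θ φ q a b hq => ?_⟩
    have hp := psi_pos t θ φ (by linarith) q hq
    have : 1 < Real.cosh (t1/2) := Real.one_lt_cosh.2 (by positivity)
    rw [abs_of_pos (Real.rpow_pos_of_pos hp _)]
    exact rpow_two_E _ (by linarith) (le_trans (by linarith [hc' t a]) (psi_low t θ φ q hq)) (le_trans (psi_high t θ φ q hq) (by linarith [hc t a b]))
  | add hF hG ihF ihG =>
    obtain ⟨C, hC⟩ := ihF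
    obtain ⟨C', hC'⟩ := ihG
    exact ⟨C+C', fun t θ φ q a b hq => (abs_add_le _ _).trans (add_le_add (hC t θ φ q a b hq) (hC' t θ φ q a b hq))⟩
  | mul hF hG ihF ihG =>
    obtain ⟨C, hC⟩ := ihF
    obtain ⟨C', hC'⟩ := ihG
    refine ⟨C*C', fun t θ φ q a b hq => ?_⟩
    rw [abs_mul]
    have := hC t θ φ q a b hq
    exact mul_le_mul this (hC' t θ φ q a b hq) (abs_nonneg _) ((abs_nonneg _).trans this)
  | weak h1 h2 hF ih => exact ih

lemma good_small {κ d : ℝ} {F : ℝ → ℝ → ℝ → ℝ × ℝ → ℝ} (h : Good κ d F) :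
    ∃ C, 0 ≤ C ∧ ∀ t θ φ q, 0 < t → t ≤ 1 → boxE q → |F t θ φ q| ≤ C * (Psi t (wE θ φ q))^(-κ/2) := by
  have half : ∀ X Y : ℝ, ∀ t θ φ q, 0 < t → boxE q → 0 ≤ Y → X^2 ≤ Y^2 * Psi t (wE θ φ q) → |X| ≤ Y * (Psi t (wE θ φ q))^(-(-1:ℝ)/2) := by
    intro X Y t θ φ q ht hq hY h
    have hp := psi_pos t θ φ ht q hq
    rw [show (-(-1:ℝ)/2) = 1/2 by norm_num, ← Real.sqrt_eq_rpow]
    apply abs_le_of_sq_le_sq _ (by positivity)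
    rw [mul_pow, Real.sq_sqrt hp.le]; exact h
  have bd : ∀ X C : ℝ, ∀ t θ φ q, |X| ≤ C → |X| ≤ C * (Psi t (wE θ φ q))^(-(0:ℝ)/2) := by
    intro X C t θ φ q h
    rw [neg_zero, zero_div, Real.rpow_zero, mul_one]; exact h
  induction h with
  | const c => exact ⟨|c|, abs_nonneg _, fun _ _ _ _ _ _ _ => bd _ _ _ _ _ _ le_rfl⟩
  | ch => exact ⟨3, by norm_num, fun t _ _ _ a b _ => bd _ _ _ _ _ _ (by rw [abs_cosh_E]; exact cosh_le3 t a b)⟩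
  | sh =>
    refine ⟨2, by norm_num, fun t θ φ q a b hq => half _ _ t θ φ q a hq (by norm_num) ?_⟩
    have h1 := psi_low t θ φ q hq
    have h2 := cosh_le3 t a b
    have h3 := Real.one_le_cosh (t/2)
    rw [Real.sinh_sq]
    nlinarith
  | w => exact ⟨1, by norm_num, fun t θ φ q a b hq => bd _ _ _ _ _ _ (wE_le θ φ q hq)⟩
  | z => exact ⟨1, by norm_num, fun t θ φ q a b hq => bd _ _ _ _ _ _ (z_abs θ φ q hq)⟩
  | w1 =>
    refine ⟨1, by norm_num, fun t θ φ q a b hq => half _ _ t θ φ q a hq (by norm_num) ?_⟩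
    have h3 := Real.one_le_cosh (t/2)
    have := w1_sq θ φ q hq
    unfold Psi; linarith
  | w2 =>
    refine ⟨1, by norm_num, fun t θ φ q a b hq => half _ _ t θ φ q a hq (by norm_num) ?_⟩
    have h3 := Real.one_le_cosh (t/2)
    have := w2_sq θ φ q hq
    unfold Psi; linarith
  | psi ν =>
    refine ⟨1, by norm_num, fun t θ φ q a b hq => ?_⟩
    have hp := psi_pos t θ φ a q hq
    rw [abs_of_pos (Real.rpow_pos_of_pos hp _), one_mul, show -(2*ν)/2 = -ν by ring]
  | add hF hG ihF ihG =>
    obtain ⟨C, h0, hC⟩ := ihF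
    obtain ⟨C', h0', hC'⟩ := ihG
    refine ⟨C+C', by positivity, fun t θ φ q a b hq => (abs_add_le _ _).trans ?_⟩
    rw [add_mul]
    exact (add_le_add (hC t θ φ q a b hq) (hC' t θ φ q a b hq))
  | mul hF hG ihF ihG =>
    rename_i κ d κ' d' _ _
    obtain ⟨C, h0, hC⟩ := ihF
    obtain ⟨C', h0', hC'⟩ := ihG
    refine ⟨C*C', by positivity, fun t θ φ q a b hq => ?_⟩
    rw [abs_mul]
    have h1 := hC t θ φ q a b hq
    have hp := psi_pos t θ φ a q hq
    rw [show -(κ+κ')/2 = -κ/2 + -κ'/2 by ring, Real.rpow_add hp, mul_mul_mul_comm]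
    exact mul_le_mul h1 (hC' t θ φ q a b hq) (abs_nonneg _) ((abs_nonneg _).trans h1)
  | weak h1 h2 hF ih =>
    rename_i κ d κ' d' _
    obtain ⟨C, h0, hC⟩ := ih
    refine ⟨C*4^((κ'-κ)/2), by positivity, fun t θ φ q a b hq => ?_⟩
    have hp := psi_pos t θ φ a q hq
    refine (hC t θ φ q a b hq).trans ?_
    rw [mul_assoc]
    apply mul_le_mul_of_nonneg_left _ h0
    rw [show -κ/2 = (κ'-κ)/2 + -κ'/2 by ring, Real.rpow_add hp]
    apply mul_le_mul_of_nonneg_right _ (Real.rpow_nonneg hp.le _)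
    apply Real.rpow_le_rpow hp.le _ (by linarith)
    linarith [psi_high t θ φ q hq, cosh_le3 t a b]

lemma cosh_exp_low (t : ℝ) (ht : 1 ≤ t) : (1 - Real.exp (-(1/2)))^2/2 * Real.exp (t/2) ≤ Real.cosh (t/2) - 1 := by
  have e : Real.cosh (t/2) - 1 = (1 - Real.exp (-(t/2)))^2/2 * Real.exp (t/2) := by
    have : Real.exp (t/2) * Real.exp (-(t/2)) = 1 := by rw [← Real.exp_add]; simp
    rw [Real.cosh_eq]
    linear_combination (1 - Real.exp (-(t/2))/2) * this
  rw [e]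
  apply mul_le_mul_of_nonneg_right _ (Real.exp_pos _).le
  have h1 : Real.exp (-(t/2)) ≤ Real.exp (-(1/2)) := Real.exp_le_exp.2 (by linarith)
  have h2 : Real.exp (-(1/2)) < 1 := Real.exp_lt_one_iff.2 (by norm_num)
  nlinarith

lemma cosh_exp_high (t : ℝ) (ht : 0 < t) : Real.cosh (t/2) ≤ Real.exp (t/2) := by
  rw [Real.cosh_eq]
  have h1 : Real.exp (-(t/2)) ≤ Real.exp (t/2) := Real.exp_le_exp.2 (by linarith)
  linarith

lemma good_big {κ d : ℝ} {F : ℝ → ℝ → ℝ → ℝ × ℝ → ℝ} (h : Good κ d F) :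
    ∃ C, 0 ≤ C ∧ ∀ t θ φ q, 1 ≤ t → boxE q → |F t θ φ q| ≤ C * Real.exp (d * (t/2)) := by
  have bd : ∀ X C t : ℝ, |X| ≤ C → |X| ≤ C * Real.exp (0 * (t/2)) := by
    intro X C t h
    rw [zero_mul, Real.exp_zero, mul_one]; exact h
  have one : ∀ X : ℝ, ∀ θ φ q, boxE q → X^2 ≤ 1 - wE θ φ q → |X| ≤ 2 := by
    intro X θ φ q hq h
    have hw := abs_le.1 (wE_le θ φ q hq)
    exact abs_le_of_sq_le_sq (by nlinarith) (by norm_num)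
  induction h with
  | const c => exact ⟨|c|, abs_nonneg _, fun _ _ _ _ _ _ => bd _ _ _ le_rfl⟩
  | ch => exact ⟨1, by norm_num, fun t _ _ _ a _ => by rw [abs_cosh_E, one_mul, one_mul]; exact cosh_exp_high t (by linarith)⟩
  | sh =>
    refine ⟨1, by norm_num, fun t _ _ _ a _ => ?_⟩
    rw [Real.abs_sinh, one_mul, one_mul, abs_of_pos (by linarith)]
    exact (Real.sinh_lt_cosh _).le.trans (cosh_exp_high t (by linarith))
  | w => exact ⟨1, by norm_num, fun t θ φ q a hq => bd _ _ _ (wE_le θ φ q hq)⟩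
  | z => exact ⟨1, by norm_num, fun t θ φ q a hq => bd _ _ _ (z_abs θ φ q hq)⟩
  | w1 => exact ⟨2, by norm_num, fun t θ φ q a hq => bd _ _ _ (one _ θ φ q hq (w1_sq θ φ q hq))⟩
  | w2 => exact ⟨2, by norm_num, fun t θ φ q a hq => bd _ _ _ (one _ θ φ q hq (w2_sq θ φ q hq))⟩
  | psi ν =>
    have h2 : Real.exp (-(1/2)) < 1 := Real.exp_lt_one_iff.2 (by norm_num)
    have h3 : 0 < (1 - Real.exp (-(1/2)))^2/2 := by have : 0 < 1 - Real.exp (-(1/2)) := by linarith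
                                                    positivity
    refine ⟨((1 - Real.exp (-(1/2)))^2/2)^(-ν) + 2^(-ν), by positivity, fun t θ φ q a hq => ?_⟩
    have hp := psi_pos t θ φ (by linarith) q hq
    rw [abs_of_pos (Real.rpow_pos_of_pos hp _)]
    have key := rpow_two_E (-ν) (by positivity) ((cosh_exp_low t a).trans (psi_low t θ φ q hq)) (h := 2 * Real.exp (t/2)) (by
      linarith [psi_high t θ φ q hq, cosh_exp_high t (by linarith), Real.one_le_exp (show 0 ≤ t/2 by linarith)])
    rw [Real.mul_rpow h3.le (Real.exp_pos _).le, Real.mul_rpow (by norm_num) (Real.exp_pos _).le, ← add_mul, ← Real.exp_mul] at key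
    rw [mul_comm (-ν) (t/2)]
    exact key
  | add hF hG ihF ihG =>
    obtain ⟨C, h0, hC⟩ := ihF
    obtain ⟨C', h0', hC'⟩ := ihG
    refine ⟨C+C', by positivity, fun t θ φ q a hq => (abs_add_le _ _).trans ?_⟩
    rw [add_mul]
    exact (add_le_add (hC t θ φ q a hq) (hC' t θ φ q a hq))
  | mul hF hG ihF ihG =>
    obtain ⟨C, h0, hC⟩ := ihF
    obtain ⟨C', h0', hC'⟩ := ihG
    refine ⟨C*C', by positivity, fun t θ φ q a hq => ?_⟩
    rw [abs_mul]
    have h1 := hC t θ φ q a hq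
    rw [add_mul, Real.exp_add, mul_mul_mul_comm]
    exact mul_le_mul h1 (hC' t θ φ q a hq) (abs_nonneg _) ((abs_nonneg _).trans h1)
  | weak h1 h2 hF ih =>
    obtain ⟨C, h0, hC⟩ := ih
    refine ⟨C, h0, fun t θ φ q a hq => ?_⟩
    refine (hC t θ φ q a hq).trans ?_
    apply mul_le_mul_of_nonneg_left _ h0
    apply Real.exp_le_exp.2
    apply mul_le_mul_of_nonneg_right h2 (by linarith)

lemma diff_int_E (a b : ℝ) (ha : 0 < a) (hb : 0 < b) (f f' : ℝ → ℝ × ℝ → ℝ) (x : ℝ) (s : Set ℝ) (hs : s ∈ nhds x)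
    (hm : ∀ y, Measurable (f y)) (hm' : Measurable (f' x)) (C C' : ℝ) (hC : ∀ q, boxE q → |f x q| ≤ C)
    (hC' : ∀ y ∈ s, ∀ q, boxE q → |f' y q| ≤ C') (hd : ∀ y ∈ s, ∀ q, boxE q → HasDerivAt (fun y => f y q) (f' y q) y) :
    HasDerivAt (fun y => ∫ q, f y q ∂(piC a b)) (∫ q, f' x q ∂(piC a b)) x := by
  have := piC_finite a b ha hb
  refine (hasDerivAt_integral_of_dominated_loc_of_deriv_le (bound := fun _ => C') hs (Filter.Eventually.of_forall fun y => (hm y).aestronglyMeasurable) ?_ hm'.aestronglyMeasurable ?_ (integrable_const _) ?_).2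
  · refine Integrable.of_bound (hm x).aestronglyMeasurable C ?_
    filter_upwards [piC_ae a b ha hb] with q hq using hC q hq
  · filter_upwards [piC_ae a b ha hb] with q hq y hy using hC' y hy q hq
  · filter_upwards [piC_ae a b ha hb] with q hq y hy using hd y hy q hq

lemma iter_t (a b : ℝ) (ha : 0 < a) (hb : 0 < b) (g : ℝ → ℝ → ℝ → ℝ) {κ d : ℝ} {F : ℝ → ℝ → ℝ → ℝ × ℝ → ℝ} (h : Good κ d F) (c : ℝ)
    (hg : ∀ t θ φ, 0 < t → g t θ φ = c * ∫ q, F t θ φ q ∂(piC a b)) (M : ℕ) :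
    ∃ F', Good (κ+M) d F' ∧ ∀ t θ φ, 0 < t → deriv^[M] (fun s => g s θ φ) t = c * ∫ q, F' t θ φ q ∂(piC a b) := by
  induction M with
  | zero => exact ⟨F, h.weak (by simp) le_rfl, hg⟩
  | succ M ih =>
    obtain ⟨F₁, h1, e1⟩ := ih
    obtain ⟨F₂, h2, e2⟩ := good_t h1
    refine ⟨F₂, h2.weak (by push_cast; linarith) le_rfl, fun t θ φ ht => ?_⟩
    rw [Function.iterate_succ_apply']
    have : deriv^[M] (fun s => g s θ φ) =ᶠ[nhds t] fun s => c * ∫ q, F₁ s θ φ q ∂(piC a b) := by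
      filter_upwards [Ioi_mem_nhds ht] with s hs using e1 s θ φ hs
    rw [this.deriv_eq]
    obtain ⟨C, hC⟩ := good_loc h1 (t/2) (2*t) (by positivity)
    obtain ⟨C', hC'⟩ := good_loc h2 (t/2) (2*t) (by positivity)
    refine (HasDerivAt.const_mul c (diff_int_E a b ha hb (fun s q => F₁ s θ φ q) (fun s q => F₂ s θ φ q) t (Icc (t/2) (2*t)) (Icc_mem_nhds (by linarith) (by linarith)) (fun y => good_meas h1 _ _ _) (good_meas h2 _ _ _) C C' (fun q hq => hC t θ φ q (by linarith) (by linarith) hq) (fun y hy q hq => hC' y θ φ q hy.1 hy.2 hq) fun y hy q hq => e2 y θ φ q (by linarith [hy.1]) hq)).deriv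

lemma iter_θ (a b : ℝ) (ha : 0 < a) (hb : 0 < b) (g : ℝ → ℝ → ℝ → ℝ) {κ d : ℝ} {F : ℝ → ℝ → ℝ → ℝ × ℝ → ℝ} (h : Good κ d F) (c : ℝ)
    (hg : ∀ t θ φ, 0 < t → g t θ φ = c * ∫ q, F t θ φ q ∂(piC a b)) (M : ℕ) :
    ∃ F', Good (κ+M) d F' ∧ ∀ t θ φ, 0 < t → deriv^[M] (fun s => g t s φ) θ = c * ∫ q, F' t θ φ q ∂(piC a b) := by
  induction M with
  | zero => exact ⟨F, h.weak (by simp) le_rfl, hg⟩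
  | succ M ih =>
    obtain ⟨F₁, h1, e1⟩ := ih
    obtain ⟨F₂, h2, e2⟩ := good_θ h1
    refine ⟨F₂, h2.weak (by push_cast; linarith) le_rfl, fun t θ φ ht => ?_⟩
    rw [Function.iterate_succ_apply']
    have : deriv^[M] (fun s => g t s φ) = fun s => c * ∫ q, F₁ t s φ q ∂(piC a b) := by
      ext s; exact e1 t s φ ht
    rw [this]
    obtain ⟨C, hC⟩ := good_loc h1 t t ht
    obtain ⟨C', hC'⟩ := good_loc h2 t t ht
    refine (HasDerivAt.const_mul c (diff_int_E a b ha hb (fun s q => F₁ t s φ q) (fun s q => F₂ t s φ q) θ univ Filter.univ_mem (fun y => good_meas h1 _ _ _) (good_meas h2 _ _ _) C C' (fun q hq => hC t θ φ q le_rfl le_rfl hq) (fun y hy q hq => hC' t y φ q le_rfl le_rfl hq) fun y hy q hq => e2 t y φ q ht hq)).deriv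

lemma iter_φ (a b : ℝ) (ha : 0 < a) (hb : 0 < b) (g : ℝ → ℝ → ℝ → ℝ) {κ d : ℝ} {F : ℝ → ℝ → ℝ → ℝ × ℝ → ℝ} (h : Good κ d F) (c : ℝ)
    (hg : ∀ t θ φ, 0 < t → g t θ φ = c * ∫ q, F t θ φ q ∂(piC a b)) (M : ℕ) :
    ∃ F', Good (κ+M) d F' ∧ ∀ t θ φ, 0 < t → deriv^[M] (fun s => g t θ s) φ = c * ∫ q, F' t θ φ q ∂(piC a b) := by
  induction M with
  | zero => exact ⟨F, h.weak (by simp) le_rfl, hg⟩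
  | succ M ih =>
    obtain ⟨F₁, h1, e1⟩ := ih
    obtain ⟨F₂, h2, e2⟩ := good_φ h1
    refine ⟨F₂, h2.weak (by push_cast; linarith) le_rfl, fun t θ φ ht => ?_⟩
    rw [Function.iterate_succ_apply']
    have : deriv^[M] (fun s => g t θ s) = fun s => c * ∫ q, F₁ t θ s q ∂(piC a b) := by
      ext s; exact e1 t θ s ht
    rw [this]
    obtain ⟨C, hC⟩ := good_loc h1 t t ht
    obtain ⟨C', hC'⟩ := good_loc h2 t t ht
    refine (HasDerivAt.const_mul c (diff_int_E a b ha hb (fun s q => F₁ t θ s q) (fun s q => F₂ t θ s q) φ univ Filter.univ_mem (fun y => good_meas h1 _ _ _) (good_meas h2 _ _ _) C C' (fun q hq => hC t θ φ q le_rfl le_rfl hq) (fun y hy q hq => hC' t θ y q le_rfl le_rfl hq) fun y hy q hq => e2 t θ y q ht hq)).deriv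

/-- The iterated derivative of the kernel as an integral of a good function, with the resulting bounds. -/
lemma deriv_kernel_E (a b : ℝ) (ha : 0 < a) (hb : 0 < b) (M N L : ℕ) :
    ∃ C, 0 < C ∧ ∀ t θ φ, 0 < t →
      (t ≤ 1 → |deriv^[L] (fun φ' => deriv^[N] (fun θ' => deriv^[M] (fun s => jHker a b s θ' φ') t) θ) φ| ≤
        C * ∫ q, (Psi t (wE θ φ q))^(-((2*(a+b)+3+(M+N+L))/2)) ∂(piC a b)) ∧
      (1 ≤ t → |deriv^[L] (fun φ' => deriv^[N] (fun θ' => deriv^[M] (fun s => jHker a b s θ' φ') t) θ) φ| ≤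
        C * Real.exp (-(a+b+1) * (t/2))) := by
  have g0 : Good (2*(a+b)+3) (-(a+b+1)) (fun t θ φ q => Real.sinh (t/2) * (Psi t (wE θ φ q))^(-(a+b+2))) :=
    (Good.sh.mul (Good.psi (a+b+2))).weak (by linarith) (by linarith)
  obtain ⟨F1, g1, e1⟩ := iter_t a b ha hb (fun t θ φ => jHker a b t θ φ) g0 (constD a b) (fun t θ φ ht => kernel_D a b ha hb t ht θ φ) M
  obtain ⟨F2, g2, e2⟩ := iter_θ a b ha hb (fun t θ φ => deriv^[M] (fun s => jHker a b s θ φ) t) g1 (constD a b) e1 N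
  obtain ⟨F, g, e⟩ := iter_φ a b ha hb (fun t θ φ => deriv^[N] (fun θ' => deriv^[M] (fun s => jHker a b s θ' φ) t) θ) g2 (constD a b) e2 L
  obtain ⟨C1, h1, b1⟩ := good_small g
  obtain ⟨C2, h2, b2⟩ := good_big g
  have := piC_finite a b ha hb
  refine ⟨|constD a b| * C1 + |constD a b| * C2 * (piC a b).real univ + 1, by positivity, fun t θ φ ht => ⟨fun h => ?_, fun h => ?_⟩⟩
  · rw [e t θ φ ht, abs_mul]
    have hI : 0 ≤ ∫ q, (Psi t (wE θ φ q))^(-((2*(a+b)+3+(M+N+L))/2)) ∂(piC a b) := by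
      apply integral_nonneg_of_ae
      filter_upwards [piC_ae a b ha hb] with q hq
      exact Real.rpow_nonneg (psi_pos t θ φ ht q hq).le _
    have hInt0 : Integrable (fun q => (Psi t (wE θ φ q))^(-((2*(a+b)+3+(M+N+L))/2))) (piC a b) := by
      obtain ⟨C, hC⟩ := good_loc (Good.psi ((2*(a+b)+3+(M+N+L))/2)) t t ht
      refine Integrable.of_bound (good_meas (Good.psi _) t θ φ).aestronglyMeasurable C ?_
      filter_upwards [piC_ae a b ha hb] with q hq using hC t θ φ q le_rfl le_rfl hq
    have key : |∫ q, F t θ φ q ∂(piC a b)| ≤ C1 * ∫ q, (Psi t (wE θ φ q))^(-((2*(a+b)+3+(M+N+L))/2)) ∂(piC a b) := by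
      rw [← integral_const_mul, ← Real.norm_eq_abs]
      apply norm_integral_le_of_norm_le (hInt0.const_mul _)
      filter_upwards [piC_ae a b ha hb] with q hq
      have := b1 t θ φ q ht h hq
      rw [show -(2*(a+b)+3+M+N+L)/2 = -((2*(a+b)+3+(M+N+L))/2) by ring] at this
      exact this
    calc _ ≤ |constD a b| * _ := mul_le_mul_of_nonneg_left key (abs_nonneg _)
      _ = (|constD a b| * C1) * _ := by ring
      _ ≤ _ := mul_le_mul_of_nonneg_right (by
        have : 0 ≤ |constD a b| * C2 * (piC a b).real univ := by positivity
        linarith) hI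
  · rw [e t θ φ ht, abs_mul]
    have key : |∫ q, F t θ φ q ∂(piC a b)| ≤ C2 * Real.exp (-(a+b+1) * (t/2)) * (piC a b).real univ := by
      rw [← Real.norm_eq_abs]
      apply norm_integral_le_of_norm_le_const
      filter_upwards [piC_ae a b ha hb] with q hq
      exact b2 t θ φ q h hq
    have hE := Real.exp_pos (-(a+b+1) * (t/2))
    calc _ ≤ |constD a b| * _ := mul_le_mul_of_nonneg_left key (abs_nonneg _)
      _ = (|constD a b| * C2 * (piC a b).real univ) * Real.exp (-(a+b+1) * (t/2)) := by ring
      _ ≤ _ := mul_le_mul_of_nonneg_right (by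
        have : 0 ≤ |constD a b| * C1 := by positivity
        linarith) hE.le

lemma lint_pow0_F (e δ : ℝ) (he : -1 < e) (hδ : 0 ≤ δ) :
    ∫⁻ x in Ioc 0 δ, ENNReal.ofReal (x^e) = ENNReal.ofReal (δ^(e+1)/(e+1)) := by
  have hi : IntervalIntegrable (fun x : ℝ => x^e) volume 0 δ := intervalIntegral.intervalIntegrable_rpow' he
  rw [intervalIntegrable_iff_integrableOn_Ioc_of_le hδ] at hi
  rw [← ofReal_integral_eq_lintegral_ofReal hi, ← intervalIntegral.integral_of_le hδ, integral_rpow (Or.inl he), Real.zero_rpow (by linarith), sub_zero]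
  filter_upwards [ae_restrict_mem measurableSet_Ioc] with x hx
  exact Real.rpow_nonneg hx.1.le _

lemma lint_powinf_F (e δ : ℝ) (he : e < -1) (hδ : 0 < δ) :
    ∫⁻ x in Ioi δ, ENNReal.ofReal (x^e) = ENNReal.ofReal (-δ^(e+1)/(e+1)) := by
  rw [← ofReal_integral_eq_lintegral_ofReal (integrableOn_Ioi_rpow_of_lt he hδ), integral_Ioi_rpow_of_lt he hδ]
  filter_upwards [ae_restrict_mem measurableSet_Ioi] with x hx
  exact Real.rpow_nonneg (hδ.trans hx).le _

lemma lint_muC_F (a : ℝ) (g : ℝ → ℝ≥0∞) (hg : Measurable g) :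
    ∫⁻ u, g u ∂(muC a) = ∫⁻ u in Ioo (-1) 1, ENNReal.ofReal ((1-u^2)^(a-1/2)) * g u := by
  unfold muC
  rw [lintegral_withDensity_eq_lintegral_mul _ (wC_meas a).ennreal_ofReal hg]; rfl

/-- reflection u ↦ c-u for lintegral over sets -/
lemma lint_refl_F (c : ℝ) (s : Set ℝ) (hs : MeasurableSet s) (g : ℝ → ℝ≥0∞) :
    ∫⁻ u in (fun u => c - u) ⁻¹' s, g (c-u) = ∫⁻ x in s, g x := by
  have := lintegral_sub_left_eq_self (s.indicator g) (c:ℝ) (μ := volume)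
  rw [← lintegral_indicator hs, ← this, ← lintegral_indicator (hs.preimage (by fun_prop))]
  rfl

lemma oneD_F (a ν : ℝ) (ha : 0 < a) (hν : a + 1/2 < ν) : ∃ C, 0 < C ∧ ∀ A B : ℝ, 0 < A → 0 ≤ B →
    ∫⁻ u, ENNReal.ofReal ((A + (1-u)*B)^(-ν)) ∂(muC a) ≤ ENNReal.ofReal (C * A^(-(ν-(a+1/2))) * (A+B)^(-(a+1/2))) := by
  have hfin := muC_finite a ha
  set m := (muC a).real univ
  have hm0 : 0 ≤ m := measureReal_nonneg
  have hm : muC a univ = ENNReal.ofReal m := by simp [m]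
  set K : ℝ := 1 + 2^(a-1/2) with hK
  have hK0 : 0 < K := by positivity
  have hdens : ∀ u : ℝ, 0 < u → u < 1 → (1-u^2)^(a-1/2) ≤ K * (1-u)^(a-1/2) := by
    intro u h0 h1
    rw [show 1-u^2 = (1+u)*(1-u) by ring, Real.mul_rpow (by linarith) (by linarith)]
    apply mul_le_mul_of_nonneg_right _ (Real.rpow_nonneg (by linarith) _)
    have := rpow_two_E (a-1/2) one_pos (show (1:ℝ) ≤ 1+u by linarith) (show 1+u ≤ 2 by linarith)
    rwa [Real.one_rpow] at this
  have hd : 0 < ν - (a+1/2) := by linarith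
  set K1 := 2^(a+1/2) * m + (m + K / (a+1/2) * 2^(a+1/2) + K / (ν - (a+1/2)) * 2^(a+1/2)) + 1 with hK1
  refine ⟨K1, by positivity, fun A B hA hB => ?_⟩
  have hpre : ∀ u : ℝ, u < 1 → 0 < A + (1-u)*B := fun u hu => by nlinarith [mul_nonneg (sub_nonneg.2 hu.le) hB]
  have hP : 0 < A^(-(ν-(a+1/2))) := Real.rpow_pos_of_pos hA _
  have hQ : 0 < (A+B)^(-(a+1/2)) := Real.rpow_pos_of_pos (by linarith) _
  have hAs : A^(-ν) = A^(-(ν-(a+1/2))) * A^(-(a+1/2)) := by rw [← Real.rpow_add hA]; congr 1; ring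
  have hmeas : Measurable fun u : ℝ => ENNReal.ofReal ((A + (1-u)*B)^(-ν)) := by fun_prop
  rcases le_or_gt B A with hBA | hBA
  · have h1 : ∫⁻ u, ENNReal.ofReal ((A + (1-u)*B)^(-ν)) ∂(muC a) ≤ ENNReal.ofReal (A^(-ν)) * muC a univ := by
      rw [← lintegral_const]
      apply lintegral_mono_ae
      filter_upwards [muC_ae a] with u hu
      apply ENNReal.ofReal_le_ofReal
      apply Real.rpow_le_rpow_of_nonpos hA _ (by linarith)
      nlinarith [mul_nonneg (sub_nonneg.2 hu.2.le) hB]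
    refine h1.trans ?_
    rw [hm, ← ENNReal.ofReal_mul (Real.rpow_nonneg hA.le _)]
    apply ENNReal.ofReal_le_ofReal
    have h2 : A^(-(a+1/2)) ≤ 2^(a+1/2) * (A+B)^(-(a+1/2)) := by
      have : (2*A)^(-(a+1/2)) ≤ (A+B)^(-(a+1/2)) := Real.rpow_le_rpow_of_nonpos (by linarith) (by linarith) (by linarith)
      rw [Real.mul_rpow (by norm_num) hA.le, Real.rpow_neg (by norm_num)] at this
      have h3 : 0 < (2:ℝ)^(a+1/2) := by positivity
      rwa [inv_mul_le_iff₀ h3] at this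
    rw [hAs]
    calc A^(-(ν-(a+1/2))) * A^(-(a+1/2)) * m ≤ A^(-(ν-(a+1/2))) * (2^(a+1/2) * (A+B)^(-(a+1/2))) * m := by gcongr
      _ = (2^(a+1/2) * m) * (A^(-(ν-(a+1/2))) * (A+B)^(-(a+1/2))) := by ring
      _ ≤ K1 * (A^(-(ν-(a+1/2))) * (A+B)^(-(a+1/2))) := by
        apply mul_le_mul_of_nonneg_right _ (by positivity)
        have : 0 ≤ m + K / (a+1/2) * 2^(a+1/2) + K / (ν - (a+1/2)) * 2^(a+1/2) := by positivity
        linarith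
      _ = _ := by ring
  · have hB0 : 0 < B := hA.trans hBA
    set δ := A/B with hδ
    have hδ0 : 0 < δ := by positivity
    have hBs : B^(-(a+1/2)) ≤ 2^(a+1/2) * (A+B)^(-(a+1/2)) := by
      have : (2*B)^(-(a+1/2)) ≤ (A+B)^(-(a+1/2)) := Real.rpow_le_rpow_of_nonpos (by linarith) (by linarith) (by linarith)
      rw [Real.mul_rpow (by norm_num) hB, Real.rpow_neg (by norm_num)] at this
      have h3 : 0 < (2:ℝ)^(a+1/2) := by positivity
      rwa [inv_mul_le_iff₀ h3] at this
    have hsub : Ioo (-1:ℝ) 1 ⊆ (Ioo (-1) 1 ∩ Iic 0) ∪ ((Ioo 0 1 ∩ ((fun u => 1 - u) ⁻¹' (Ioc 0 δ))) ∪ (Ioo 0 1 ∩ ((fun u => 1 - u) ⁻¹' (Ioi δ)))) := by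
      intro u hu
      rcases le_or_gt u 0 with h | h
      · exact Or.inl ⟨hu, h⟩
      · rcases le_or_gt (1-u) δ with h' | h'
        · exact Or.inr (Or.inl ⟨⟨h, hu.2⟩, by simp only [mem_preimage, mem_Ioc]; exact ⟨by linarith [hu.2], h'⟩⟩)
        · exact Or.inr (Or.inr ⟨⟨h, hu.2⟩, h'⟩)
    have p1 : ∫⁻ u in (Ioo (-1) 1 ∩ Iic 0), ENNReal.ofReal ((1-u^2)^(a-1/2)) * ENNReal.ofReal ((A + (1-u)*B)^(-ν)) ≤ ENNReal.ofReal (m * (A^(-(ν-(a+1/2))) * (A+B)^(-(a+1/2)))) := by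
      calc _ ≤ ∫⁻ u in (Ioo (-1) 1 ∩ Iic 0), ENNReal.ofReal ((1-u^2)^(a-1/2)) * ENNReal.ofReal (A^(-(ν-(a+1/2))) * (A+B)^(-(a+1/2))) := by
            apply setLIntegral_mono' (measurableSet_Ioo.inter measurableSet_Iic)
            intro u hu
            gcongr
            have hu0 : u ≤ 0 := hu.2
            calc (A + (1-u)*B)^(-ν) ≤ (A+B)^(-ν) := Real.rpow_le_rpow_of_nonpos (by linarith) (by nlinarith) (by linarith)
              _ = (A+B)^(-(ν-(a+1/2))) * (A+B)^(-(a+1/2)) := by rw [← Real.rpow_add (by linarith)]; congr 1; ring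
              _ ≤ _ := mul_le_mul_of_nonneg_right (Real.rpow_le_rpow_of_nonpos hA (by linarith) (by linarith)) hQ.le
        _ ≤ ∫⁻ u in (Ioo (-1) 1), ENNReal.ofReal ((1-u^2)^(a-1/2)) * ENNReal.ofReal (A^(-(ν-(a+1/2))) * (A+B)^(-(a+1/2))) := lintegral_mono_set inter_subset_left
        _ = _ := by
          rw [← lint_muC_F a _ measurable_const, lintegral_const, hm, ENNReal.ofReal_mul hm0, mul_comm]
    have p2 : ∫⁻ u in (Ioo 0 1 ∩ ((fun u => 1 - u) ⁻¹' (Ioc 0 δ))), ENNReal.ofReal ((1-u^2)^(a-1/2)) * ENNReal.ofReal ((A + (1-u)*B)^(-ν)) ≤ ENNReal.ofReal (K * A^(-ν) * (δ^(a+1/2)/(a+1/2))) := by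
      calc _ ≤ ∫⁻ u in (Ioo 0 1 ∩ ((fun u => 1 - u) ⁻¹' (Ioc 0 δ))), ENNReal.ofReal (K * A^(-ν)) * ENNReal.ofReal ((1-u)^(a-1/2)) := by
            apply setLIntegral_mono' (measurableSet_Ioo.inter (measurableSet_Ioc.preimage (by fun_prop)))
            intro u hu
            rw [← ENNReal.ofReal_mul' (Real.rpow_nonneg (hpre u hu.1.2).le _), ← ENNReal.ofReal_mul (by positivity)]
            apply ENNReal.ofReal_le_ofReal
            have h1 := hdens u hu.1.1 hu.1.2
            have h2 : (A + (1-u)*B)^(-ν) ≤ A^(-ν) := Real.rpow_le_rpow_of_nonpos hA (by nlinarith [mul_nonneg (sub_nonneg.2 hu.1.2.le) hB]) (by linarith)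
            have h3 : 0 ≤ (1-u)^(a-1/2) := Real.rpow_nonneg (by linarith [hu.1.2]) _
            have h4 := Real.rpow_nonneg (hpre u hu.1.2).le (-ν)
            calc _ ≤ K * (1-u)^(a-1/2) * A^(-ν) := mul_le_mul h1 h2 h4 (by positivity)
              _ = _ := by ring
        _ ≤ ∫⁻ u in ((fun u => 1 - u) ⁻¹' (Ioc 0 δ)), ENNReal.ofReal (K * A^(-ν)) * ENNReal.ofReal ((1-u)^(a-1/2)) := lintegral_mono_set inter_subset_right
        _ = _ := by
          rw [lint_refl_F 1 (Ioc 0 δ) measurableSet_Ioc (fun x => ENNReal.ofReal (K * A^(-ν)) * ENNReal.ofReal (x^(a-1/2))), lintegral_const_mul _ (by fun_prop), lint_pow0_F _ _ (by linarith) hδ0.le, ← ENNReal.ofReal_mul (by positivity)]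
          rw [show a - 1/2 + 1 = a + 1/2 by ring]
    have p3 : ∫⁻ u in (Ioo 0 1 ∩ ((fun u => 1 - u) ⁻¹' (Ioi δ))), ENNReal.ofReal ((1-u^2)^(a-1/2)) * ENNReal.ofReal ((A + (1-u)*B)^(-ν)) ≤ ENNReal.ofReal (K * B^(-ν) * (δ^(-(ν-(a+1/2)))/(ν-(a+1/2)))) := by
      calc _ ≤ ∫⁻ u in (Ioo 0 1 ∩ ((fun u => 1 - u) ⁻¹' (Ioi δ))), ENNReal.ofReal (K * B^(-ν)) * ENNReal.ofReal ((1-u)^(a-1/2-ν)) := by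
            apply setLIntegral_mono' (measurableSet_Ioo.inter (measurableSet_Ioi.preimage (by fun_prop)))
            intro u hu
            rw [← ENNReal.ofReal_mul' (Real.rpow_nonneg (hpre u hu.1.2).le _), ← ENNReal.ofReal_mul (by positivity)]
            apply ENNReal.ofReal_le_ofReal
            have h1 := hdens u hu.1.1 hu.1.2
            have hx : 0 < 1 - u := by linarith [hu.1.2]
            have h2 : (A + (1-u)*B)^(-ν) ≤ (1-u)^(-ν) * B^(-ν) := by
              rw [← Real.mul_rpow hx.le hB]
              exact Real.rpow_le_rpow_of_nonpos (by positivity) (by linarith) (by linarith)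
            have h3 : 0 ≤ (1-u)^(a-1/2) := Real.rpow_nonneg hx.le _
            have h4 := Real.rpow_nonneg (hpre u hu.1.2).le (-ν)
            calc _ ≤ K * (1-u)^(a-1/2) * ((1-u)^(-ν) * B^(-ν)) := mul_le_mul h1 h2 h4 (by positivity)
              _ = _ := by rw [sub_eq_add_neg (a-1/2) ν, Real.rpow_add hx]; ring
        _ ≤ ∫⁻ u in ((fun u => 1 - u) ⁻¹' (Ioi δ)), ENNReal.ofReal (K * B^(-ν)) * ENNReal.ofReal ((1-u)^(a-1/2-ν)) := lintegral_mono_set inter_subset_right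
        _ = _ := by
          rw [lint_refl_F 1 (Ioi δ) measurableSet_Ioi (fun x => ENNReal.ofReal (K * B^(-ν)) * ENNReal.ofReal (x^(a-1/2-ν))), lintegral_const_mul _ (by fun_prop), lint_powinf_F _ _ (by linarith) hδ0, ← ENNReal.ofReal_mul (by positivity)]
          congr 2
          rw [show a - 1/2 - ν + 1 = -(ν-(a+1/2)) by ring, neg_div_neg_eq]
    rw [lint_muC_F a _ hmeas]
    refine (lintegral_mono_set hsub).trans ((lintegral_union_le _ _ _).trans ?_)
    refine (add_le_add p1 ((lintegral_union_le _ _ _).trans (add_le_add p2 p3))).trans ?_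
    rw [← ENNReal.ofReal_add (by positivity) (by positivity), ← ENNReal.ofReal_add (by positivity) (by positivity)]
    apply ENNReal.ofReal_le_ofReal
    have e2 : A^(-ν) * δ^(a+1/2) = A^(-(ν-(a+1/2))) * B^(-(a+1/2)) := by
      rw [hδ, Real.div_rpow hA.le hB, hAs, Real.rpow_neg hB, Real.rpow_neg hA.le (a+1/2)]
      have : A^(a+1/2) ≠ 0 := (Real.rpow_pos_of_pos hA _).ne'
      field_simp
    have e3 : B^(-ν) * δ^(-(ν-(a+1/2))) = A^(-(ν-(a+1/2))) * B^(-(a+1/2)) := by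
      rw [hδ, Real.div_rpow hA.le hB, show -ν = -(ν-(a+1/2)) + -(a+1/2) by ring, Real.rpow_add hB0]
      have : B^(-(ν-(a+1/2))) ≠ 0 := (Real.rpow_pos_of_pos hB0 _).ne'
      field_simp
    have e2' : K * A^(-ν) * (δ^(a+1/2)/(a+1/2)) = K/(a+1/2) * (A^(-(ν-(a+1/2))) * B^(-(a+1/2))) := by
      rw [← e2]; ring
    have e3' : K * B^(-ν) * (δ^(-(ν-(a+1/2)))/(ν-(a+1/2))) = K/(ν-(a+1/2)) * (A^(-(ν-(a+1/2))) * B^(-(a+1/2))) := by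
      rw [← e3]; ring
    rw [e2', e3']
    have hk := mul_le_mul_of_nonneg_left hBs hP.le
    calc _ ≤ m * (A^(-(ν-(a+1/2))) * (A+B)^(-(a+1/2))) + (K/(a+1/2) * (A^(-(ν-(a+1/2))) * (2^(a+1/2) * (A+B)^(-(a+1/2)))) + K/(ν-(a+1/2)) * (A^(-(ν-(a+1/2))) * (2^(a+1/2) * (A+B)^(-(a+1/2))))) := by gcongr
      _ = (m + K / (a+1/2) * 2^(a+1/2) + K / (ν - (a+1/2)) * 2^(a+1/2)) * (A^(-(ν-(a+1/2))) * (A+B)^(-(a+1/2))) := by ring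
      _ ≤ K1 * (A^(-(ν-(a+1/2))) * (A+B)^(-(a+1/2))) := by
        apply mul_le_mul_of_nonneg_right _ (by positivity)
        have : 0 ≤ 2^(a+1/2) * m := by positivity
        linarith
      _ = _ := by ring

lemma psi_lower_F (t θ φ : ℝ) (ht : 0 < t) (hθ : θ ∈ Ioo 0 π) (hφ : φ ∈ Ioo 0 π) (q : ℝ × ℝ) :
    (1/32) * (t^2 + (θ-φ)^2 + (1-q.1) * sW θ φ + (1-q.2) * cW θ φ) ≤ Psi t (wE θ φ q) + (31/32) * (-((1-q.1) * sW θ φ + (1-q.2) * cW θ φ)) := by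
  have h1 : t^2/8 ≤ Real.cosh (t/2) - 1 := by
    have e : Real.cosh (t/2) - 1 = 2 * Real.sinh (t/4)^2 := by
      have := Real.cosh_two_mul (t/4)
      rw [show 2*(t/4) = t/2 by ring] at this
      rw [this, Real.cosh_sq]; ring
    have : t/4 ≤ Real.sinh (t/4) := Real.self_le_sinh_iff.2 (by positivity)
    rw [e]; nlinarith
  have h2 : (θ-φ)^2/32 ≤ 1 - sW θ φ - cW θ φ := by
    have e : 1 - sW θ φ - cW θ φ = 2 * Real.sin (|θ-φ|/4)^2 := by
      have h3 : Real.cos (2 * (|θ-φ|/4)) = 1 - 2 * Real.sin (|θ-φ|/4)^2 := by rw [Real.cos_two_mul, Real.cos_sq']; ring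
      have h4 : Real.cos (2 * (|θ-φ|/4)) = cW θ φ + sW θ φ := by
        rw [show 2 * (|θ-φ|/4) = |θ/2-φ/2| by rw [← sub_div, abs_div, abs_two]; ring, Real.cos_abs, Real.cos_sub]; rfl
      linarith
    have hr : |θ-φ| ≤ π := abs_le.2 ⟨by linarith [hθ.1, hφ.2], by linarith [hθ.2, hφ.1]⟩
    have := Real.mul_le_sin (x := |θ-φ|/4) (by positivity) (by linarith [Real.pi_pos])
    have h5 : (1/2:ℝ) ≤ 2/π := by
      rw [div_le_div_iff₀ (by norm_num) Real.pi_pos]; linarith [Real.pi_le_four]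
    have h6 : (1/2) * (|θ-φ|/4) ≤ Real.sin (|θ-φ|/4) := le_trans (mul_le_mul_of_nonneg_right h5 (by positivity)) this
    rw [e, ← sq_abs (θ-φ)]
    nlinarith [abs_nonneg (θ-φ)]
  unfold Psi wE
  nlinarith [sq_nonneg t]

lemma sW_pos (θ φ : ℝ) (hθ : θ ∈ Ioo 0 π) (hφ : φ ∈ Ioo 0 π) : 0 < sW θ φ :=
  mul_pos (Real.sin_pos_of_pos_of_lt_pi (by linarith [hθ.1]) (by linarith [hθ.2, Real.pi_pos])) (Real.sin_pos_of_pos_of_lt_pi (by linarith [hφ.1]) (by linarith [hφ.2, Real.pi_pos]))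
lemma cW_pos (θ φ : ℝ) (hθ : θ ∈ Ioo 0 π) (hφ : φ ∈ Ioo 0 π) : 0 < cW θ φ :=
  mul_pos (Real.cos_pos_of_mem_Ioo ⟨by linarith [hθ.1, Real.pi_pos], by linarith [hθ.2]⟩) (Real.cos_pos_of_mem_Ioo ⟨by linarith [hφ.1, Real.pi_pos], by linarith [hφ.2]⟩)

lemma twoD_F (a b ν : ℝ) (ha : 0 < a) (hb : 0 < b) (hν : a + b + 1 < ν) : ∃ C, 0 < C ∧ ∀ R s c : ℝ, 0 < R → 0 ≤ s → 0 ≤ c →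
    ∫⁻ q, ENNReal.ofReal ((R + (1-q.1)*s + (1-q.2)*c)^(-ν)) ∂(piC a b) ≤ ENNReal.ofReal (C * R^(-(ν-(a+b+1))) * (R+s)^(-(a+1/2)) * (R+c)^(-(b+1/2))) := by
  obtain ⟨C1, h1, k1⟩ := oneD_F b ν hb (by linarith)
  obtain ⟨C2, h2, k2⟩ := oneD_F a (ν-(b+1/2)) ha (by linarith)
  have f1 := muC_finite a ha
  have f2 := muC_finite b hb
  refine ⟨C1*C2, by positivity, fun R s c hR hs hc => ?_⟩
  have hP : 0 < (R+c)^(-(b+1/2)) := Real.rpow_pos_of_pos (by linarith) _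
  unfold piC
  rw [lintegral_prod _ (by fun_prop)]
  calc _ ≤ ∫⁻ u, ENNReal.ofReal (C1 * (R+c)^(-(b+1/2))) * ENNReal.ofReal ((R + (1-u)*s)^(-(ν-(b+1/2)))) ∂(muC a) := by
        apply lintegral_mono_ae
        filter_upwards [muC_ae a] with u hu
        have hA : R ≤ R + (1-u)*s := by nlinarith [hu.2, mul_nonneg (sub_nonneg.2 hu.2.le) hs]
        refine (k1 (R+(1-u)*s) c (by linarith) hc).trans ?_
        have hX : 0 < (R + (1-u)*s)^(-(ν-(b+1/2))) := Real.rpow_pos_of_pos (by linarith) _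
        rw [← ENNReal.ofReal_mul (by positivity)]
        apply ENNReal.ofReal_le_ofReal
        calc _ ≤ C1 * (R + (1-u)*s)^(-(ν-(b+1/2))) * (R+c)^(-(b+1/2)) := by
              apply mul_le_mul_of_nonneg_left _ (by positivity)
              exact Real.rpow_le_rpow_of_nonpos (by linarith) (by linarith) (by linarith)
          _ = _ := by ring
    _ = ENNReal.ofReal (C1 * (R+c)^(-(b+1/2))) * ∫⁻ u, ENNReal.ofReal ((R + (1-u)*s)^(-(ν-(b+1/2)))) ∂(muC a) := lintegral_const_mul _ (by fun_prop)
    _ ≤ _ := by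
      refine (mul_le_mul_right (k2 R s hR hs) _).trans ?_
      rw [← ENNReal.ofReal_mul (by positivity)]
      apply ENNReal.ofReal_le_ofReal
      rw [show -(ν-(b+1/2)-(a+1/2)) = -(ν-(a+b+1)) by ring]
      apply le_of_eq; ring

lemma intPsi_F (a b K : ℝ) (ha : 0 < a) (hb : 0 < b) (hK : 0 ≤ K) : ∃ C, 0 < C ∧ ∀ t θ φ : ℝ, 0 < t → θ ∈ Ioo 0 π → φ ∈ Ioo 0 π →
    ∫ q, (Psi t (wE θ φ q))^(-((2*(a+b)+3+K)/2)) ∂(piC a b) ≤ C * (t^2+(θ-φ)^2)^(-((1+K)/2)) * (t^2+(θ-φ)^2+sW θ φ)^(-(a+1/2)) * (t^2+(θ-φ)^2+cW θ φ)^(-(b+1/2)) := by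
  set ν := (2*(a+b)+3+K)/2 with hν
  obtain ⟨C, h1, k⟩ := twoD_F a b ν ha hb (by rw [hν]; linarith)
  refine ⟨(1/32)^(-ν) * C, by positivity, fun t θ φ ht hθ hφ => ?_⟩
  have hs := sW_pos θ φ hθ hφ
  have hc := cW_pos θ φ hθ hφ
  have hR : 0 < t^2+(θ-φ)^2 := by positivity
  have := k (t^2+(θ-φ)^2) (sW θ φ) (cW θ φ) hR hs.le hc.le
  rw [integral_eq_lintegral_of_nonneg_ae]
  · apply ENNReal.toReal_le_of_le_ofReal (by positivity)
    calc _ ≤ ∫⁻ q, ENNReal.ofReal ((1/32)^(-ν)) * ENNReal.ofReal ((t^2+(θ-φ)^2 + (1-q.1)*sW θ φ + (1-q.2)*cW θ φ)^(-ν)) ∂(piC a b) := by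
          apply lintegral_mono_ae
          filter_upwards [piC_ae a b ha hb] with q hq
          have e1 := mul_nonneg (sub_nonneg.2 hq.1.2.le) hs.le
          have e2 := mul_nonneg (sub_nonneg.2 hq.2.2.le) hc.le
          rw [← ENNReal.ofReal_mul (by positivity), ← Real.mul_rpow (by norm_num) (by linarith)]
          apply ENNReal.ofReal_le_ofReal
          apply Real.rpow_le_rpow_of_nonpos (by linarith) _ (by rw [hν]; linarith)
          linarith [psi_lower_F t θ φ ht hθ hφ q]
      _ = ENNReal.ofReal ((1/32)^(-ν)) * _ := lintegral_const_mul _ (by fun_prop)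
      _ ≤ _ := by
        refine (mul_le_mul_right this _).trans ?_
        rw [← ENNReal.ofReal_mul (by positivity)]
        apply ENNReal.ofReal_le_ofReal
        rw [show ν - (a+b+1) = (1+K)/2 by rw [hν]; ring]
        apply le_of_eq; ring
  · filter_upwards [piC_ae a b ha hb] with q hq
    exact Real.rpow_nonneg (psi_pos t θ φ ht q hq).le _
  · exact (good_meas (Good.psi ν) t θ φ).aestronglyMeasurable

lemma rpow_scale_G {l h x y : ℝ} (e : ℝ) (hl : 0 < l) (hh : 0 < h) (hy : 0 < y) (h1 : l * y ≤ x) (h2 : x ≤ h * y) : x^e ≤ (l^e + h^e) * y^e := by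
  have := rpow_two_E e (by positivity) h1 h2
  rwa [Real.mul_rpow hl.le hy.le, Real.mul_rpow hh.le hy.le, ← add_mul] at this

lemma pow_ball_G (e : ℝ) (he : -1 < e) : ∃ C, 0 < C ∧ ∀ θ r : ℝ, 0 < θ → 0 < r →
    ∫⁻ x in Ioo (θ-r) (θ+r) ∩ Ioi 0, ENNReal.ofReal (x^e) ≤ ENNReal.ofReal (C * r * (θ+r)^e) := by
  have he1 : 0 < e + 1 := by linarith
  refine ⟨2*((1/3)^e + 1^e) + 3/(e+1), by positivity, fun θ r hθ hr => ?_⟩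
  have hD : 0 < θ + r := by linarith
  have hDe : 0 < (θ+r)^e := Real.rpow_pos_of_pos hD _
  rcases le_or_gt r (θ/2) with h | h
  · calc _ ≤ ∫⁻ x in Ioo (θ-r) (θ+r) ∩ Ioi 0, ENNReal.ofReal (((1/3)^e + 1^e) * (θ+r)^e) := by
          apply setLIntegral_mono' (measurableSet_Ioo.inter measurableSet_Ioi)
          intro x hx
          apply ENNReal.ofReal_le_ofReal
          exact rpow_scale_G e (by norm_num) one_pos hD (by linarith [hx.1.1]) (by linarith [hx.1.2])
      _ ≤ ∫⁻ x in Ioo (θ-r) (θ+r), ENNReal.ofReal (((1/3)^e + 1^e) * (θ+r)^e) := lintegral_mono_set inter_subset_left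
      _ = ENNReal.ofReal (((1/3)^e + 1^e) * (θ+r)^e * (2*r)) := by
          rw [lintegral_const, Measure.restrict_apply_univ, Real.volume_Ioo, ← ENNReal.ofReal_mul (by positivity)]
          congr 2; ring
      _ ≤ _ := by
        apply ENNReal.ofReal_le_ofReal
        have : 0 ≤ 3/(e+1) * (r * (θ+r)^e) := by positivity
        nlinarith
  · calc _ ≤ ∫⁻ x in Ioc 0 (θ+r), ENNReal.ofReal (x^e) := lintegral_mono_set fun x hx => ⟨hx.2, hx.1.2.le⟩
      _ = _ := lint_pow0_F e _ he hD.le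
      _ ≤ _ := by
        apply ENNReal.ofReal_le_ofReal
        rw [Real.rpow_add hD, Real.rpow_one]
        have h1 : (θ+r)^e * (θ+r) / (e+1) ≤ 3/(e+1) * (r * (θ+r)^e) := by
          rw [div_mul_eq_mul_div]
          apply div_le_div_of_nonneg_right _ he1.le
          nlinarith
        have : 0 ≤ 2*((1/3)^e + 1^e) * (r * (θ+r)^e) := by positivity
        nlinarith

lemma half_G (e f : ℝ) (he : -1 < e) : ∃ C, 0 < C ∧ ∀ θ r : ℝ, θ ∈ Ioo 0 π → 0 < r → r < π →
    ∫⁻ x in Ioo (θ-r) (θ+r) ∩ Ioc 0 (π/2), ENNReal.ofReal (Real.sin (x/2)^e * Real.cos (x/2)^f) ≤ ENNReal.ofReal (C * (r * (θ+r)^e * (π-θ+r)^f)) := by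
  obtain ⟨C, hC, k⟩ := pow_ball_G e he
  set K := ((1/4:ℝ)^e + 1^e) * ((1/2:ℝ)^f + 1^f) with hK
  have hK0 : 0 < K := by positivity
  set K2 := (1/8:ℝ)^f + 1^f with hK2
  have hK20 : 0 < K2 := by positivity
  set K3 := (1/4:ℝ)^f + 2^f with hK3
  have hK30 : 0 < K3 := by positivity
  refine ⟨K * C * ((1/8:ℝ)^f + 2^f), by positivity, fun θ r hθ hr hrp => ?_⟩
  rcases (Ioo (θ-r) (θ+r) ∩ Ioc 0 (π/2)).eq_empty_or_nonempty with h0 | ⟨y, hy⟩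
  · rw [h0]; simp
  · have hD1 : π/2 < π - θ + r := by linarith [hy.1.1, hy.2.2]
    have hD1' : 0 < π - θ + r := by linarith [Real.pi_pos]
    have hDe : 0 < (θ+r)^e := Real.rpow_pos_of_pos (by linarith [hθ.1]) _
    have hf : 1 ≤ ((1/8:ℝ)^f + 2^f) * (π-θ+r)^f := by
      have := rpow_scale_G (l := 1/8) (h := 2) (x := 1) (y := π-θ+r) f (by norm_num) (by norm_num) hD1' (by linarith [Real.pi_le_four, hθ.1]) (by linarith [Real.pi_gt_three])
      rwa [Real.one_rpow] at this
    calc _ ≤ ∫⁻ x in Ioo (θ-r) (θ+r) ∩ Ioc 0 (π/2), ENNReal.ofReal K * ENNReal.ofReal (x^e) := by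
          apply setLIntegral_mono' (measurableSet_Ioo.inter measurableSet_Ioc)
          intro x hx
          have hx0 : 0 < x := hx.2.1
          have hx1 : x ≤ π/2 := hx.2.2
          rw [← ENNReal.ofReal_mul hK0.le]
          apply ENNReal.ofReal_le_ofReal
          have s1 : 1/4 * x ≤ Real.sin (x/2) := by
            have := Real.mul_le_sin (x := x/2) (by positivity) (by linarith)
            have h5 : (1/2:ℝ) ≤ 2/π := by
              rw [div_le_div_iff₀ (by norm_num) Real.pi_pos]; linarith [Real.pi_le_four]
            nlinarith
          have s2 : Real.sin (x/2) ≤ 1 * x := by linarith [Real.sin_le (x := x/2) (by positivity)]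
          have c1 : 1/2 * 1 ≤ Real.cos (x/2) := by
            rw [mul_one, ← Real.cos_pi_div_three]
            exact Real.cos_le_cos_of_nonneg_of_le_pi (by positivity) (by linarith [Real.pi_pos]) (by linarith [Real.pi_pos])
          have c2 : Real.cos (x/2) ≤ 1 * 1 := by linarith [Real.cos_le_one (x/2)]
          have b1 := rpow_scale_G e (by norm_num) one_pos hx0 s1 s2
          have b2 := rpow_scale_G f (by norm_num) one_pos one_pos c1 c2
          have n1 : 0 ≤ Real.cos (x/2)^f := Real.rpow_nonneg (by linarith) _
          have n2 : 0 ≤ x^e := Real.rpow_nonneg hx0.le _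
          rw [Real.one_rpow f, mul_one] at b2
          calc _ ≤ ((1/4:ℝ)^e + 1^e) * x^e * ((1/2:ℝ)^f + 1) := mul_le_mul b1 b2 n1 (by positivity)
            _ = _ := by rw [hK, Real.one_rpow f]; ring
      _ ≤ ∫⁻ x in Ioo (θ-r) (θ+r) ∩ Ioi 0, ENNReal.ofReal K * ENNReal.ofReal (x^e) := lintegral_mono_set fun x hx => ⟨hx.1, hx.2.1⟩
      _ = ENNReal.ofReal K * ∫⁻ x in Ioo (θ-r) (θ+r) ∩ Ioi 0, ENNReal.ofReal (x^e) := lintegral_const_mul _ (by fun_prop)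
      _ ≤ ENNReal.ofReal K * ENNReal.ofReal (C * r * (θ+r)^e) := mul_le_mul_right (k θ r hθ.1 hr) _
      _ ≤ _ := by
        rw [← ENNReal.ofReal_mul hK0.le]
        apply ENNReal.ofReal_le_ofReal
        calc K * (C * r * (θ+r)^e) = K * (C * r * (θ+r)^e) * 1 := by ring
          _ ≤ K * (C * r * (θ+r)^e) * (((1/8:ℝ)^f + 2^f) * (π-θ+r)^f) := mul_le_mul_of_nonneg_left hf (by positivity)
          _ = _ := by ring

lemma ball_eq_G (α β θ r : ℝ) : ballMeasure α β θ r =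
    ∫⁻ x in Ioo (θ-r) (θ+r) ∩ Ioo 0 π, ENNReal.ofReal (Real.sin (x/2)^(2*α+1) * Real.cos (x/2)^(2*β+1)) := by
  unfold ballMeasure
  rw [jacobiPlus_eq, withDensity_apply _ measurableSet_Ioo, Measure.restrict_restrict measurableSet_Ioo]
  apply setLIntegral_congr_fun (measurableSet_Ioo.inter measurableSet_Ioo)
  intro x hx
  simp only
  rw [jPsi_sq _ _ _ hx.2]

lemma ball_le_G (α β : ℝ) (hα : -1 < α) (hβ : -1 < β) : ∃ C, 0 < C ∧ ∀ θ r : ℝ, θ ∈ Ioo 0 π → 0 < r → r < π →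
    ballMeasure α β θ r ≤ ENNReal.ofReal (C * (r * (θ+r)^(2*α+1) * (π-θ+r)^(2*β+1))) := by
  obtain ⟨C1, h1, k1⟩ := half_G (2*α+1) (2*β+1) (by linarith)
  obtain ⟨C2, h2, k2⟩ := half_G (2*β+1) (2*α+1) (by linarith)
  refine ⟨C1+C2, by positivity, fun θ r hθ hr hrp => ?_⟩
  rw [ball_eq_G]
  have hs : Ioo (θ-r) (θ+r) ∩ Ioo 0 π ⊆ (Ioo (θ-r) (θ+r) ∩ Ioc 0 (π/2)) ∪ ((fun x => π - x) ⁻¹' (Ioo (π-θ-r) (π-θ+r) ∩ Ioc 0 (π/2))) := by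
    intro x hx
    rcases le_or_gt x (π/2) with h | h
    · exact Or.inl ⟨hx.1, hx.2.1, h⟩
    · refine Or.inr ⟨⟨?_, ?_⟩, ?_, ?_⟩
      · linarith [hx.1.2]
      · linarith [hx.1.1]
      · linarith [hx.2.2]
      · linarith
  have p2 : ∫⁻ x in ((fun x => π - x) ⁻¹' (Ioo (π-θ-r) (π-θ+r) ∩ Ioc 0 (π/2))), ENNReal.ofReal (Real.sin (x/2)^(2*α+1) * Real.cos (x/2)^(2*β+1)) ≤ ENNReal.ofReal (C2 * (r * (π-θ+r)^(2*β+1) * (π-(π-θ)+r)^(2*α+1))) := by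
    refine le_trans (le_of_eq ?_) (k2 (π-θ) r ⟨by linarith [hθ.2], by linarith [hθ.1]⟩ hr hrp)
    rw [← lint_refl_F π _ (measurableSet_Ioo.inter measurableSet_Ioc)]
    apply lintegral_congr
    intro x
    rw [show (π-x)/2 = π/2 - x/2 by ring, Real.sin_pi_div_two_sub, Real.cos_pi_div_two_sub, mul_comm]
  refine (lintegral_mono_set hs).trans ((lintegral_union_le _ _ _).trans ((add_le_add (k1 θ r hθ hr hrp) p2).trans ?_))
  have n1 : 0 < (θ+r)^(2*α+1) := Real.rpow_pos_of_pos (by linarith [hθ.1]) _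
  have n2 : 0 < (π-θ+r)^(2*β+1) := Real.rpow_pos_of_pos (by linarith [hθ.2]) _
  rw [show π-(π-θ)+r = θ+r by ring, ← ENNReal.ofReal_add (by positivity) (by positivity)]
  apply ENNReal.ofReal_le_ofReal
  apply le_of_eq; ring

lemma ball_pos_G (α β θ r : ℝ) (hθ : θ ∈ Ioo 0 π) (hr : 0 < r) : ballMeasure α β θ r ≠ 0 := by
  rw [ball_eq_G]
  have hm : MeasurableSet (Ioo (θ-r) (θ+r) ∩ Ioo 0 π) := measurableSet_Ioo.inter measurableSet_Ioo
  rw [← pos_iff_ne_zero, setLIntegral_pos_iff (by fun_prop)]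
  have hsub : Ioo (θ-r) (θ+r) ∩ Ioo 0 π ⊆ Function.support (fun x => ENNReal.ofReal (Real.sin (x/2)^(2*α+1) * Real.cos (x/2)^(2*β+1))) := by
    intro x hx
    have s : 0 < Real.sin (x/2) := Real.sin_pos_of_pos_of_lt_pi (by linarith [hx.2.1]) (by linarith [hx.2.2, Real.pi_pos])
    have c : 0 < Real.cos (x/2) := Real.cos_pos_of_mem_Ioo ⟨by linarith [hx.2.1, Real.pi_pos], by linarith [hx.2.2]⟩
    have : 0 < Real.sin (x/2)^(2*α+1) * Real.cos (x/2)^(2*β+1) := by positivity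
    simp only [Function.mem_support, ne_eq, ENNReal.ofReal_eq_zero, not_le]; exact this
  rw [inter_eq_right.2 hsub]
  apply IsOpen.measure_pos _ (isOpen_Ioo.inter isOpen_Ioo)
  exact ⟨θ, ⟨by linarith, by linarith⟩, hθ⟩

/-- comparison of r²+s with (θ+r)² -/
lemma Xs_comp_G (θ φ : ℝ) (hθ : θ ∈ Ioo 0 π) (hφ : φ ∈ Ioo 0 π) :
    (1/72) * (θ+|θ-φ|)^2 ≤ (θ-φ)^2 + sW θ φ ∧ (θ-φ)^2 + sW θ φ ≤ 1 * (θ+|θ-φ|)^2 := by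
  have h5 : (1/2:ℝ) ≤ 2/π := by
    rw [div_le_div_iff₀ (by norm_num) Real.pi_pos]; linarith [Real.pi_le_four]
  have low : ∀ x ∈ Ioo 0 π, 1/4 * x ≤ Real.sin (x/2) := by
    intro x hx
    have := Real.mul_le_sin (x := x/2) (by linarith [hx.1]) (by linarith [hx.2])
    nlinarith [hx.1]
  have high : ∀ x ∈ Ioo 0 π, Real.sin (x/2) ≤ 1/2*x := by
    intro x hx; linarith [Real.sin_le (x := x/2) (by linarith [hx.1])]
  have l1 := low θ hθ
  have l2 := low φ hφ
  have u1 := high θ hθ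
  have u2 := high φ hφ
  have p1 := hθ.1
  have p2 := hφ.1
  have sl : 1/16 * (θ*φ) ≤ sW θ φ := by unfold sW; nlinarith [mul_le_mul l1 l2 (by positivity) (by linarith : (0:ℝ) ≤ Real.sin (θ/2))]
  have su : sW θ φ ≤ 1/4 * (θ*φ) := by unfold sW; nlinarith [mul_le_mul u1 u2 (by linarith) (by linarith : (0:ℝ) ≤ 1/2*θ)]
  rw [← sq_abs (θ-φ)]
  set r := |θ-φ| with hr
  have hr0 : 0 ≤ r := abs_nonneg _
  have f1 : φ ≤ θ + r := by have := neg_abs_le (θ-φ); linarith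
  have f2 : θ - r ≤ φ := by have := le_abs_self (θ-φ); linarith
  constructor
  · rcases le_or_gt r (θ/2) with h | h
    · have : θ/2 ≤ φ := by linarith
      nlinarith [mul_le_mul_of_nonneg_left this p1.le]
    · nlinarith [mul_pos p1 p2]
  · nlinarith [mul_le_mul_of_nonneg_left f1 p1.le]

lemma Xc_comp_G (θ φ : ℝ) (hθ : θ ∈ Ioo 0 π) (hφ : φ ∈ Ioo 0 π) :
    (1/72) * (π-θ+|θ-φ|)^2 ≤ (θ-φ)^2 + cW θ φ ∧ (θ-φ)^2 + cW θ φ ≤ 1 * (π-θ+|θ-φ|)^2 := by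
  have := Xs_comp_G (π-θ) (π-φ) ⟨by linarith [hθ.2], by linarith [hθ.1]⟩ ⟨by linarith [hφ.2], by linarith [hφ.1]⟩
  have e1 : sW (π-θ) (π-φ) = cW θ φ := by
    unfold sW cW
    rw [show (π-θ)/2 = π/2 - θ/2 by ring, show (π-φ)/2 = π/2 - φ/2 by ring, Real.sin_pi_div_two_sub, Real.sin_pi_div_two_sub]
  have e2 : (π-θ) - (π-φ) = -(θ-φ) := by ring
  rw [e1, e2, abs_neg, neg_sq] at this
  exact this

lemma sq_rpow_G (x e : ℝ) (hx : 0 < x) : x^(2*e) = (x^2)^e := by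
  rw [Real.rpow_mul hx.le, Real.rpow_two]

lemma ball_X_G (α β : ℝ) (hα : -1 < α) (hβ : -1 < β) : ∃ C, 0 < C ∧ ∀ θ φ : ℝ, θ ∈ Ioo 0 π → φ ∈ Ioo 0 π → θ ≠ φ →
    0 < (ballMeasure α β θ |θ-φ|).toReal ∧ (ballMeasure α β θ |θ-φ|).toReal ≤ C ∧
    (ballMeasure α β θ |θ-φ|).toReal ≤ C * (|θ-φ| * ((θ-φ)^2 + sW θ φ)^(α+1/2) * ((θ-φ)^2 + cW θ φ)^(β+1/2)) := by
  obtain ⟨C, hC, k⟩ := ball_le_G α β hα hβ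
  obtain ⟨K, hK⟩ : ∃ K, K = ((1:ℝ)^(α+1/2) + 72^(α+1/2)) * ((1:ℝ)^(β+1/2) + 72^(β+1/2)) := ⟨_, rfl⟩
  have hK0 : 0 < K := by rw [hK]; positivity
  set T := (jacobiMeasurePlus α β univ).toReal
  have hT : jacobiMeasurePlus α β univ ≠ ⊤ := by
    have h1 := k (π/2) (π/2) ⟨by linarith [Real.pi_pos], by linarith [Real.pi_pos]⟩ (by positivity) (by linarith [Real.pi_pos])
    have h2 : ballMeasure α β (π/2) (π/2) = jacobiMeasurePlus α β univ := by
      unfold ballMeasure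
      rw [jacobiPlus_eq, withDensity_apply _ measurableSet_Ioo, Measure.restrict_restrict measurableSet_Ioo, withDensity_apply _ MeasurableSet.univ, Measure.restrict_univ]
      congr 2
      rw [sub_self, add_halves, inter_self]
    rw [← h2]
    exact (h1.trans_lt ENNReal.ofReal_lt_top).ne
  refine ⟨C*K + T, by positivity, fun θ φ hθ hφ hne => ?_⟩
  have hr : 0 < |θ-φ| := abs_pos.2 (sub_ne_zero.2 hne)
  have hrp : |θ-φ| < π := abs_lt.2 ⟨by linarith [hθ.1, hφ.2], by linarith [hθ.2, hφ.1]⟩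
  have hb := k θ |θ-φ| hθ hr hrp
  have hle : ballMeasure α β θ |θ-φ| ≤ jacobiMeasurePlus α β univ := measure_mono (subset_univ _)
  have hs := sW_pos θ φ hθ hφ
  have hc := cW_pos θ φ hθ hφ
  have hX1 : 0 < (θ-φ)^2 + sW θ φ := by positivity
  have hX2 : 0 < (θ-φ)^2 + cW θ φ := by positivity
  have d1 : 0 < θ + |θ-φ| := by linarith [hθ.1]
  have d2 : 0 < π - θ + |θ-φ| := by linarith [hθ.2]
  have x1 := Xs_comp_G θ φ hθ hφ
  have x2 := Xc_comp_G θ φ hθ hφ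
  have b1 : (θ+|θ-φ|)^(2*α+1) ≤ ((1:ℝ)^(α+1/2) + 72^(α+1/2)) * ((θ-φ)^2 + sW θ φ)^(α+1/2) := by
    rw [show 2*α+1 = 2*(α+1/2) by ring, sq_rpow_G _ _ d1]
    exact rpow_scale_G _ one_pos (by norm_num) hX1 (by linarith [x1.2]) (by linarith [x1.1])
  have b2 : (π-θ+|θ-φ|)^(2*β+1) ≤ ((1:ℝ)^(β+1/2) + 72^(β+1/2)) * ((θ-φ)^2 + cW θ φ)^(β+1/2) := by
    rw [show 2*β+1 = 2*(β+1/2) by ring, sq_rpow_G _ _ d2]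
    exact rpow_scale_G _ one_pos (by norm_num) hX2 (by linarith [x2.2]) (by linarith [x2.1])
  have n2 : 0 < (π-θ+|θ-φ|)^(2*β+1) := Real.rpow_pos_of_pos d2 _
  refine ⟨ENNReal.toReal_pos (ball_pos_G α β θ _ hθ hr) (hle.trans_lt hT.lt_top).ne, ?_, ?_⟩
  · have : (ballMeasure α β θ |θ-φ|).toReal ≤ T := ENNReal.toReal_mono hT hle
    have : 0 < C * K := by positivity
    linarith
  · have n1 := Real.rpow_pos_of_pos d1 (2*α+1)
    refine (ENNReal.toReal_le_of_le_ofReal (by positivity) hb).trans ?_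
    have hp : 0 ≤ |θ-φ| * ((θ-φ)^2 + sW θ φ)^(α+1/2) * ((θ-φ)^2 + cW θ φ)^(β+1/2) := by positivity
    calc _ ≤ C * (|θ-φ| * (((1:ℝ)^(α+1/2) + 72^(α+1/2)) * ((θ-φ)^2 + sW θ φ)^(α+1/2)) * (((1:ℝ)^(β+1/2) + 72^(β+1/2)) * ((θ-φ)^2 + cW θ φ)^(β+1/2))) := by gcongr
      _ = C*K * (|θ-φ| * ((θ-φ)^2 + sW θ φ)^(α+1/2) * ((θ-φ)^2 + cW θ φ)^(β+1/2)) := by rw [hK]; ring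
      _ ≤ _ := mul_le_mul_of_nonneg_right (by linarith [show 0 ≤ T from ENNReal.toReal_nonneg]) hp

lemma sin_half_sq_G (θ φ : ℝ) : Real.sin (θ/2)^2 ≤ 2 * ((θ-φ)^2 + sW θ φ) := by
  have h : |Real.sin (θ/2) - Real.sin (φ/2)| ≤ |θ/2-φ/2| := Real.abs_sin_sub_sin_le _ _
  have h2 : (Real.sin (θ/2) - Real.sin (φ/2))^2 ≤ (θ/2-φ/2)^2 := sq_le_sq.2 h
  unfold sW
  nlinarith [sq_nonneg (Real.sin (θ/2) - (Real.sin (θ/2) - Real.sin (φ/2))), sq_nonneg (θ-φ)]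

lemma cos_half_sq_G (θ φ : ℝ) : Real.cos (θ/2)^2 ≤ 2 * ((θ-φ)^2 + cW θ φ) := by
  have h : |Real.cos (θ/2) - Real.cos (φ/2)| ≤ |θ/2-φ/2| := Real.abs_cos_sub_cos_le _ _
  have h2 : (Real.cos (θ/2) - Real.cos (φ/2))^2 ≤ (θ/2-φ/2)^2 := sq_le_sq.2 h
  unfold cW
  nlinarith [sq_nonneg (Real.cos (θ/2) - (Real.cos (θ/2) - Real.cos (φ/2))), sq_nonneg (θ-φ)]

lemma sin_le_G (θ φ : ℝ) (hθ : θ ∈ Ioo 0 π) (hφ : φ ∈ Ioo 0 π) :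
    Real.sin θ ≤ 4 * (((θ-φ)^2 + sW θ φ) * ((θ-φ)^2 + cW θ φ))^(1/2:ℝ) := by
  have hs := sW_pos θ φ hθ hφ
  have hc := cW_pos θ φ hθ hφ
  rw [← Real.sqrt_eq_rpow]
  apply le_of_abs_le
  apply abs_le_of_sq_le_sq _ (by positivity)
  rw [mul_pow, Real.sq_sqrt (by positivity)]
  have e : Real.sin θ = 2 * Real.sin (θ/2) * Real.cos (θ/2) := by rw [← Real.sin_two_mul]; congr 1; ring
  rw [e]
  have h1 := sin_half_sq_G θ φ
  have h2 := cos_half_sq_G θ φ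
  have := mul_le_mul h1 h2 (sq_nonneg _) (by positivity)
  nlinarith

lemma sinprod_G (γ₁ γ₂ : ℕ) (h1 : γ₁ ≤ 1) (h2 : γ₂ ≤ 1) (θ φ : ℝ) (hθ : θ ∈ Ioo 0 π) (hφ : φ ∈ Ioo 0 π) :
    Real.sin θ^γ₁ * Real.sin φ^γ₂ ≤ 16 * (((θ-φ)^2 + sW θ φ) * ((θ-φ)^2 + cW θ φ))^((γ₁+γ₂:ℝ)/2) := by
  have hs := sW_pos θ φ hθ hφ
  have hc := cW_pos θ φ hθ hφ
  have a1 := sin_le_G θ φ hθ hφ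
  have a2 := sin_le_G φ θ hφ hθ
  rw [show (φ-θ)^2 = (θ-φ)^2 by ring, show sW φ θ = sW θ φ by unfold sW; ring, show cW φ θ = cW θ φ by unfold cW; ring] at a2
  set Y := ((θ-φ)^2 + sW θ φ) * ((θ-φ)^2 + cW θ φ) with hY
  have hY0 : 0 < Y := by positivity
  have p1 : 0 < Real.sin θ := Real.sin_pos_of_pos_of_lt_pi hθ.1 hθ.2
  have p2 : 0 < Real.sin φ := Real.sin_pos_of_pos_of_lt_pi hφ.1 hφ.2
  have key : ∀ (x : ℝ) (g : ℕ), g ≤ 1 → 0 < x → x ≤ 4 * Y^(1/2:ℝ) → x^g ≤ 4 * Y^((g:ℝ)/2) := by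
    intro x g hg hx h
    interval_cases g
    · simp
    · simpa using h
  have := mul_le_mul (key _ _ h1 p1 a1) (key _ _ h2 p2 a2) (by positivity) (by positivity)
  refine this.trans (le_of_eq ?_)
  rw [add_div, Real.rpow_add hY0]; ring

lemma small_G (α β : ℝ) (hα : -1 < α) (hβ : -1 < β) (M N L γ₁ γ₂ : ℕ) (hγ₁ : γ₁ ≤ 1) (hγ₂ : γ₂ ≤ 1) (hγ : 1 ≤ γ₁+γ₂) :
    ∃ C, 0 < C ∧ ∀ t θ φ, 0 < t → θ ∈ Ioo 0 π → φ ∈ Ioo 0 π → 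
      (t ≤ 1 → Real.sin θ^γ₁ * Real.sin φ^γ₂ * |deriv^[L] (fun φ' => deriv^[N] (fun θ' => deriv^[M] (fun s => jHker (α+1) (β+1) s θ' φ') t) θ) φ| ≤
        C * (((θ-φ)^2 + sW θ φ)^(-(α+1/2)) * ((θ-φ)^2 + cW θ φ)^(-(β+1/2))) * (t^2+(θ-φ)^2)^(-((3+(M+N+L:ℝ)-(γ₁+γ₂))/2))) ∧
      (1 ≤ t → Real.sin θ^γ₁ * Real.sin φ^γ₂ * |deriv^[L] (fun φ' => deriv^[N] (fun θ' => deriv^[M] (fun s => jHker (α+1) (β+1) s θ' φ') t) θ) φ| ≤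
        C * Real.exp (-(α+β+3) * (t/2))) := by
  obtain ⟨C, hC, k⟩ := deriv_kernel_E (α+1) (β+1) (by linarith) (by linarith) M N L
  obtain ⟨C', hC', k'⟩ := intPsi_F (α+1) (β+1) (M+N+L) (by linarith) (by linarith) (by positivity)
  refine ⟨16*C*C'+C, by positivity, fun t θ φ ht hθ hφ => ⟨fun h => ?_, fun h => ?_⟩⟩
  · have k1 := (k t θ φ ht).1 h
    have k2 := k' t θ φ ht hθ hφ
    have k3 := sinprod_G γ₁ γ₂ hγ₁ hγ₂ θ φ hθ hφ
    have hs := sW_pos θ φ hθ hφ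
    have hc := cW_pos θ φ hθ hφ
    have p1 : 0 < Real.sin θ := Real.sin_pos_of_pos_of_lt_pi hθ.1 hθ.2
    have p2 : 0 < Real.sin φ := Real.sin_pos_of_pos_of_lt_pi hφ.1 hφ.2
    set X := (θ-φ)^2 + sW θ φ with hX
    set Z := (θ-φ)^2 + cW θ φ with hZ
    set R := t^2+(θ-φ)^2 with hR
    have hX0 : 0 < X := by positivity
    have hZ0 : 0 < Z := by positivity
    have hR0 : 0 < R := by positivity
    have hXR : X ≤ R + sW θ φ := by rw [hX, hR]; nlinarith
    have hZR : Z ≤ R + cW θ φ := by rw [hZ, hR]; nlinarith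
    have hRs : 0 < R + sW θ φ := by positivity
    have hRc : 0 < R + cW θ φ := by positivity
    have hg1 : (1:ℝ) ≤ γ₁ + γ₂ := by exact_mod_cast hγ
    have hg2 : (γ₁ + γ₂:ℝ) ≤ 2 := by exact_mod_cast (by omega : γ₁ + γ₂ ≤ 2)
    set g : ℝ := γ₁ + γ₂ with hg
    set e : ℝ := (2-g)/2 with he
    have e0 : 0 ≤ e := by rw [he]; linarith
    have e1 : e ≤ 1/2 := by rw [he]; linarith
    have q1 : (R + sW θ φ)^(-(α+1+1/2)) ≤ (R + sW θ φ)^(-e) * X^(-(α+1+1/2-e)) := by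
      rw [show -(α+1+1/2) = -e + -(α+1+1/2-e) by ring, Real.rpow_add hRs]
      apply mul_le_mul_of_nonneg_left _ (by positivity)
      exact Real.rpow_le_rpow_of_nonpos hX0 hXR (by linarith)
    have q2 : (R + cW θ φ)^(-(β+1+1/2)) ≤ (R + cW θ φ)^(-e) * Z^(-(β+1+1/2-e)) := by
      rw [show -(β+1+1/2) = -e + -(β+1+1/2-e) by ring, Real.rpow_add hRc]
      apply mul_le_mul_of_nonneg_left _ (by positivity)
      exact Real.rpow_le_rpow_of_nonpos hZ0 hZR (by linarith)
    have hsc : 1 ≤ R + sW θ φ + cW θ φ := by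
      have h4 : Real.cos ((θ-φ)/2) = cW θ φ + sW θ φ := by
        rw [sub_div, Real.cos_sub]; rfl
      have := Real.one_sub_sq_div_two_le_cos (x := (θ-φ)/2)
      rw [h4] at this
      rw [hR]; nlinarith [sq_nonneg t, sq_nonneg (θ-φ)]
    have q3 : (R + sW θ φ)^(-e) * (R + cW θ φ)^(-e) ≤ R^(-e) := by
      rw [← Real.mul_rpow hRs.le hRc.le]
      apply Real.rpow_le_rpow_of_nonpos hR0 _ (by linarith)
      nlinarith [mul_pos hs hc, mul_le_mul_of_nonneg_left hsc hR0.le]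
    have big : |deriv^[L] (fun φ' => deriv^[N] (fun θ' => deriv^[M] (fun s => jHker (α+1) (β+1) s θ' φ') t) θ) φ| ≤ C * (C' * R^(-((1+(M+N+L:ℝ))/2)) * (R^(-e) * (X^(-(α+1+1/2-e)) * Z^(-(β+1+1/2-e))))) := by
      refine k1.trans (mul_le_mul_of_nonneg_left (k2.trans ?_) hC.le)
      calc _ ≤ C' * R^(-((1+(M+N+L:ℝ))/2)) * ((R + sW θ φ)^(-e) * X^(-(α+1+1/2-e))) * ((R + cW θ φ)^(-e) * Z^(-(β+1+1/2-e))) := by gcongr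
        _ = C' * R^(-((1+(M+N+L:ℝ))/2)) * (((R + sW θ φ)^(-e) * (R + cW θ φ)^(-e)) * (X^(-(α+1+1/2-e)) * Z^(-(β+1+1/2-e)))) := by ring
        _ ≤ _ := by gcongr
    have fin := mul_le_mul k3 big (abs_nonneg _) (by positivity)
    refine fin.trans ?_
    have r1 : (X*Z)^(g/2) = X^(g/2) * Z^(g/2) := Real.mul_rpow hX0.le hZ0.le
    have r2 : X^(g/2) * X^(-(α+1+1/2-e)) = X^(-(α+1/2)) := by rw [← Real.rpow_add hX0]; congr 1; rw [he]; ring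
    have r3 : Z^(g/2) * Z^(-(β+1+1/2-e)) = Z^(-(β+1/2)) := by rw [← Real.rpow_add hZ0]; congr 1; rw [he]; ring
    have r4 : R^(-((1+(M+N+L:ℝ))/2)) * R^(-e) = R^(-((3+(M+N+L:ℝ)-g)/2)) := by rw [← Real.rpow_add hR0]; congr 1; rw [he]; ring
    calc _ = 16*C*C' * ((X^(g/2) * X^(-(α+1+1/2-e))) * (Z^(g/2) * Z^(-(β+1+1/2-e)))) * (R^(-((1+(M+N+L:ℝ))/2)) * R^(-e)) := by rw [r1]; ring
      _ = 16*C*C' * (X^(-(α+1/2)) * Z^(-(β+1/2))) * R^(-((3+(M+N+L:ℝ)-g)/2)) := by rw [r2, r3, r4]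
      _ ≤ _ := by gcongr; linarith
  · have k1 := (k t θ φ ht).2 h
    rw [show -(α+1+(β+1)+1) = -(α+β+3) by ring] at k1
    have p1 : 0 < Real.sin θ := Real.sin_pos_of_pos_of_lt_pi hθ.1 hθ.2
    have p2 : 0 < Real.sin φ := Real.sin_pos_of_pos_of_lt_pi hφ.1 hφ.2
    have s1 : Real.sin θ^γ₁ * Real.sin φ^γ₂ ≤ 1 := mul_le_one₀ (pow_le_one₀ p1.le (Real.sin_le_one _)) (by positivity) (pow_le_one₀ p2.le (Real.sin_le_one _))
    have hE := Real.exp_pos (-(α+β+3) * (t/2))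
    calc _ ≤ 1 * (C * Real.exp (-(α+β+3) * (t/2))) := mul_le_mul s1 k1 (abs_nonneg _) (by norm_num)
      _ ≤ _ := by rw [one_mul]; gcongr; nlinarith [mul_pos hC hC']

def muW_G (W : ℝ) : Measure ℝ :=
  (volume.restrict (Ioi (0 : ℝ))).withDensity fun t => ENNReal.ofReal (t ^ (W - 1))

lemma ae_muW_G (W : ℝ) (P : ℝ → Prop) (h : ∀ t, 0 < t → P t) : ∀ᵐ t ∂(muW_G W), P t := by
  have h1 : ∀ᵐ t ∂(volume.restrict (Ioi (0:ℝ))), P t := by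
    filter_upwards [ae_restrict_mem measurableSet_Ioi] with t ht using h t ht
  exact (withDensity_absolutelyContinuous _ _).ae_le h1

lemma eLp_muW_G (W : ℝ) (p : ℝ≥0∞) (hp : 1 ≤ p) (hpt : p ≠ ⊤) (g : ℝ → ℝ) (hg : Measurable g)
    (hg0 : ∀ t, 0 ≤ g t) (A : ℝ) (hA0 : 0 ≤ A)
    (hA : ∫⁻ t in Ioi 0, ENNReal.ofReal (t^(W-1) * g t ^ p.toReal) ≤ ENNReal.ofReal A) :
    eLpNorm g p (muW_G W) ≤ ENNReal.ofReal (A ^ (1/p.toReal)) := by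
  have hp0 : p ≠ 0 := by rintro rfl; simp at hp
  have hq : 0 < p.toReal := ENNReal.toReal_pos hp0 hpt
  rw [eLpNorm_eq_lintegral_rpow_enorm_toReal hp0 hpt, muW_G, lintegral_withDensity_eq_lintegral_mul _ (by fun_prop) (by fun_prop)]
  rw [← ENNReal.ofReal_rpow_of_nonneg hA0 (by positivity)]
  apply ENNReal.rpow_le_rpow _ (by positivity)
  refine le_trans (le_of_eq ?_) hA
  apply setLIntegral_congr_fun measurableSet_Ioi
  intro t ht
  have ht : 0 < t := ht
  simp only [Pi.mul_apply]
  rw [Real.enorm_of_nonneg (hg0 t), ENNReal.ofReal_rpow_of_nonneg (hg0 t) hq.le, ← ENNReal.ofReal_mul (by positivity)]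

lemma Lp1_G (W : ℝ) (hW : 1 ≤ W) (p : ℝ≥0∞) (hp : 1 ≤ p) (m : ℝ) (hm : 1 ≤ m) (hmW : m - 1 ≤ W / p.toReal) :
    ∃ C : ℝ, 0 < C ∧ ∀ r, 0 < r → r < π →
      eLpNorm ((Ioc (0:ℝ) 1).indicator fun t => (t^2+r^2)^(-(m/2))) p (muW_G W) ≤ ENNReal.ofReal (C/r) := by
  have hb : ∀ r : ℝ, 0 < r → ∀ t : ℝ, (t^2+r^2)^(-(m/2)) ≤ r^(-m) := by
    intro r hr t
    have h1 : (r^2)^(-(m/2)) = r^(-m) := by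
      rw [← Real.rpow_natCast, ← Real.rpow_mul hr.le]; congr 1; push_cast; ring
    rw [← h1]
    exact Real.rpow_le_rpow_of_nonpos (by positivity) (by nlinarith [sq_nonneg t]) (by linarith)
  have hg0 : ∀ r t : ℝ, 0 ≤ (Ioc (0:ℝ) 1).indicator (fun t => (t^2+r^2)^(-(m/2))) t := by
    intro r t; apply indicator_nonneg; intro t _; positivity
  by_cases hpt : p = ⊤
  · subst hpt
    have hm1 : m = 1 := by simp at hmW; linarith
    refine ⟨1, one_pos, fun r hr _ => ?_⟩
    rw [eLpNorm_exponent_top]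
    apply eLpNormEssSup_le_of_ae_bound
    refine Filter.Eventually.of_forall fun t => ?_
    rw [Real.norm_of_nonneg (hg0 r t)]
    by_cases ht : t ∈ Ioc (0:ℝ) 1
    · rw [indicator_of_mem ht]
      refine (hb r hr t).trans ?_
      rw [hm1, Real.rpow_neg_one, one_div]
    · rw [indicator_of_notMem ht]; positivity
  have hp0 : p ≠ 0 := by rintro rfl; simp at hp
  have hq : 0 < p.toReal := ENNReal.toReal_pos hp0 hpt
  set q := p.toReal with hqd
  have he : 0 ≤ W - m*q + q := by
    rw [le_div_iff₀ hq] at hmW; linarith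
  set K : ℝ := π^(W-m*q+q)/W + 1/q with hK
  have hK0 : 0 < K := by positivity
  refine ⟨K^(1/q), by positivity, fun r hr hrπ => ?_⟩
  have key : ∫⁻ t in Ioi 0, ENNReal.ofReal (t^(W-1) * ((Ioc (0:ℝ) 1).indicator (fun t => (t^2+r^2)^(-(m/2))) t) ^ q) ≤ ENNReal.ofReal (r^(-q) * K) := by
    rw [← Ioc_union_Ioi_eq_Ioi hr.le]
    refine (lintegral_union_le _ _ _).trans ?_
    have i1 : ∫⁻ t in Ioc 0 r, ENNReal.ofReal (t^(W-1) * ((Ioc (0:ℝ) 1).indicator (fun t => (t^2+r^2)^(-(m/2))) t) ^ q) ≤ ENNReal.ofReal (r^(-(m*q)) * (r^W/W)) := by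
      calc _ ≤ ∫⁻ t in Ioc 0 r, ENNReal.ofReal (r^(-(m*q))) * ENNReal.ofReal (t^(W-1)) := by
            apply setLIntegral_mono' measurableSet_Ioc
            intro t ht
            have ht0 : 0 < t := ht.1
            rw [← ENNReal.ofReal_mul (by positivity)]
            apply ENNReal.ofReal_le_ofReal
            rw [mul_comm]
            apply mul_le_mul_of_nonneg_right _ (by positivity)
            have : (Ioc (0:ℝ) 1).indicator (fun t => (t^2+r^2)^(-(m/2))) t ≤ r^(-m) := by
              by_cases h : t ∈ Ioc (0:ℝ) 1
              · rw [indicator_of_mem h]; exact hb r hr t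
              · rw [indicator_of_notMem h]; positivity
            refine (Real.rpow_le_rpow (hg0 r t) this hq.le).trans (le_of_eq ?_)
            rw [← Real.rpow_mul hr.le]; congr 1; ring
        _ = _ := by
            rw [lintegral_const_mul _ (by fun_prop), lint_pow0_F _ _ (by linarith) hr.le, ← ENNReal.ofReal_mul (by positivity)]
            rw [show W - 1 + 1 = W by ring]
    have i2 : ∫⁻ t in Ioi r, ENNReal.ofReal (t^(W-1) * ((Ioc (0:ℝ) 1).indicator (fun t => (t^2+r^2)^(-(m/2))) t) ^ q) ≤ ENNReal.ofReal (r^(-q) / q) := by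
      calc _ ≤ ∫⁻ t in Ioi r, ENNReal.ofReal (t^(-q-1)) := by
            apply setLIntegral_mono' measurableSet_Ioi
            intro t ht
            have ht0 : 0 < t := hr.trans ht
            apply ENNReal.ofReal_le_ofReal
            by_cases h : t ∈ Ioc (0:ℝ) 1
            · rw [indicator_of_mem h]
              have h2 : (t^2+r^2)^(-(m/2)) ≤ t^(-m) := by rw [add_comm]; exact hb t ht0 r
              calc _ ≤ t^(W-1) * (t^(-m))^q := by gcongr
                _ = t^(W-1-m*q) := by
                  rw [← Real.rpow_mul ht0.le, ← Real.rpow_add ht0]; congr 1; ring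
                _ ≤ _ := Real.rpow_le_rpow_of_exponent_ge ht0 h.2 (by linarith)
            · rw [indicator_of_notMem h, Real.zero_rpow hq.ne', mul_zero]; positivity
        _ = _ := by
            rw [lint_powinf_F _ _ (by linarith) hr]
            congr 1
            rw [show -q-1+1 = -q by ring, neg_div_neg_eq]
    refine (add_le_add i1 i2).trans ?_
    rw [← ENNReal.ofReal_add (by positivity) (by positivity)]
    apply ENNReal.ofReal_le_ofReal
    have h3 : r^(-(m*q)) * r^W = r^(-q) * r^(W-m*q+q) := by
      rw [← Real.rpow_add hr, ← Real.rpow_add hr]; congr 1; ring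
    have h4 : r^(W-m*q+q) ≤ π^(W-m*q+q) := Real.rpow_le_rpow hr.le hrπ.le he
    calc r^(-(m*q)) * (r^W/W) + r^(-q)/q = r^(-q) * (r^(W-m*q+q)/W + 1/q) := by
          rw [← mul_div_assoc, h3]; ring
      _ ≤ _ := by rw [hK]; gcongr
  have := eLp_muW_G W p hp hpt _ (Measurable.indicator (by fun_prop) measurableSet_Ioc) (hg0 r) (r^(-q) * K) (by positivity) key
  refine this.trans (le_of_eq ?_)
  congr 1
  rw [← hqd, Real.mul_rpow (by positivity) hK0.le, ← Real.rpow_mul hr.le, show -q*(1/q) = -1 by field_simp, Real.rpow_neg_one]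
  field_simp

lemma Lp2_G (W : ℝ) (hW : 1 ≤ W) (p : ℝ≥0∞) (hp : 1 ≤ p) (b : ℝ) (hb : 0 < b) :
    ∃ C : ℝ, 0 < C ∧ 
      eLpNorm ((Ioi (1:ℝ)).indicator fun t => Real.exp (-b * (t/2))) p (muW_G W) ≤ ENNReal.ofReal C := by
  have hg0 : ∀ t : ℝ, 0 ≤ (Ioi (1:ℝ)).indicator (fun t => Real.exp (-b * (t/2))) t := by
    intro t; apply indicator_nonneg; intro t _; positivity
  by_cases hpt : p = ⊤
  · subst hpt
    refine ⟨1, one_pos, ?_⟩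
    rw [eLpNorm_exponent_top]
    apply eLpNormEssSup_le_of_ae_bound
    refine Filter.Eventually.of_forall fun t => ?_
    rw [Real.norm_of_nonneg (hg0 t)]
    by_cases ht : t ∈ Ioi (1:ℝ)
    · rw [indicator_of_mem ht, Real.exp_le_one_iff]
      have : 1 < t := ht
      nlinarith [mul_pos hb (by linarith : 0 < t)]
    · rw [indicator_of_notMem ht]; norm_num
  have hp0 : p ≠ 0 := by rintro rfl; simp at hp
  have hq : 0 < p.toReal := ENNReal.toReal_pos hp0 hpt
  have hI := integrableOn_rpow_mul_exp_neg_mul_rpow (p := 1) (s := W-1) (b := b/2*p.toReal) (by linarith) one_pos (by positivity)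
  set A := ∫ x in Ioi 0, x ^ (W-1) * Real.exp (-(b/2*p.toReal) * x^(1:ℝ)) with hA
  have hA0 : 0 ≤ A := by
    apply setIntegral_nonneg measurableSet_Ioi
    intro t ht
    have : 0 < t := ht
    positivity
  refine ⟨A^(1/p.toReal) + 1, by positivity, ?_⟩
  refine (eLp_muW_G W p hp hpt _ (Measurable.indicator (by fun_prop) measurableSet_Ioi) hg0 A hA0 ?_).trans (ENNReal.ofReal_le_ofReal (by linarith))
  rw [hA, ofReal_integral_eq_lintegral_ofReal hI]
  · apply setLIntegral_mono' measurableSet_Ioi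
    intro t ht
    have ht0 : 0 < t := ht
    apply ENNReal.ofReal_le_ofReal
    apply mul_le_mul_of_nonneg_left _ (by positivity)
    by_cases h : t ∈ Ioi (1:ℝ)
    · rw [indicator_of_mem h, ← Real.exp_mul, Real.rpow_one]
      apply le_of_eq; congr 1; ring
    · rw [indicator_of_notMem h, Real.zero_rpow hq.ne']; positivity
  · filter_upwards [ae_restrict_mem measurableSet_Ioi] with t ht
    have : 0 < t := ht
    simp only [Pi.zero_apply]
    positivity

theorem kernel_growth_estimate (α β : ℝ) (hα : -1 < α) (hβ : -1 < β)
    (M N L γ₁ γ₂ : ℕ) (hL : L ≤ 1) (hγ₁ : γ₁ ≤ 1) (hγ₂ : γ₂ ≤ 1) (hγ : 1 ≤ γ₁ + γ₂)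
    (W : ℝ) (hW : 1 ≤ W) (p : ℝ≥0∞) (hp : 1 ≤ p)
    (hcond : 2 ≤ W / p.toReal + γ₁ + γ₂ - L - N - M) :
    ∃ C : ℝ, 0 < C ∧ ∀ θ ∈ Ioo (0 : ℝ) π, ∀ φ ∈ Ioo (0 : ℝ) π, θ ≠ φ →
      ENNReal.ofReal (Real.sin θ ^ γ₁ * Real.sin φ ^ γ₂) *
          eLpNorm (fun t => deriv^[L] (fun φ' => deriv^[N] (fun θ' =>
              deriv^[M] (fun s => jHker (α + 1) (β + 1) s θ' φ') t) θ) φ) p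
            ((volume.restrict (Ioi (0 : ℝ))).withDensity fun t =>
              ENNReal.ofReal (t ^ (W - 1))) ≤
        ENNReal.ofReal (C / (ballMeasure α β θ |θ - φ|).toReal) := by
  obtain ⟨C, hC, hs⟩ := small_G α β hα hβ M N L γ₁ γ₂ hγ₁ hγ₂ hγ
  obtain ⟨C1, hC1, h1⟩ := Lp1_G W hW p hp (3+(M+N+L:ℝ)-(γ₁+γ₂)) (by
    have a1 : (γ₁:ℝ) ≤ 1 := by exact_mod_cast hγ₁
    have a2 : (γ₂:ℝ) ≤ 1 := by exact_mod_cast hγ₂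
    have a3 : (0:ℝ) ≤ M := by positivity
    have a4 : (0:ℝ) ≤ N := by positivity
    have a5 : (0:ℝ) ≤ L := by positivity
    linarith) (by linarith)
  obtain ⟨C2, hC2, h2⟩ := Lp2_G W hW p hp (α+β+3) (by linarith)
  obtain ⟨C3, hC3, h3⟩ := ball_X_G α β hα hβ
  refine ⟨C*C1*C3 + C*C2*C3, by positivity, fun θ hθ φ hφ hne => ?_⟩
  obtain ⟨b0, b1, b2⟩ := h3 θ φ hθ hφ hne
  set B := (ballMeasure α β θ |θ - φ|).toReal with hB
  set r := |θ-φ| with hr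
  have hr0 : 0 < r := abs_pos.mpr (sub_ne_zero.mpr hne)
  have hrπ : r < π := by
    rw [hr, abs_lt]; constructor <;> linarith [hθ.1, hθ.2, hφ.1, hφ.2]
  have hr2 : (θ-φ)^2 = r^2 := (sq_abs _).symm
  have hsW := sW_pos θ φ hθ hφ
  have hcW := cW_pos θ φ hθ hφ
  have hs' := fun t ht => hs t θ φ ht hθ hφ
  rw [hr2] at b2
  simp only [hr2] at hs'
  set X := r^2 + sW θ φ with hX
  set Z := r^2 + cW θ φ with hZ
  have hX0 : 0 < X := by positivity
  have hZ0 : 0 < Z := by positivity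
  set V := X^(-(α+1/2)) * Z^(-(β+1/2)) with hV
  have hV0 : 0 < V := by positivity
  have hVr : V / r ≤ C3 / B := by
    rw [div_le_div_iff₀ hr0 b0]
    have e1 : X^(-(α+1/2)) * X^(α+1/2) = 1 := by rw [← Real.rpow_add hX0]; simp
    have e2 : Z^(-(β+1/2)) * Z^(β+1/2) = 1 := by rw [← Real.rpow_add hZ0]; simp
    calc V * B ≤ V * (C3 * (r * X^(α+1/2) * Z^(β+1/2))) := by gcongr
      _ = C3 * r * (X^(-(α+1/2)) * X^(α+1/2)) * (Z^(-(β+1/2)) * Z^(β+1/2)) := by rw [hV]; ring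
      _ = C3 * r := by rw [e1, e2]; ring
  have hone : 1 ≤ C3 / B := by rwa [le_div_iff₀ b0, one_mul]
  set S := Real.sin θ ^ γ₁ * Real.sin φ ^ γ₂ with hS
  have hS0 : 0 ≤ S := by
    have p1 : 0 < Real.sin θ := Real.sin_pos_of_pos_of_lt_pi hθ.1 hθ.2
    have p2 : 0 < Real.sin φ := Real.sin_pos_of_pos_of_lt_pi hφ.1 hφ.2
    positivity
  change ENNReal.ofReal S * eLpNorm _ p (muW_G W) ≤ _
  rw [← Real.enorm_of_nonneg hS0, ← eLpNorm_const_smul]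
  set g1 : ℝ → ℝ := (Ioc (0:ℝ) 1).indicator fun t => (t^2+r^2)^(-((3+(M+N+L:ℝ)-(γ₁+γ₂))/2)) with hg1
  set g2 : ℝ → ℝ := (Ioi (1:ℝ)).indicator fun t => Real.exp (-(α+β+3) * (t/2)) with hg2
  have m1 : Measurable g1 := Measurable.indicator (by fun_prop) measurableSet_Ioc
  have m2 : Measurable g2 := Measurable.indicator (by fun_prop) measurableSet_Ioi
  have hmono := eLpNorm_mono_ae_real (p := p) (g := (C*V) • g1 + C • g2) (ae_muW_G W (fun t => ‖(S • fun t => deriv^[L] (fun φ' => deriv^[N] (fun θ' =>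
              deriv^[M] (fun s => jHker (α + 1) (β + 1) s θ' φ') t) θ) φ) t‖ ≤ ((C*V) • g1 + C • g2) t) ?_)
  · refine hmono.trans ((eLpNorm_add_le (m1.const_smul _).aestronglyMeasurable (m2.const_smul _).aestronglyMeasurable hp).trans ?_)
    rw [eLpNorm_const_smul, eLpNorm_const_smul, Real.enorm_of_nonneg (by positivity), Real.enorm_of_nonneg hC.le]
    refine (add_le_add (mul_le_mul_right (h1 r hr0 hrπ) _) (mul_le_mul_right h2 _)).trans ?_
    rw [← ENNReal.ofReal_mul (by positivity), ← ENNReal.ofReal_mul (by positivity), ← ENNReal.ofReal_add (by positivity) (by positivity)]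
    apply ENNReal.ofReal_le_ofReal
    calc C*V*(C1/r) + C*C2 = C*C1*(V/r) + C*C2*1 := by ring
      _ ≤ C*C1*(C3/B) + C*C2*(C3/B) := by gcongr
      _ = _ := by ring
  · intro t ht
    simp only [Pi.smul_apply, Pi.add_apply, smul_eq_mul, norm_mul, Real.norm_eq_abs, abs_of_nonneg hS0]
    rcases le_or_gt t 1 with h | h
    · rw [hg1, hg2, indicator_of_mem (show t ∈ Ioc (0:ℝ) 1 from ⟨ht, h⟩), indicator_of_notMem (by simpa using h), mul_zero, add_zero]
      exact (hs' t ht).1 h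
    · rw [hg1, hg2, indicator_of_notMem (by simp [h]), indicator_of_mem (show t ∈ Ioi (1:ℝ) from h), mul_zero, zero_add]
      exact (hs' t ht).2 h.le

end
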